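/- arXiv:math/0503747 — 3 statements merged into one kernel-verified Lean document; each statement's English description precedes it below -/
import Mathlib

section
/- Let M be a von Neumann algebra and p a properly infinite projection with central support equal to 1. Then every projection q in M is a strong limit of projections equivalent to p; equivalently, the QOT-closure of {[p]} is all of P(M)/∼. -/
open ContinuousLinearMap Filter Topology

universe u

noncomputable section

variable {H : Type u} [NormedAddCommGroup H] [InnerProductSpace ℂ H] [CompleteSpace H]

/-- `p` is an (orthogonal) projection belonging to the von Neumann algebra `M`. -/
def IsProjIn (M : VonNeumannAlgebra H) (p : H →L[ℂ] H) : Prop :=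
  p ∈ M ∧ IsSelfAdjoint p ∧ p * p = p

/-- Murray–von Neumann equivalence of `p` and `q` relative to `M`:
there is a partial isometry `v ∈ M` with `v* v = p` and `v v* = q`. -/
def MvNEquiv (M : VonNeumannAlgebra H) (p q : H →L[ℂ] H) : Prop :=
  ∃ v ∈ M, adjoint v * v = p ∧ v * adjoint v = q

/-- The order on projections: `p ≤ q` iff `p q = p = q p`. -/
def ProjLE (p q : H →L[ℂ] H) : Prop := p * q = p ∧ q * p = p

/-- Murray–von Neumann subequivalence `p ≼ q`: `p` is equivalent to a subprojection of `q`. -/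
def SubEquiv (M : VonNeumannAlgebra H) (p q : H →L[ℂ] H) : Prop :=
  ∃ r, IsProjIn M r ∧ MvNEquiv M p r ∧ ProjLE r q

/-- `z` is a central projection of `M`. -/
def IsCentralProj (M : VonNeumannAlgebra H) (z : H →L[ℂ] H) : Prop :=
  IsProjIn M z ∧ ∀ x ∈ M, z * x = x * z

/-- A projection `p` is finite: `p ∼ q ≤ p` implies `q = p`. -/
def FiniteProj (M : VonNeumannAlgebra H) (p : H →L[ℂ] H) : Prop :=
  ∀ q, IsProjIn M q → ProjLE q p → MvNEquiv M p q → q = p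

/-- A projection `p` is properly infinite: it is a countably infinite sum of pairwise
orthogonal projections, each equivalent to `p`. -/
def ProperlyInfiniteProj (M : VonNeumannAlgebra H) (p : H →L[ℂ] H) : Prop :=
  p ≠ 0 ∧ ∃ e : ℕ → H →L[ℂ] H, (∀ n, IsProjIn M (e n)) ∧
    (Pairwise fun m n => e m * e n = 0) ∧ (∀ n, MvNEquiv M (e n) p) ∧
    ∀ ξ : H, HasSum (fun n => e n ξ) (p ξ)

/-- `z` is the central support of `h`: the smallest central projection with `z h = h`. -/
def IsCentralSupport (M : VonNeumannAlgebra H) (h z : H →L[ℂ] H) : Prop :=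
  IsCentralProj M z ∧ z * h = h ∧ ∀ w, IsCentralProj M w → w * h = h → z * w = z

/-- The projection `e` is σ-finite relative to `M`: every family of pairwise orthogonal
nonzero subprojections of `e` in `M` is countable. -/
def SigmaFiniteProj (M : VonNeumannAlgebra H) (e : H →L[ℂ] H) : Prop :=
  ∀ S : Set (H →L[ℂ] H), (∀ q ∈ S, IsProjIn M q ∧ q ≠ 0 ∧ ProjLE q e) →
    (S.Pairwise fun a b => a * b = 0) → S.Countable

/-- Kadison–Pedersen equivalence on the positive cone: `h ≈ k` iff there is a family
`{x_α} ⊆ M` with `h = Σ x_α* x_α` and `k = Σ x_α x_α*` (sums in the strong topology). -/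
def KPEquiv (M : VonNeumannAlgebra H) (h k : H →L[ℂ] H) : Prop :=
  ∃ (ι : Type u) (x : ι → H →L[ℂ] H), (∀ i, x i ∈ M) ∧
    (∀ ξ : H, HasSum (fun i => (adjoint (x i) * x i) ξ) (h ξ)) ∧
    (∀ ξ : H, HasSum (fun i => (x i * adjoint (x i)) ξ) (k ξ))

/-- Operator order: `a ≤ b` iff `b - a` is positive. -/
def OpLE (a b : H →L[ℂ] H) : Prop := (b - a).IsPositive

/-- `h ∈ M₊` is finite in the Kadison–Pedersen sense: `h ≈ k ≤ h` implies `k = h`. -/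
def KPFinite (M : VonNeumannAlgebra H) (h : H →L[ℂ] H) : Prop :=
  ∀ k, k ∈ M → k.IsPositive → OpLE k h → KPEquiv M h k → k = h

/-- `h ∈ M₊` is properly infinite: `z h` is finite and nonzero for no central projection `z`. -/
def KPProperlyInfinite (M : VonNeumannAlgebra H) (h : H →L[ℂ] H) : Prop :=
  h ≠ 0 ∧ ∀ z, IsCentralProj M z → KPFinite M (z * h) → z * h = 0

/-- The set of projections of `M`. -/
def ProjSet (M : VonNeumannAlgebra H) := {p : H →L[ℂ] H // IsProjIn M p}

/-- The strong operator topology on the projections of `M` (topology of pointwise convergence). -/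
instance (M : VonNeumannAlgebra H) : TopologicalSpace (ProjSet M) :=
  TopologicalSpace.induced (fun p : ProjSet M => (fun ξ => p.1 ξ : H → H)) inferInstance

/-- The quotient `P(M)/∼` of the projections of `M` by Murray–von Neumann equivalence,
carrying the quotient (strong operator) topology. -/
abbrev PQuot (M : VonNeumannAlgebra H) :=
  Quot (fun p q : ProjSet M => MvNEquiv M p.1 q.1)

/-- The quotient map `P(M) → P(M)/∼`. -/
def pquotMk (M : VonNeumannAlgebra H) : ProjSet M → PQuot M := Quot.mk _

/-- The strong operator topology on `B(H)`. -/
def SOT : TopologicalSpace (H →L[ℂ] H) :=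
  TopologicalSpace.induced (fun a : H →L[ℂ] H => (fun ξ => a ξ : H → H)) inferInstance

/-- The order induced on `P(M)/∼` by Murray–von Neumann subequivalence. -/
def QLE (M : VonNeumannAlgebra H) (a b : PQuot M) : Prop :=
  ∃ p q : ProjSet M, a = pquotMk M p ∧ b = pquotMk M q ∧ SubEquiv M p.1 q.1

/-!
Let `w₀, w₁, …` be isometries of `pH` in `M` with mutually orthogonal ranges, so that `wₙ* → 0`
strongly. As the central support of `p` is `1`, the ranges of the elements of `M p` span a dense
subspace, and `a w₀* + b w₁*` has a range containing those of `a` and `b`. So, given finitely many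
vectors `ξ`, a single `a ∈ q M p` approximates every `q ξ` by some `a ζ`; rescaling `a` makes the
`ζ` as small as desired. Put `b = (1 - wₙ wₙ*) a + wₙ`. The ranges of the two summands are
orthogonal, so `b* b ≥ p` and the range projection `r` of `b` is equivalent to `p`. For large `n`
it is close to `q` at every `ξ`: on the kernel of `q` we have `b* η = wₙ* η - a* wₙ wₙ* η`, which
tends to `0`, while `q ξ` is close to the vector `b ζ` fixed by `r`.
-/

section Normed

variable {𝕜 E : Type*} [NontriviallyNormedField 𝕜] [SeminormedAddCommGroup E] [NormedSpace 𝕜 E]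

lemma norm_apply_sub_le_of_fixed {r : E →L[𝕜] E} (hr : ‖r‖ ≤ 1) {y : E} (hy : r y = y)
    (ξ κ : E) : ‖r ξ - κ‖ ≤ ‖r (ξ - κ)‖ + 2 * ‖κ - y‖ := by
  have hsplit : r ξ - κ = r (ξ - κ) + r (κ - y) - (κ - y) := by
    rw [map_sub, map_sub, hy]; abel
  calc ‖r ξ - κ‖ ≤ ‖r (ξ - κ)‖ + ‖r (κ - y)‖ + ‖κ - y‖ := by
        rw [hsplit]
        exact (norm_sub_le _ _).trans (by gcongr; exact norm_add_le _ _)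
    _ ≤ ‖r (ξ - κ)‖ + 2 * ‖κ - y‖ := by
        linarith [r.le_of_opNorm_le hr (κ - y)]

end Normed

section TopologicalModule

variable {R E : Type*} [Semiring R] [TopologicalSpace E] [AddCommMonoid E] [Module R E]

lemma mul_eq_of_hasSum_orthogonal {ι : Type*} [T2Space E] {p : E →L[R] E} {e : ι → E →L[R] E}
    (he : ∀ i, IsIdempotentElem (e i)) (horth : Pairwise fun i j ↦ e i * e j = 0)
    (hsum : ∀ x, HasSum (fun i ↦ e i x) (p x)) (i : ι) : p * e i = e i := by
  ext x
  have hsingle : HasSum (fun j ↦ e j (e i x)) (e i (e i x)) := by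
    refine hasSum_single i fun j hj ↦ ?_
    rw [← mul_apply_eq_comp, horth hj, zero_apply]
  rw [mul_apply_eq_comp, (hsum (e i x)).unique hsingle, ← mul_apply_eq_comp, (he i).eq]

lemma topologicalClosure_mem_invtSubmodule [ContinuousAdd E] [ContinuousConstSMul R E]
    {f : E →L[R] E} {D : Submodule R E}
    (hD : D ∈ Module.End.invtSubmodule (f : E →ₗ[R] E)) :
    D.topologicalClosure ∈ Module.End.invtSubmodule (f : E →ₗ[R] E) :=
  fun _ hx ↦ map_mem_closure f.continuous hx hD

end TopologicalModule

section CStarRing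

variable {A : Type*} [NonUnitalNormedRing A] [StarRing A] [CStarRing A] {p w : A}

lemma mul_eq_self_of_star_mul_self_eq (hp : IsStarProjection p) (hw : star w * w = p) :
    w * p = w := by
  have hzero : star (w * p - w) * (w * p - w) = 0 := by
    calc star (w * p - w) * (w * p - w)
        = p * (star w * w) * p - p * (star w * w) - star w * w * p + star w * w := by
          rw [star_sub, star_mul, hp.isSelfAdjoint.star_eq]; noncomm_ring
      _ = 0 := by rw [hw, hp.isIdempotentElem.eq, hp.isIdempotentElem.eq]; abel
  exact sub_eq_zero.1 ((CStarRing.star_mul_self_eq_zero_iff _).1 hzero)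

lemma isStarProjection_mul_star_self (hp : IsStarProjection p) (hw : star w * w = p) :
    IsStarProjection (w * star w) where
  isIdempotentElem := by
    rw [IsIdempotentElem, mul_assoc, ← mul_assoc (star w), hw, ← mul_assoc,
      mul_eq_self_of_star_mul_self_eq hp hw]
  isSelfAdjoint := .mul_star_self w

lemma norm_le_one_of_star_mul_self_eq (hp : IsStarProjection p) (hw : star w * w = p) :
    ‖w‖ ≤ 1 := by
  rw [← sq_le_one_iff₀ (norm_nonneg w), sq, ← CStarRing.norm_star_mul_self, hw]
  exact hp.norm_le

end CStarRing

section PolarIsometry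

section StarRing

variable {A : Type*} [Ring A] [StarRing A] {p b : A}

/-- The Gram element `star b * b`, completed by `1 - p` off the corner of the projection `p`. It is
invertible as soon as `p ≤ star b * b`, and has the same product with `p` as `star b * b` when
`b = b * p`. -/
def paddedGram (p b : A) : A := star b * b + (1 - p)

lemma paddedGram_mul (hp : IsStarProjection p) (hb : b * p = b) :
    paddedGram p b * p = star b * b := by
  rw [paddedGram, add_mul, hp.one_sub_mul_self, add_zero, mul_assoc, hb]

lemma mul_paddedGram (hp : IsStarProjection p) (hb : b * p = b) :
    p * paddedGram p b = star b * b := by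
  simpa [paddedGram, hp.isSelfAdjoint.star_eq] using congrArg star (paddedGram_mul hp hb)

end StarRing

variable {A : Type*} [CStarAlgebra A] [PartialOrder A] [StarOrderedRing A] {a p b : A}

lemma norm_rpow_neg_one_half_le_one (ha : 1 ≤ a) : ‖a ^ (-(1 / 2) : ℝ)‖ ≤ 1 := by
  have hsq : a ^ (-(1 / 2) : ℝ) * a ^ (-(1 / 2) : ℝ) = a ^ (-1 : ℝ) := by
    rw [← CFC.rpow_add (CStarAlgebra.isUnit_of_le 1 ha)]; norm_num
  rw [← sq_le_one_iff₀ (norm_nonneg _),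
    ← (IsSelfAdjoint.of_nonneg CFC.rpow_nonneg).norm_mul_self, hsq,
    CStarAlgebra.norm_le_one_iff_of_nonneg _ CFC.rpow_nonneg]
  exact CStarAlgebra.rpow_neg_one_le_one ha

lemma one_le_paddedGram (h : p ≤ star b * b) : 1 ≤ paddedGram p b := by
  rw [paddedGram, ← add_sub_assoc, le_sub_iff_add_le, add_comm]
  gcongr

/-- The partial isometry in the polar decomposition of `b`, for `b = b * p` and `p ≤ star b * b`;
its initial projection is then `p`. -/
def polarIsometry (p b : A) : A := b * paddedGram p b ^ (-(1 / 2) : ℝ)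

lemma star_polarIsometry :
    star (polarIsometry p b) = paddedGram p b ^ (-(1 / 2) : ℝ) * star b := by
  rw [polarIsometry, star_mul, (IsSelfAdjoint.of_nonneg CFC.rpow_nonneg).star_eq]

lemma star_polarIsometry_mul_self (hp : IsStarProjection p) (hb : b * p = b)
    (h : p ≤ star b * b) : star (polarIsometry p b) * polarIsometry p b = p := by
  set S := paddedGram p b ^ (-(1 / 2) : ℝ) with hS
  have hpos : IsStrictlyPositive (paddedGram p b) :=
    isStrictlyPositive_one.of_le (one_le_paddedGram h)
  have hGp : Commute (paddedGram p b) p :=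
    (paddedGram_mul hp hb).trans (mul_paddedGram hp hb).symm
  have hSp : S * p = p * S := (hGp.cfc_nnreal _).eq
  calc star (polarIsometry p b) * polarIsometry p b
      = S * (star b * b) * S := by
        rw [star_polarIsometry, polarIsometry, ← hS]; simp only [mul_assoc]
    _ = S * paddedGram p b * S * p := by simp only [← paddedGram_mul hp hb, hSp, mul_assoc]
    _ = p := by rw [CFC.conjugate_rpow_neg_one_half (paddedGram p b), one_mul]

lemma polarIsometry_mul_star_self_mul (hp : IsStarProjection p) (hb : b * p = b)
    (h : p ≤ star b * b) : polarIsometry p b * star (polarIsometry p b) * b = b := by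
  set S := paddedGram p b ^ (-(1 / 2) : ℝ) with hS
  have hpos : IsStrictlyPositive (paddedGram p b) :=
    isStrictlyPositive_one.of_le (one_le_paddedGram h)
  have hSG : S * paddedGram p b = paddedGram p b * S := ((Commute.refl _).cfc_nnreal _).eq
  calc polarIsometry p b * star (polarIsometry p b) * b
      = b * (S * (S * (star b * b))) := by
        rw [star_polarIsometry, polarIsometry, ← hS]; simp only [mul_assoc]
    _ = b * (S * paddedGram p b * S) * p := by
        rw [mul_assoc S, ← hSG, ← paddedGram_mul hp hb]; simp only [mul_assoc]
    _ = b := by rw [CFC.conjugate_rpow_neg_one_half (paddedGram p b), mul_one, hb]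

end PolarIsometry

section OrthoAdd

variable {A : Type*} [Ring A] [StarRing A] {a w p : A}

/-- The sum of `w` and the part of `a` that maps into the orthogonal complement of the range of
the partial isometry `w`. -/
def orthoAdd (a w : A) : A := (1 - w * star w) * a + w

lemma orthoAdd_mul (ha : a * p = a) (hwp : w * p = w) : orthoAdd a w * p = orthoAdd a w := by
  rw [orthoAdd, add_mul, mul_assoc, ha, hwp]

lemma star_orthoAdd_mul_self (hw : star w * w = p) (hwp : w * p = w) :
    star (orthoAdd a w) * orthoAdd a w =
      p + star ((1 - w * star w) * a) * ((1 - w * star w) * a) := by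
  set c := (1 - w * star w) * a with hc
  have hp : IsSelfAdjoint p := hw ▸ .star_mul_self w
  have hpw : p * star w = star w := by simpa [hp.star_eq] using congrArg star hwp
  have hwc : star w * c = 0 := by
    rw [hc, ← mul_assoc, mul_one_sub, ← mul_assoc, hw, hpw, sub_self, zero_mul]
  have hcw : star c * w = 0 := by simpa using congrArg star hwc
  calc star (c + w) * (c + w) = star w * w + star c * c + star w * c + star c * w := by
        rw [star_add]; noncomm_ring
    _ = p + star c * c := by rw [hw, hwc, hcw, add_zero, add_zero]

end OrthoAdd

section Operators

variable {M : VonNeumannAlgebra H} {a p q w b : H →L[ℂ] H}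

lemma rpow_mem (ha : a ∈ M) (t : ℝ) : a ^ t ∈ M := by
  rw [← M.commutant_commutant, VonNeumannAlgebra.mem_commutant_iff]
  intro y hy
  have hay : Commute a y := VonNeumannAlgebra.mem_commutant_iff.1 hy a ha
  exact (hay.cfc_nnreal _).eq.symm

lemma polarIsometry_mem (hp : p ∈ M) (hb : b ∈ M) : polarIsometry p b ∈ M :=
  mul_mem hb (rpow_mem (add_mem (mul_mem (star_mem hb) hb) (sub_mem (one_mem M) hp)) _)

lemma norm_star_polarIsometry_apply_le (h : p ≤ star b * b) (x : H) :
    ‖star (polarIsometry p b) x‖ ≤ ‖star b x‖ := by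
  rw [star_polarIsometry, mul_apply_eq_comp]
  simpa using le_of_opNorm_le _ (norm_rpow_neg_one_half_le_one (one_le_paddedGram h)) (star b x)

lemma orthoAdd_mem (ha : a ∈ M) (hw : w ∈ M) : orthoAdd a w ∈ M :=
  add_mem (mul_mem (sub_mem (one_mem M) (mul_mem hw (star_mem hw))) ha) hw

lemma norm_star_orthoAdd_apply_le (hw : ‖w‖ ≤ 1) {η : H} (hη : star a η = 0) :
    ‖star (orthoAdd a w) η‖ ≤ (‖a‖ + 1) * ‖star w η‖ := by
  have hsplit : star (orthoAdd a w) η = star w η - star a (w (star w η)) := by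
    simp [orthoAdd, hη, sub_eq_neg_add]
  calc ‖star (orthoAdd a w) η‖ ≤ ‖star w η‖ + ‖star a (w (star w η))‖ := by
        rw [hsplit]; exact norm_sub_le _ _
    _ ≤ ‖star w η‖ + ‖a‖ * ‖star w η‖ := by
        gcongr
        refine (le_opNorm _ _).trans ?_
        rw [norm_star]
        gcongr
        simpa using le_of_opNorm_le w hw (star w η)
    _ = (‖a‖ + 1) * ‖star w η‖ := by ring

lemma norm_sub_orthoAdd_apply_le (hw : ‖w‖ ≤ 1) (κ ζ : H) :
    ‖κ - orthoAdd a w ζ‖ ≤ ‖κ - a ζ‖ + ‖star w (a ζ)‖ + ‖ζ‖ := by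
  have hsplit : κ - orthoAdd a w ζ = (κ - a ζ) + w (star w (a ζ)) - w ζ := by
    simp [orthoAdd]; abel
  have hw' (x : H) : ‖w x‖ ≤ ‖x‖ := by simpa using le_of_opNorm_le w hw x
  rw [hsplit]
  exact (norm_sub_le _ _).trans (add_le_add ((norm_add_le _ _).trans (by gcongr; exact hw' _))
    (hw' ζ))

lemma IsProjIn.isStarProjection (hp : IsProjIn M p) : IsStarProjection p := ⟨hp.2.2, hp.2.1⟩

lemma exists_mvnEquiv_mul_eq (hp : IsProjIn M p) (hbM : b ∈ M) (hb : b * p = b)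
    (h : p ≤ star b * b) :
    ∃ r, IsProjIn M r ∧ MvNEquiv M r p ∧ r * b = b ∧ ∀ x, ‖r x‖ ≤ ‖star b x‖ := by
  have hps := hp.isStarProjection
  set v := polarIsometry p b
  have hvM : v ∈ M := polarIsometry_mem hp.1 hbM
  have hv : star v * v = p := star_polarIsometry_mul_self hps hb h
  have hr := isStarProjection_mul_star_self hps hv
  refine ⟨v * star v, ⟨mul_mem hvM (star_mem hvM), hr.isSelfAdjoint, hr.isIdempotentElem⟩,
    ⟨star v, star_mem hvM, ?_, ?_⟩, polarIsometry_mul_star_self_mul hps hb h, fun x ↦ ?_⟩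
  · rw [← star_eq_adjoint, star_star]
  · rw [← star_eq_adjoint, star_star, hv]
  · calc ‖v (star v x)‖ ≤ ‖star v x‖ := by
          simpa using le_of_opNorm_le v (norm_le_one_of_star_mul_self_eq hps hv) (star v x)
      _ ≤ ‖star b x‖ := norm_star_polarIsometry_apply_le h x

lemma exists_mvnEquiv_norm_sub_le (hp : IsProjIn M p) (hq : IsProjIn M q) (hwM : w ∈ M)
    (hw : star w * w = p) (ha : a ∈ M) (hap : a * p = a) (hqa : q * a = a) :
    ∃ r, IsProjIn M r ∧ MvNEquiv M r p ∧ ∀ ξ ζ, ‖r ξ - q ξ‖ ≤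
      (‖a‖ + 1) * ‖star w (ξ - q ξ)‖ + 2 * (‖q ξ - a ζ‖ + ‖star w (a ζ)‖ + ‖ζ‖) := by
  have hps := hp.isStarProjection
  have hw1 : ‖w‖ ≤ 1 := norm_le_one_of_star_mul_self_eq hps hw
  have hwp : w * p = w := mul_eq_self_of_star_mul_self_eq hps hw
  have hle : p ≤ star (orthoAdd a w) * orthoAdd a w := by
    rw [star_orthoAdd_mul_self hw hwp]
    exact le_add_of_nonneg_right (star_mul_self_nonneg _)
  obtain ⟨r, hr, hrp, hrb, hrle⟩ := exists_mvnEquiv_mul_eq hp (orthoAdd_mem ha hwM)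
    (orthoAdd_mul hap hwp) hle
  refine ⟨r, hr, hrp, fun ξ ζ ↦ ?_⟩
  have hfix : r (orthoAdd a w ζ) = orthoAdd a w ζ := by rw [← mul_apply_eq_comp, hrb]
  have hker : star a (ξ - q ξ) = 0 := by
    have haq : star a * q = star a := by simpa [hq.2.1.star_eq] using congrArg star hqa
    rw [map_sub, ← mul_apply_eq_comp, haq, sub_self]
  calc ‖r ξ - q ξ‖ ≤ ‖r (ξ - q ξ)‖ + 2 * ‖q ξ - orthoAdd a w ζ‖ :=
        norm_apply_sub_le_of_fixed hr.isStarProjection.norm_le hfix ξ (q ξ)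
    _ ≤ _ := by
        gcongr
        · exact (hrle _).trans (norm_star_orthoAdd_apply_le hw1 hker)
        · exact norm_sub_orthoAdd_apply_le hw1 _ _

end Operators

section LeftIdeal

variable {M : VonNeumannAlgebra H} {p a : H →L[ℂ] H}

/-- The left ideal `M p` of `M`. -/
def leftIdeal (M : VonNeumannAlgebra H) (p : H →L[ℂ] H) : Submodule ℂ (H →L[ℂ] H) where
  carrier := {a | a ∈ M ∧ a * p = a}
  zero_mem' := ⟨zero_mem M, zero_mul p⟩
  add_mem' ha hb := ⟨add_mem ha.1 hb.1, by rw [add_mul, ha.2, hb.2]⟩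
  smul_mem' t _ ha := ⟨M.toStarSubalgebra.smul_mem ha.1 t, by rw [smul_mul_assoc, ha.2]⟩

lemma mul_mem_leftIdeal {y : H →L[ℂ] H} (hy : y ∈ M) (ha : a ∈ leftIdeal M p) :
    y * a ∈ leftIdeal M p :=
  ⟨mul_mem hy ha.1, by rw [mul_assoc, ha.2]⟩

lemma IsCentralSupport.eq_top_of_invariant (hcs : IsCentralSupport M p 1) {K : Submodule ℂ H}
    (hK : IsClosed (K : Set H)) (hpK : ∀ x, p x ∈ K)
    (hM : ∀ y ∈ M, K ∈ Module.End.invtSubmodule (y : H →ₗ[ℂ] H))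
    (hM' : ∀ y ∈ M.commutant, K ∈ Module.End.invtSubmodule (y : H →ₗ[ℂ] H)) : K = ⊤ := by
  have : CompleteSpace K := hK.completeSpace_coe
  have hz : IsStarProjection K.starProjection := isStarProjection_starProjection
  have hzM : K.starProjection ∈ M := by
    rw [VonNeumannAlgebra.IsStarProjection.mem_iff hz]
    simpa only [Submodule.range_starProjection] using hM'
  have hzM' : K.starProjection ∈ M.commutant := by
    rw [VonNeumannAlgebra.IsStarProjection.mem_iff hz, VonNeumannAlgebra.commutant_commutant]
    simpa only [Submodule.range_starProjection] using hM
  have hcentral : IsCentralProj M K.starProjection :=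
    ⟨⟨hzM, hz.isSelfAdjoint, hz.isIdempotentElem⟩,
      fun x hx ↦ (VonNeumannAlgebra.mem_commutant_iff.1 hzM' x hx).symm⟩
  have hzp : K.starProjection * p = p :=
    ContinuousLinearMap.ext fun x ↦ Submodule.starProjection_eq_self_iff.2 (hpK x)
  have hz1 : K.starProjection = 1 := by simpa using hcs.2.2 _ hcentral hzp
  refine (Submodule.eq_top_iff').2 fun x ↦ Submodule.starProjection_eq_self_iff.1 ?_
  rw [hz1, one_apply_eq_self]

lemma iSup_range_leftIdeal_mem_invtSubmodule {y : H →L[ℂ] H} (hy : y ∈ M) :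
    (⨆ a : leftIdeal M p, (a : H →L[ℂ] H).range) ∈ Module.End.invtSubmodule (y : H →ₗ[ℂ] H) := by
  rw [Module.End.mem_invtSubmodule_iff_map_le, Submodule.map_iSup]
  refine iSup_le fun a ↦ ?_
  rw [← LinearMap.range_comp]
  exact le_iSup (fun a : leftIdeal M p ↦ (a : H →L[ℂ] H).range) ⟨y * a, mul_mem_leftIdeal hy a.2⟩

lemma iSup_range_leftIdeal_mem_invtSubmodule_of_mem_commutant {y : H →L[ℂ] H}
    (hy : y ∈ M.commutant) :
    (⨆ a : leftIdeal M p, (a : H →L[ℂ] H).range) ∈ Module.End.invtSubmodule (y : H →ₗ[ℂ] H) := by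
  rw [Module.End.mem_invtSubmodule_iff_map_le, Submodule.map_iSup]
  refine iSup_mono fun a ↦ ?_
  rintro _ ⟨_, ⟨x, rfl⟩, rfl⟩
  exact ⟨y x, DFunLike.congr_fun (VonNeumannAlgebra.mem_commutant_iff.1 hy a a.2.1) x⟩

lemma dense_iSup_range_leftIdeal (hp : IsProjIn M p) (hcs : IsCentralSupport M p 1) :
    Dense ((⨆ a : leftIdeal M p, (a : H →L[ℂ] H).range : Submodule ℂ H) : Set H) := by
  rw [Submodule.dense_iff_topologicalClosure_eq_top]
  refine hcs.eq_top_of_invariant (Submodule.isClosed_topologicalClosure _) (fun x ↦ ?_)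
    (fun y hy ↦ topologicalClosure_mem_invtSubmodule (iSup_range_leftIdeal_mem_invtSubmodule hy))
    (fun y hy ↦ topologicalClosure_mem_invtSubmodule
      (iSup_range_leftIdeal_mem_invtSubmodule_of_mem_commutant hy))
  exact Submodule.le_topologicalClosure _
    (Submodule.mem_iSup_of_mem (⟨p, hp.1, hp.2.2⟩ : leftIdeal M p) ⟨x, rfl⟩)

end LeftIdeal

section CuntzSequence

variable {M : VonNeumannAlgebra H} {p q : H →L[ℂ] H} {w : ℕ → H →L[ℂ] H}

/-- A sequence in `M` of isometries of the range of `p` into itself with mutually orthogonal ranges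
(generators of a Cuntz algebra `𝓞_∞` with unit `p`), whose adjoints tend strongly to `0`. -/
structure IsCuntzSequence (M : VonNeumannAlgebra H) (p : H →L[ℂ] H) (w : ℕ → H →L[ℂ] H) :
    Prop where
  mem (n : ℕ) : w n ∈ M
  mul_eq (n : ℕ) : p * w n = w n
  star_mul_self (n : ℕ) : star (w n) * w n = p
  star_mul_of_ne {m n : ℕ} (hmn : m ≠ n) : star (w m) * w n = 0
  tendsto_star_apply (x : H) : Tendsto (fun n ↦ star (w n) x) atTop (𝓝 0)

lemma ProperlyInfiniteProj.exists_isCuntzSequence (hpi : ProperlyInfiniteProj M p) :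
    ∃ w, IsCuntzSequence M p w := by
  obtain ⟨-, e, he, horth, heq, hsum⟩ := hpi
  choose u huM hu hu' using heq
  have hue (n) : u n * e n = u n := mul_eq_self_of_star_mul_self_eq (he n).isStarProjection (hu n)
  have heu (n) : e n * star (u n) = star (u n) := by
    simpa [(he n).2.1.star_eq] using congrArg star (hue n)
  have hu1 (n) : ‖u n‖ ≤ 1 := norm_le_one_of_star_mul_self_eq (he n).isStarProjection (hu n)
  refine ⟨fun n ↦ star (u n), fun n ↦ star_mem (huM n), fun n ↦ ?_, fun n ↦ ?_,
    fun {m n} hmn ↦ ?_, fun x ↦ ?_⟩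
  · rw [← heu n, ← mul_assoc, mul_eq_of_hasSum_orthogonal (fun n ↦ (he n).2.2) horth hsum]
  · rw [star_star, star_eq_adjoint, hu']
  · rw [star_star, ← heu n, ← hue m, mul_assoc, ← mul_assoc (e m), horth hmn, zero_mul, mul_zero]
  · refine squeeze_zero_norm (fun n ↦ ?_) (tendsto_zero_iff_norm_tendsto_zero.1
      (hsum x).summable.tendsto_atTop_zero)
    rw [star_star, ← hue n, mul_apply_eq_comp, ← mul_apply_eq_comp]
    simpa using le_of_opNorm_le (u n) (hu1 n) (e n x)

lemma IsCuntzSequence.directed_range_leftIdeal (hw : IsCuntzSequence M p w)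
    (hp : IsSelfAdjoint p) :
    Directed (· ≤ ·) fun a : leftIdeal M p ↦ (a : H →L[ℂ] H).range := by
  rintro ⟨a, haM, ha⟩ ⟨b, hbM, hb⟩
  have hwp (n) : star (w n) * p = star (w n) := by
    simpa [hp.star_eq] using congrArg star (hw.mul_eq n)
  set c := a * star (w 0) + b * star (w 1)
  have hc : c ∈ leftIdeal M p :=
    ⟨add_mem (mul_mem haM (star_mem (hw.mem 0))) (mul_mem hbM (star_mem (hw.mem 1))), by
      rw [add_mul, mul_assoc, mul_assoc, hwp, hwp]⟩
  have hca : c * w 0 = a := by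
    rw [add_mul, mul_assoc, mul_assoc, hw.star_mul_self, hw.star_mul_of_ne one_ne_zero, ha,
      mul_zero, add_zero]
  have hcb : c * w 1 = b := by
    rw [add_mul, mul_assoc, mul_assoc, hw.star_mul_self, hw.star_mul_of_ne zero_ne_one, hb,
      mul_zero, zero_add]
  refine ⟨⟨c, hc⟩, ?_, ?_⟩
  · rintro _ ⟨x, rfl⟩
    exact ⟨w 0 x, DFunLike.congr_fun hca x⟩
  · rintro _ ⟨x, rfl⟩
    exact ⟨w 1 x, DFunLike.congr_fun hcb x⟩

lemma IsCuntzSequence.exists_mem_leftIdeal_forall_norm_sub_lt (hw : IsCuntzSequence M p w)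
    (hp : IsProjIn M p) (hcs : IsCentralSupport M p 1) (F : Finset H) {ε : ℝ} (hε : 0 < ε) :
    ∃ a ∈ leftIdeal M p, ∀ ξ ∈ F, ∃ ζ, ‖ξ - a ζ‖ < ε := by
  have hdir := hw.directed_range_leftIdeal hp.2.1
  have hone (ξ : H) : ∃ a : leftIdeal M p, ∃ y ∈ (a : H →L[ℂ] H).range, ‖ξ - y‖ < ε := by
    obtain ⟨y, hy, hyε⟩ := (dense_iSup_range_leftIdeal hp hcs).exists_dist_lt ξ hε
    obtain ⟨a, hya⟩ := (Submodule.mem_iSup_of_directed _ hdir).1 hy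
    exact ⟨a, y, hya, by rwa [← dist_eq_norm]⟩
  choose a y hya hyε using hone
  obtain ⟨c, hc⟩ := hdir.finite_le fun ξ : F ↦ a ξ
  refine ⟨c, c.2, fun ξ hξ ↦ ?_⟩
  obtain ⟨ζ, hζ⟩ := hc ⟨ξ, hξ⟩ (hya ξ)
  exact ⟨ζ, hζ ▸ hyε ξ⟩

lemma IsCuntzSequence.exists_mem_leftIdeal_forall_norm_lt (hw : IsCuntzSequence M p w)
    (hp : IsProjIn M p) (hcs : IsCentralSupport M p 1) (hq : IsProjIn M q)
    (F : Finset H) {ε : ℝ} (hε : 0 < ε) :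
    ∃ a ∈ leftIdeal M p, q * a = a ∧ ∀ ξ ∈ F, ∃ ζ, ‖q ξ - a ζ‖ < ε ∧ ‖ζ‖ < ε := by
  obtain ⟨a, ha, hζ⟩ := hw.exists_mem_leftIdeal_forall_norm_sub_lt hp hcs F hε
  choose! ζ hζ using hζ
  have hsmall : ∀ᶠ t : ℂ in 𝓝[≠] 0, ∀ ξ ∈ F, ‖t • ζ ξ‖ < ε := by
    rw [eventually_all_finset]
    intro ξ _
    have htend : Tendsto (fun t : ℂ ↦ ‖t • ζ ξ‖) (𝓝 0) (𝓝 0) :=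
      Continuous.tendsto' (by fun_prop) _ _ (by simp)
    exact (htend.mono_left nhdsWithin_le_nhds).eventually_lt_const hε
  obtain ⟨t, ht, ht0⟩ := (hsmall.and self_mem_nhdsWithin).exists
  refine ⟨t⁻¹ • (q * a), Submodule.smul_mem _ _ (mul_mem_leftIdeal hq.1 ha), ?_,
    fun ξ hξ ↦ ⟨t • ζ ξ, ?_, ht ξ hξ⟩⟩
  · rw [mul_smul_comm, ← mul_assoc, hq.2.2]
  · have hscale : (t⁻¹ • (q * a)) (t • ζ ξ) = q (a (ζ ξ)) := by
      simp [smul_smul, mul_inv_cancel₀ ht0]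
    rw [hscale, ← map_sub]
    exact (le_of_opNorm_le q hq.isStarProjection.norm_le _).trans_lt
      (by simpa only [one_mul] using hζ ξ hξ)

lemma IsCuntzSequence.exists_mvnEquiv_forall_norm_sub_lt (hw : IsCuntzSequence M p w)
    (hp : IsProjIn M p) (hcs : IsCentralSupport M p 1) (hq : IsProjIn M q)
    (F : Finset H) {ε : ℝ} (hε : 0 < ε) :
    ∃ r, IsProjIn M r ∧ MvNEquiv M r p ∧ ∀ ξ ∈ F, ‖r ξ - q ξ‖ < ε := by
  obtain ⟨a, ha, hqa, hζ⟩ :=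
    hw.exists_mem_leftIdeal_forall_norm_lt hp hcs hq F (show 0 < ε / 4 by positivity)
  choose! ζ hζ using hζ
  have hlarge : ∀ᶠ n in atTop, ∀ ξ ∈ F, (‖a‖ + 1) * ‖star (w n) (ξ - q ξ)‖ +
      2 * (‖q ξ - a (ζ ξ)‖ + ‖star (w n) (a (ζ ξ))‖ + ‖ζ ξ‖) < ε := by
    rw [eventually_all_finset]
    intro ξ hξ
    have hlim : Tendsto (fun n ↦ (‖a‖ + 1) * ‖star (w n) (ξ - q ξ)‖ +
        2 * (‖q ξ - a (ζ ξ)‖ + ‖star (w n) (a (ζ ξ))‖ + ‖ζ ξ‖)) atTop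
        (𝓝 ((‖a‖ + 1) * ‖(0 : H)‖ + 2 * (‖q ξ - a (ζ ξ)‖ + ‖(0 : H)‖ + ‖ζ ξ‖))) :=
      ((hw.tendsto_star_apply _).norm.const_mul _).add
        ((((hw.tendsto_star_apply _).norm.const_add _).add_const _).const_mul 2)
    refine hlim.eventually_lt_const ?_
    rw [norm_zero]
    linarith [hζ ξ hξ]
  obtain ⟨n, hn⟩ := hlarge.exists
  obtain ⟨r, hr, hrp, hrq⟩ := exists_mvnEquiv_norm_sub_le hp hq (hw.mem n) (hw.star_mul_self n)
    ha.1 ha.2 hqa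
  exact ⟨r, hr, hrp, fun ξ hξ ↦ (hrq ξ (ζ ξ)).trans_lt (hn ξ hξ)⟩

end CuntzSequence

section Closure

variable {M : VonNeumannAlgebra H}

lemma ProjSet.mem_closure_of_forall_finset {S : Set (ProjSet M)} {q : ProjSet M}
    (h : ∀ (F : Finset H) (ε : ℝ), 0 < ε → ∃ r ∈ S, ∀ ξ ∈ F, ‖r.1 ξ - q.1 ξ‖ < ε) :
    q ∈ closure S := by
  rw [closure_induced, mem_closure_iff_nhds]
  intro U hU
  rw [nhds_pi, Filter.mem_pi'] at hU
  obtain ⟨F, V, hV, hVU⟩ := hU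
  have hball : ∀ᶠ ε in 𝓝[>] (0 : ℝ), ∀ ξ ∈ F, Metric.ball (q.1 ξ) ε ⊆ V ξ := by
    rw [eventually_all_finset]
    intro ξ _
    obtain ⟨δ, hδ, hδV⟩ := Metric.mem_nhds_iff.1 (hV ξ)
    filter_upwards [Ioo_mem_nhdsGT hδ] with ε hε
    exact (Metric.ball_subset_ball hε.2.le).trans hδV
  obtain ⟨ε, hεV, hε⟩ := (hball.and self_mem_nhdsWithin).exists
  obtain ⟨r, hrS, hr⟩ := h F ε hε
  exact ⟨_, hVU fun ξ hξ ↦ hεV ξ hξ (mem_ball_iff_norm.2 (hr ξ hξ)), r, hrS, rfl⟩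

lemma dense_setOf_mvnEquiv {p : H →L[ℂ] H} (hp : IsProjIn M p) (hpi : ProperlyInfiniteProj M p)
    (hcs : IsCentralSupport M p 1) : Dense {r : ProjSet M | MvNEquiv M r.1 p} := by
  obtain ⟨w, hw⟩ := hpi.exists_isCuntzSequence
  refine fun q ↦ ProjSet.mem_closure_of_forall_finset fun F ε hε ↦ ?_
  obtain ⟨r, hr, hrp, hrq⟩ := hw.exists_mvnEquiv_forall_norm_sub_lt hp hcs q.2 F hε
  exact ⟨⟨r, hr⟩, hrp, hrq⟩

end Closure

/-- Let `p` be a properly infinite projection with central support `1`.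
Then every projection of `M` is a strong limit of projections equivalent to `p`;
equivalently, the closure of `{[p]}` in the quotient operator topology is all of `P(M)/∼`. -/
theorem closure_singleton_univ (M : VonNeumannAlgebra H)
    (p : H →L[ℂ] H) (hp : IsProjIn M p)
    (hpi : ProperlyInfiniteProj M p) (hcs : IsCentralSupport M p 1) :
    closure {r : ProjSet M | MvNEquiv M r.1 p} = Set.univ ∧
    closure {x : PQuot M | x = pquotMk M ⟨p, hp⟩} = Set.univ := by
  have hdense := dense_setOf_mvnEquiv hp hpi hcs
  have hsurj : Function.Surjective (pquotMk M) := Quot.mk_surjective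
  have himage := hsurj.denseRange.dense_image continuous_quot_mk hdense
  refine ⟨hdense.closure_eq, (himage.mono ?_).closure_eq⟩
  rintro _ ⟨r, hr, rfl⟩
  exact Quot.sound hr
end
end

section
/- The quotient operator topology on P(M)/∼ is T₀ if and only if M contains no κ-homogeneous projection for any uncountable cardinal κ, equivalently if and only if M is a (possibly uncountable) direct sum of σ-finite von Neumann algebras. -/
open ContinuousLinearMap Filter Topology

universe u

noncomputable section

variable {H : Type u} [NormedAddCommGroup H] [InnerProductSpace ℂ H] [CompleteSpace H]

/-- `p` is a homogeneous projection of size `ι`: `p` is the sum of `ι`-many mutually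
equivalent orthogonal projections, each of which is a sum of centrally orthogonal
σ-finite projections. -/
def IsHomogeneousProj (M : VonNeumannAlgebra H) (ι : Type*) (p : H →L[ℂ] H) : Prop :=
  IsProjIn M p ∧ p ≠ 0 ∧ ∃ e : ι → H →L[ℂ] H,
    (∀ i, IsProjIn M (e i)) ∧ (Pairwise fun i j => e i * e j = 0) ∧
    (∀ i j, MvNEquiv M (e i) (e j)) ∧ (∀ ξ : H, HasSum (fun i => e i ξ) (p ξ)) ∧
    ∀ i, ∃ (J : Type u) (f c : J → H →L[ℂ] H),
      (∀ j, IsProjIn M (f j) ∧ SigmaFiniteProj M (f j)) ∧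
      (∀ j, IsCentralSupport M (f j) (c j)) ∧
      (Pairwise fun j j' => c j * c j' = 0) ∧
      ∀ ξ : H, HasSum (fun j => f j ξ) (e i ξ)

/-!
In the quotient, `[p]` lies in the closure of `[q]` as soon as projections equivalent to `q`
converge strongly to `p`. Write `r ≼ q` for Murray–von Neumann subequivalence.

For a σ-finite central projection `z` the set of all `r` with `z r ≼ z q` is strongly closed; it is
also saturated, so specialization in the quotient implies subequivalence below `z`. If `1` is a sum
of such `z`, then two inseparable classes are equal by Schröder–Bernstein. To prove closedness, cut
away a largest central part of `q` that already dominates `p`. If the rest were infinite, it would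
contain infinitely many equivalent orthogonal copies of some projection; these absorb a central cut
of the σ-finite `p`, against maximality. So the rest is finite, and a countable separating set of
vectors yields a sequence `r n ≼ q` converging to `p` so fast that the tail products
`r m * r (m + 1) * ⋯ * p` converge to some `y m`. The right supports of the `y m` increase to `p`
and are subequivalent to `q`; finiteness of `q` allows their embeddings into `q` to be chosen
increasing.

Conversely, in an orthogonal family of equivalent projections an infinite subfamily `A` can be
changed on a finite set so as to agree there with any other subfamily `B`, without changing its
cardinality. Hence the sums over two infinite subfamilies specialize to each other. If the quotient
is `T₀`, a countably infinite sum is therefore equivalent to the sum of the whole family, which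
must then be σ-finite.

Without uncountable homogeneous projections, a maximal family of orthogonal copies of a σ-finite
projection is countable after cutting by a central projection that makes the remainder small, so
every nonzero central projection dominates a nonzero σ-finite one.
-/

section PartialIsometry

theorem star_mul_eq_zero_of_mul_eq_zero {A : Type*} [NonUnitalSemiring A] [StarRing A]
    {v w p q : A} (hp : IsSelfAdjoint p) (hv : p * v = v) (hw : q * w = w) (h : p * q = 0) :
    star v * w = 0 := by
  rw [← hv, ← hw, star_mul, hp.star_eq, mul_assoc, ← mul_assoc p, h, zero_mul, mul_zero]

variable {A : Type*} [NonUnitalNormedRing A] [StarRing A] [CStarRing A] {v p : A}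

theorem mul_eq_self_of_star_mul_self (hv : star v * v = p) (hp : IsIdempotentElem p) :
    v * p = v := by
  have hps : star p = p := by rw [← hv, star_mul, star_star]
  have hsq : star (v * p - v) * (v * p - v) = 0 := by
    calc star (v * p - v) * (v * p - v)
        = p * (star v * v) * p - p * (star v * v) - star v * v * p + star v * v := by
          rw [star_sub, star_mul, hps]; noncomm_ring
      _ = 0 := by rw [hv, hp.eq, hp.eq]; simp
  exact sub_eq_zero.1 ((CStarRing.star_mul_self_eq_zero_iff _).1 hsq)

theorem isStarProjection_mul_star_self_s11 (hv : IsIdempotentElem (star v * v)) :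
    IsStarProjection (v * star v) where
  isIdempotentElem := by
    rw [IsIdempotentElem, ← mul_assoc, mul_assoc v, mul_eq_self_of_star_mul_self rfl hv]
  isSelfAdjoint := .mul_star_self v

theorem norm_le_one_of_isIdempotentElem (hv : IsIdempotentElem (star v * v)) : ‖v‖ ≤ 1 := by
  have hp := (IsStarProjection.mk hv (.star_mul_self v)).norm_le
  rw [CStarRing.norm_star_mul_self] at hp
  nlinarith

end PartialIsometry

section Projections

variable {M : VonNeumannAlgebra H} {p q e f : H →L[ℂ] H}

theorem isProjIn_iff : IsProjIn M p ↔ p ∈ M ∧ IsStarProjection p :=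
  ⟨fun h => ⟨h.1, h.2.2, h.2.1⟩, fun h => ⟨h.1, h.2.isSelfAdjoint, h.2.isIdempotentElem⟩⟩

namespace IsProjIn

theorem mem (hp : IsProjIn M p) : p ∈ M := hp.1

theorem star_eq (hp : IsProjIn M p) : star p = p := hp.2.1

theorem mul_self (hp : IsProjIn M p) : p * p = p := hp.2.2

theorem isStarProjection_s11 (hp : IsProjIn M p) : IsStarProjection p := (isProjIn_iff.1 hp).2

theorem zero (M : VonNeumannAlgebra H) : IsProjIn M 0 :=
  isProjIn_iff.2 ⟨zero_mem M, .zero _⟩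

theorem one (M : VonNeumannAlgebra H) : IsProjIn M 1 :=
  isProjIn_iff.2 ⟨one_mem M, .one _⟩

theorem mul (hp : IsProjIn M p) (hq : IsProjIn M q) (h : Commute p q) : IsProjIn M (p * q) :=
  isProjIn_iff.2 ⟨mul_mem hp.mem hq.mem, hp.isStarProjection_s11.mul hq.isStarProjection_s11 h⟩

theorem mul_eq_zero_comm (hp : IsProjIn M p) (hq : IsProjIn M q) : p * q = 0 ↔ q * p = 0 := by
  rw [← star_eq_zero, star_mul, hp.star_eq, hq.star_eq]

theorem add (hp : IsProjIn M p) (hq : IsProjIn M q) (h : p * q = 0) : IsProjIn M (p + q) :=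
  isProjIn_iff.2 ⟨add_mem hp.mem hq.mem, hp.isStarProjection_s11.add hq.isStarProjection_s11 h⟩

theorem sub (hp : IsProjIn M p) (hq : IsProjIn M q) (h : ProjLE q p) : IsProjIn M (p - q) :=
  isProjIn_iff.2 ⟨sub_mem hp.mem hq.mem,
    hq.isStarProjection_s11.sub_of_mul_eq_left hp.isStarProjection_s11 h.1⟩

theorem one_sub (hp : IsProjIn M p) : IsProjIn M (1 - p) :=
  isProjIn_iff.2 ⟨sub_mem (one_mem M) hp.mem, hp.isStarProjection_s11.one_sub⟩

theorem projLE_self (hp : IsProjIn M p) : ProjLE p p := ⟨hp.mul_self, hp.mul_self⟩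

theorem projLE_iff (hp : IsProjIn M p) (hq : IsProjIn M q) : ProjLE p q ↔ q * p = p :=
  ⟨fun h => h.2, fun h => ⟨by simpa [hp.star_eq, hq.star_eq] using congrArg star h, h⟩⟩

theorem projLE_add (hp : IsProjIn M p) (hq : IsProjIn M q) (h : p * q = 0) : ProjLE p (p + q) :=
  ⟨by rw [mul_add, hp.mul_self, h, add_zero],
    by rw [add_mul, hp.mul_self, (hp.mul_eq_zero_comm hq).1 h, add_zero]⟩

theorem norm_apply_le (hp : IsProjIn M p) (ξ : H) : ‖p ξ‖ ≤ ‖ξ‖ := by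
  simpa using p.le_of_opNorm_le hp.isStarProjection_s11.norm_le ξ

end IsProjIn

namespace ProjLE

omit [CompleteSpace H]

theorem zero (p : H →L[ℂ] H) : ProjLE 0 p := ⟨zero_mul p, mul_zero p⟩

theorem trans (hpq : ProjLE p q) (hqe : ProjLE q e) : ProjLE p e :=
  ⟨by rw [← hpq.1, mul_assoc, hqe.1], by rw [← hpq.2, ← mul_assoc, hqe.2]⟩

theorem antisymm (hpq : ProjLE p q) (hqp : ProjLE q p) : p = q := hpq.1.symm.trans hqp.2

theorem add (hp : ProjLE p e) (hq : ProjLE q e) : ProjLE (p + q) e :=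
  ⟨by rw [add_mul, hp.1, hq.1], by rw [mul_add, hp.2, hq.2]⟩

theorem sub (hp : ProjLE p e) (hq : ProjLE q e) : ProjLE (p - q) e :=
  ⟨by rw [sub_mul, hp.1, hq.1], by rw [mul_sub, hp.2, hq.2]⟩

theorem mul_eq_zero (hpe : ProjLE p e) (hqf : ProjLE q f) (h : e * f = 0) : p * q = 0 := by
  rw [← hpe.1, ← hqf.2, mul_assoc, ← mul_assoc e, h, zero_mul, mul_zero]

theorem self_mul_sub (hp : p * p = p) (hpe : ProjLE p e) : p * (e - p) = 0 := by
  rw [mul_sub, hpe.1, hp, sub_self]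

theorem sub_mul_self (hp : p * p = p) (hpe : ProjLE p e) : (e - p) * p = 0 := by
  rw [sub_mul, hpe.2, hp, sub_self]

end ProjLE

end Projections

section StrongSums

variable {M : VonNeumannAlgebra H} {ι : Type*} {x : ι → H →L[ℂ] H} {X Y : H →L[ℂ] H}

/-- `X` is the sum of the family `x` in the strong operator topology. -/
def HasStrongSum (x : ι → H →L[ℂ] H) (X : H →L[ℂ] H) : Prop :=
  ∀ ξ : H, HasSum (fun i => x i ξ) (X ξ)

theorem apply_comm_of_mem_commutant {u : H →L[ℂ] H} (hX : X ∈ M) (hu : u ∈ M.commutant)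
    (ξ : H) : u (X ξ) = X (u ξ) :=
  (DFunLike.congr_fun (VonNeumannAlgebra.mem_commutant_iff.1 hu X hX) ξ).symm

theorem mem_of_forall_apply_comm (h : ∀ u ∈ M.commutant, ∀ ξ, u (X ξ) = X (u ξ)) : X ∈ M := by
  rw [← M.commutant_commutant]
  exact VonNeumannAlgebra.mem_commutant_iff.2 fun u hu => ContinuousLinearMap.ext (h u hu)

namespace HasStrongSum

omit [CompleteSpace H] in
theorem unique (hX : HasStrongSum x X) (hY : HasStrongSum x Y) : X = Y :=
  ContinuousLinearMap.ext fun ξ => (hX ξ).unique (hY ξ)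

omit [CompleteSpace H] in
theorem mul_left (hX : HasStrongSum x X) (a : H →L[ℂ] H) :
    HasStrongSum (fun i => a * x i) (a * X) :=
  fun ξ => (hX ξ).mapL a

omit [CompleteSpace H] in
theorem mul_right (hX : HasStrongSum x X) (a : H →L[ℂ] H) :
    HasStrongSum (fun i => x i * a) (X * a) :=
  fun ξ => hX (a ξ)

omit [CompleteSpace H] in
theorem eq_zero (hX : HasStrongSum x X) (h : ∀ i, x i = 0) : X = 0 :=
  hX.unique fun ξ => by simp [h]

omit [CompleteSpace H] in
theorem eq_of_forall_ne (hX : HasStrongSum x X) (i : ι) (h : ∀ j ≠ i, x j = 0) : X = x i :=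
  hX.unique fun ξ => hasSum_single i fun j hj => by simp [h j hj]

omit [CompleteSpace H] in
theorem exists_ne_zero (hX : HasStrongSum x X) (h : X ≠ 0) : ∃ i, x i ≠ 0 := by
  by_contra! h0
  exact h (hX.eq_zero h0)

theorem star_eq (hX : HasStrongSum x X) (hY : HasStrongSum (fun i => star (x i)) Y) :
    star X = Y := by
  ext ξ
  refine ext_inner_right ℂ fun η => ?_
  have hl : HasSum (fun i => inner ℂ ξ (x i η)) (inner ℂ ξ (X η)) :=
    (hX η).mapL (innerSL ℂ ξ)
  have hr : HasSum (fun i => inner ℂ (star (x i) ξ) η) (inner ℂ (Y ξ) η) :=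
    (hY ξ).mapL ((innerSL ℂ).flip η)
  rw [star_eq_adjoint, adjoint_inner_left]
  simp only [star_eq_adjoint, adjoint_inner_left] at hr
  exact hl.unique hr

theorem mem (hX : HasStrongSum x X) (hx : ∀ i, x i ∈ M) : X ∈ M :=
  mem_of_forall_apply_comm fun u hu ξ => ((hX ξ).mapL u).unique
    (by simpa only [apply_comm_of_mem_commutant (hx _) hu] using hX (u ξ))

end HasStrongSum

section PartialIsometries

variable (hpi : ∀ i, IsIdempotentElem (star (x i) * x i))
  (hrange : Pairwise fun i j => star (x i) * x j = 0)
  (hsource : Pairwise fun i j => x i * star (x j) = 0)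

include hpi hrange hsource

theorem norm_sum_le_one (F : Finset ι) : ‖∑ i ∈ F, x i‖ ≤ 1 := by
  have hstar : star (∑ i ∈ F, x i) * ∑ i ∈ F, x i = ∑ i ∈ F, star (x i) * x i := by
    rw [star_sum, Finset.sum_mul_sum]
    exact Finset.sum_congr rfl fun i hi =>
      Finset.sum_eq_single i (fun j _ hj => hrange hj.symm) (absurd hi)
  refine norm_le_one_of_isIdempotentElem ?_
  rw [IsIdempotentElem, hstar, Finset.sum_mul_sum]
  refine Finset.sum_congr rfl fun i hi => ?_
  rw [Finset.sum_eq_single i (fun j _ hj => ?_) (absurd hi), (hpi i).eq]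
  rw [mul_assoc, ← mul_assoc (x i), hsource hj.symm, zero_mul, mul_zero]

theorem summable_apply (ξ : H) : Summable fun i => x i ξ := by
  have horth : OrthogonalFamily ℂ (fun i => LinearMap.range (x i : H →ₗ[ℂ] H))
      fun i => (LinearMap.range (x i : H →ₗ[ℂ] H)).subtypeₗᵢ := by
    rintro i j hij ⟨_, a, rfl⟩ ⟨_, b, rfl⟩
    have h : star (x i) (x j b) = 0 := DFunLike.congr_fun (hrange hij) b
    rw [star_eq_adjoint] at h
    change inner ℂ (x i a) (x j b) = 0
    rw [← adjoint_inner_right, h, inner_zero_right]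
  let y (i : ι) : LinearMap.range (x i : H →ₗ[ℂ] H) := ⟨x i ξ, ξ, rfl⟩
  refine (horth.summable_iff_norm_sq_summable y).2
    (summable_of_sum_le (c := ‖ξ‖ ^ 2) (fun i => by positivity) fun F => ?_)
  rw [← horth.norm_sum y F]
  gcongr
  simpa [y] using (∑ i ∈ F, x i).le_of_opNorm_le (norm_sum_le_one hpi hrange hsource F) ξ

theorem exists_hasStrongSum : ∃ X, HasStrongSum x X := by
  have hlim : Tendsto (fun (F : Finset ι) ξ => (∑ i ∈ F, x i) ξ) atTop
      (𝓝 fun ξ => ∑' i, x i ξ) := by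
    refine tendsto_pi_nhds.2 fun ξ => ?_
    simpa only [HasSum, SummationFilter.unconditional_filter, _root_.sum_apply]
      using (summable_apply hpi hrange hsource ξ).hasSum
  have hbdd : Bornology.IsBounded (Set.range fun F : Finset ι => ∑ i ∈ F, x i) :=
    isBounded_iff_forall_norm_le.2 ⟨1, Set.forall_mem_range.2 (norm_sum_le_one hpi hrange hsource)⟩
  exact ⟨.ofTendstoOfBoundedRange _ _ hlim hbdd,
    fun ξ => (summable_apply hpi hrange hsource ξ).hasSum⟩

end PartialIsometries

section OrthogonalProjections

variable {p : ι → H →L[ℂ] H} {P : H →L[ℂ] H}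

theorem exists_hasStrongSum_of_isProjIn (hp : ∀ i, IsProjIn M (p i))
    (horth : Pairwise fun i j => p i * p j = 0) : ∃ P, HasStrongSum p P := by
  refine exists_hasStrongSum (fun i => ?_) (fun i j hij => ?_) (fun i j hij => ?_)
  · simp only [(hp _).star_eq, (hp _).mul_self, IsIdempotentElem]
  · simpa only [(hp i).star_eq] using horth hij
  · simpa only [(hp j).star_eq] using horth hij

namespace HasStrongSum

theorem mul_eq_self (hP : HasStrongSum p P) (hp : ∀ i, IsProjIn M (p i))
    (horth : Pairwise fun i j => p i * p j = 0) (i : ι) : p i * P = p i := by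
  rw [(hP.mul_left (p i)).eq_of_forall_ne i fun j hj => horth hj.symm, (hp i).mul_self]

theorem isProjIn (hP : HasStrongSum p P) (hp : ∀ i, IsProjIn M (p i))
    (horth : Pairwise fun i j => p i * p j = 0) : IsProjIn M P := by
  refine ⟨hP.mem fun i => (hp i).mem, hP.star_eq (by simpa only [(hp _).star_eq] using hP), ?_⟩
  exact (hP.mul_right P).unique (by simpa only [hP.mul_eq_self hp horth] using hP)

theorem projLE (hP : HasStrongSum p P) (hp : ∀ i, IsProjIn M (p i))
    (horth : Pairwise fun i j => p i * p j = 0) (i : ι) : ProjLE (p i) P := by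
  refine ⟨hP.mul_eq_self hp horth i, ?_⟩
  rw [(hP.mul_right (p i)).eq_of_forall_ne i fun j hj => horth hj, (hp i).mul_self]

omit [CompleteSpace H] in
theorem projLE_of_forall {e : H →L[ℂ] H} (hP : HasStrongSum p P) (hpe : ∀ i, ProjLE (p i) e) :
    ProjLE P e :=
  ⟨(hP.mul_right e).unique (by simpa only [(hpe _).1] using hP),
    (hP.mul_left e).unique (by simpa only [(hpe _).2] using hP)⟩

end HasStrongSum

end OrthogonalProjections

end StrongSums

section Supports

variable {M : VonNeumannAlgebra H} {S : Set H} {p q x y f : H →L[ℂ] H} {ξ : H}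

/-- The orthogonal projection onto the closed linear span of a set of vectors. -/
def spanProj (S : Set H) : H →L[ℂ] H :=
  (Submodule.span ℂ S).topologicalClosure.starProjection

theorem isStarProjection_spanProj (S : Set H) : IsStarProjection (spanProj S) :=
  isStarProjection_starProjection

theorem spanProj_apply_of_mem (h : ξ ∈ S) : spanProj S ξ = ξ :=
  Submodule.starProjection_eq_self_iff.2
    (Submodule.le_topologicalClosure _ (Submodule.subset_span h))

omit [CompleteSpace H] in
theorem apply_mem_of_mem_topologicalClosure_span {L : Submodule ℂ H} (hL : IsClosed (L : Set H))
    (h : ∀ ξ ∈ S, y ξ ∈ L) (hξ : ξ ∈ (Submodule.span ℂ S).topologicalClosure) : y ξ ∈ L :=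
  Submodule.topologicalClosure_minimal _ (t := L.comap (y : H →ₗ[ℂ] H))
    (Submodule.span_le.2 h) (hL.preimage y.continuous) hξ

theorem mul_spanProj_eq_zero (h : ∀ ξ ∈ S, y ξ = 0) : y * spanProj S = 0 := by
  ext ξ
  have hyS : ∀ ξ ∈ S, y ξ ∈ (⊥ : Submodule ℂ H) := h
  exact apply_mem_of_mem_topologicalClosure_span (by simp) hyS
    (Submodule.starProjection_apply_mem _ ξ)

theorem isProjIn_spanProj (h : ∀ u ∈ M.commutant, ∀ ξ ∈ S, u ξ ∈ S) :
    IsProjIn M (spanProj S) := by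
  refine isProjIn_iff.2 ⟨(VonNeumannAlgebra.IsStarProjection.mem_iff
    (isStarProjection_spanProj S) M).2 fun u hu => ?_, isStarProjection_spanProj S⟩
  rw [spanProj, Submodule.range_starProjection]
  exact fun ξ => apply_mem_of_mem_topologicalClosure_span (Submodule.isClosed_topologicalClosure _)
    fun ξ hξ => Submodule.le_topologicalClosure _ (Submodule.subset_span (h u hu ξ hξ))

/-- The range projection of `x`, i.e. the projection onto the closure of its range. -/
def rangeProj (x : H →L[ℂ] H) : H →L[ℂ] H := spanProj (Set.range x)

theorem isStarProjection_rangeProj (x : H →L[ℂ] H) : IsStarProjection (rangeProj x) :=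
  isStarProjection_spanProj _

theorem rangeProj_apply_apply (x : H →L[ℂ] H) (ξ : H) : rangeProj x (x ξ) = x ξ :=
  spanProj_apply_of_mem ⟨ξ, rfl⟩

theorem rangeProj_mul_self (x : H →L[ℂ] H) : rangeProj x * x = x :=
  ContinuousLinearMap.ext (rangeProj_apply_apply x)

theorem mul_rangeProj_eq_zero_iff : y * rangeProj x = 0 ↔ y * x = 0 := by
  refine ⟨fun h => ?_, fun h => mul_spanProj_eq_zero ?_⟩
  · rw [← rangeProj_mul_self x, ← mul_assoc, h, zero_mul]
  · exact Set.forall_mem_range.2 (DFunLike.congr_fun h)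

theorem mul_rangeProj_eq_self (h : y * x = x) : y * rangeProj x = rangeProj x := by
  rw [← sub_eq_zero, ← sub_one_mul, mul_rangeProj_eq_zero_iff, sub_one_mul, h, sub_self]

theorem isProjIn_rangeProj (hx : x ∈ M) : IsProjIn M (rangeProj x) :=
  isProjIn_spanProj fun u hu => Set.forall_mem_range.2 fun ξ =>
    ⟨u ξ, (apply_comm_of_mem_commutant hx hu ξ).symm⟩

theorem rangeProj_projLE (hq : IsStarProjection q) (h : q * x = x) : ProjLE (rangeProj x) q := by
  have hqx := mul_rangeProj_eq_self h
  refine ⟨?_, hqx⟩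
  simpa [hq.isSelfAdjoint.star_eq, (isStarProjection_rangeProj x).isSelfAdjoint.star_eq]
    using congrArg star hqx

theorem rangeProj_eq_of_forall (h : ∀ a : H →L[ℂ] H, a * x = 0 ↔ a * y = 0) :
    rangeProj x = rangeProj y := by
  have key {x y : H →L[ℂ] H} (h : ∀ a : H →L[ℂ] H, a * x = 0 → a * y = 0) :
      ProjLE (rangeProj y) (rangeProj x) := by
    refine rangeProj_projLE (isStarProjection_rangeProj x) ?_
    rw [← sub_eq_zero, ← sub_one_mul]
    exact h _ (by rw [sub_one_mul, rangeProj_mul_self, sub_self])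
  exact (key fun a => (h a).2).antisymm (key fun a => (h a).1)

theorem rangeProj_eq_self (hp : IsStarProjection p) : rangeProj p = p := by
  have h := rangeProj_projLE hp hp.isIdempotentElem.eq
  exact h.2.symm.trans <| by
    simpa [hp.isSelfAdjoint.star_eq, (isStarProjection_rangeProj p).isSelfAdjoint.star_eq]
      using congrArg star (rangeProj_mul_self p)

theorem rangeProj_eq_zero_iff : rangeProj x = 0 ↔ x = 0 := by
  simpa using mul_rangeProj_eq_zero_iff (x := x) (y := 1)

/-- The central support of `f ∈ M`, as the projection onto the closed span of `M f H`. -/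
def centralSupport (M : VonNeumannAlgebra H) (f : H →L[ℂ] H) : H →L[ℂ] H :=
  spanProj {η | ∃ x ∈ M, ∃ ξ, x (f ξ) = η}

theorem mul_centralSupport_eq_zero (h : ∀ x ∈ M, y * (x * f) = 0) :
    y * centralSupport M f = 0 :=
  mul_spanProj_eq_zero fun _ ⟨x, hx, ξ, hη⟩ => hη ▸ DFunLike.congr_fun (h x hx) ξ

theorem centralSupport_mul_self (M : VonNeumannAlgebra H) (f : H →L[ℂ] H) :
    centralSupport M f * f = f :=
  ContinuousLinearMap.ext fun ξ => spanProj_apply_of_mem ⟨1, one_mem M, ξ, rfl⟩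

theorem isCentralProj_centralSupport (hf : f ∈ M) : IsCentralProj M (centralSupport M f) := by
  have hM : IsProjIn M (centralSupport M f) := isProjIn_spanProj fun u hu _ ⟨x, hx, ξ, hη⟩ =>
    ⟨x, hx, u ξ, by rw [← hη, apply_comm_of_mem_commutant hx hu,
      apply_comm_of_mem_commutant hf hu]⟩
  have hM' : IsProjIn M.commutant (centralSupport M f) := by
    refine isProjIn_spanProj fun a ha _ ⟨x, hx, ξ, hη⟩ => ⟨a * x, ?_, ξ, by rw [← hη]; rfl⟩
    rw [M.commutant_commutant] at ha
    exact mul_mem ha hx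
  exact ⟨hM, fun x hx => (VonNeumannAlgebra.mem_commutant_iff.1 hM'.mem x hx).symm⟩

theorem isCentralSupport_centralSupport (hf : f ∈ M) :
    IsCentralSupport M f (centralSupport M f) := by
  have hc := isCentralProj_centralSupport hf
  refine ⟨hc, centralSupport_mul_self M f, fun w hw hwf => ?_⟩
  have h : (1 - w) * centralSupport M f = 0 := mul_centralSupport_eq_zero fun x hx => by
    rw [sub_mul, one_mul, ← mul_assoc, hw.2 x hx, mul_assoc, hwf, sub_self]
  rw [sub_mul, one_mul, sub_eq_zero] at h
  rw [hc.2 w hw.1.mem, ← h]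

end Supports

section PolarDecomposition

variable {M : VonNeumannAlgebra H} {a b x v : H →L[ℂ] H}

theorem star_mul_self_eq_star_mul_self_iff :
    star a * a = star b * b ↔ ∀ ξ, ‖a ξ‖ = ‖b ξ‖ := by
  have hsq (c : H →L[ℂ] H) (ξ : H) : inner ℂ ((star c * c) ξ) ξ = (‖c ξ‖ : ℂ) ^ 2 := by
    rw [mul_apply_eq_comp, star_eq_adjoint, adjoint_inner_left, inner_self_eq_norm_sq_to_K]
    rfl
  refine ⟨fun h ξ => ?_, fun h => ?_⟩
  · have hξ : (‖a ξ‖ : ℂ) ^ 2 = ‖b ξ‖ ^ 2 := by rw [← hsq, h, hsq]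
    exact (pow_left_inj₀ (norm_nonneg _) (norm_nonneg _) two_ne_zero).1 (mod_cast hξ)
  · have hinner := (ext_inner_map (star a * a : H →L[ℂ] H).toLinearMap
      (star b * b : H →L[ℂ] H).toLinearMap).1 fun ξ => by
        change inner ℂ ((star a * a) ξ) ξ = inner ℂ ((star b * b) ξ) ξ
        rw [hsq, hsq, h]
    exact ContinuousLinearMap.coe_injective hinner

theorem norm_cfcAbs_apply (x : H →L[ℂ] H) (ξ : H) : ‖CFC.abs x ξ‖ = ‖x ξ‖ := by
  refine star_mul_self_eq_star_mul_self_iff.1 ?_ ξ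
  rw [(CFC.abs_nonneg x).isSelfAdjoint.star_eq, CFC.abs_mul_abs]

theorem cfcAbs_mem (hx : x ∈ M) : CFC.abs x ∈ M := by
  rw [← M.commutant_commutant]
  refine VonNeumannAlgebra.mem_commutant_iff.2 fun u hu => ?_
  have hcomm := VonNeumannAlgebra.mem_commutant_iff.1 hu
  exact (Commute.cfcAbs_left (hcomm x hx)
    (VonNeumannAlgebra.mem_commutant_iff.1 (star_mem hu) x hx)).symm

theorem exists_mul_eq_and_star_mul_self_eq (h : ∀ ξ, ‖x ξ‖ = ‖a ξ‖) :
    ∃ v, v * a = x ∧ star v * v = rangeProj a := by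
  set K := (Submodule.span ℂ (Set.range a)).topologicalClosure
  let e : H →ₗ[ℂ] K := (a : H →ₗ[ℂ] H).codRestrict K fun ξ =>
    Submodule.le_topologicalClosure _ (Submodule.subset_span ⟨ξ, rfl⟩)
  have he : DenseRange e := by
    rintro ⟨k, hk⟩
    have hrange : Subtype.val '' Set.range e = (Submodule.span ℂ (Set.range a) : Set H) := by
      rw [← Set.range_comp]
      exact congrArg SetLike.coe (Submodule.span_eq (LinearMap.range (a : H →ₗ[ℂ] H))).symm
    rwa [closure_subtype, hrange]
  let v₀ : K →L[ℂ] H := (x : H →ₗ[ℂ] H).extendOfNorm e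
  have hv₀ (ξ : H) : v₀ (e ξ) = x ξ :=
    LinearMap.extendOfNorm_eq he ⟨1, fun ξ => by rw [one_mul]; exact (h ξ).le⟩ ξ
  have hnorm (k : K) : ‖v₀ k‖ = ‖k‖ := by
    refine he.induction_on (p := fun k => ‖v₀ k‖ = ‖k‖) k
      (isClosed_eq (by fun_prop) (by fun_prop)) fun ξ => ?_
    rw [hv₀]
    exact h ξ
  refine ⟨v₀ ∘L K.orthogonalProjectionOnto, ?_, ?_⟩
  · ext ξ
    have hξ : K.orthogonalProjectionOnto (a ξ) = e ξ :=
      Submodule.orthogonalProjectionOnto_mem_subspace_eq_self (K := K) (e ξ)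
    simp only [mul_apply_eq_comp, ContinuousLinearMap.comp_apply, hξ, hv₀]
  · have hP := isStarProjection_rangeProj a
    have hstar := star_mul_self_eq_star_mul_self_iff (a := v₀ ∘L K.orthogonalProjectionOnto)
      (b := rangeProj a)
    rw [hstar.2 fun ξ => hnorm _, hP.isSelfAdjoint.star_eq, hP.isIdempotentElem.eq]

theorem mem_of_mul_mem_of_mul_rangeProj (ha : a ∈ M) (hx : v * a ∈ M) (hv : v * rangeProj a = v) :
    v ∈ M := by
  rw [← M.commutant_commutant]
  refine VonNeumannAlgebra.mem_commutant_iff.2 fun u hu => ?_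
  have hcomm := VonNeumannAlgebra.mem_commutant_iff.1 hu
  have h : (u * v - v * u) * rangeProj a = 0 := by
    rw [mul_rangeProj_eq_zero_iff, sub_mul, mul_assoc, mul_assoc, ← hcomm a ha, ← mul_assoc v,
      hcomm _ hx, sub_self]
  rw [sub_mul, mul_assoc, mul_assoc, hv, ← hcomm _ (isProjIn_rangeProj ha).mem, ← mul_assoc,
    hv] at h
  exact sub_eq_zero.1 h

theorem rangeProj_cfcAbs (x : H →L[ℂ] H) : rangeProj (CFC.abs x) = rangeProj (star x) := by
  refine rangeProj_eq_of_forall fun y => ?_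
  have hstar : star (CFC.abs x) = CFC.abs x := (CFC.abs_nonneg x).isSelfAdjoint.star_eq
  rw [← star_eq_zero, star_mul, hstar, ← star_eq_zero (x := y * star x), star_mul, star_star]
  simp only [ContinuousLinearMap.ext_iff, mul_apply_eq_comp, _root_.zero_apply,
    ← norm_eq_zero (E := H), norm_cfcAbs_apply]

theorem mvNEquiv_rangeProj_star (hx : x ∈ M) :
    MvNEquiv M (rangeProj (star x)) (rangeProj x) := by
  obtain ⟨v, hva, hvv⟩ := exists_mul_eq_and_star_mul_self_eq fun ξ => (norm_cfcAbs_apply x ξ).symm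
  have hv := mul_eq_self_of_star_mul_self hvv (isStarProjection_rangeProj _).isIdempotentElem
  have hvM := mem_of_mul_mem_of_mul_rangeProj (cfcAbs_mem hx) (by rwa [hva]) hv
  have hidem : IsIdempotentElem (star v * v) :=
    hvv ▸ (isStarProjection_rangeProj _).isIdempotentElem
  refine ⟨v, hvM, hvv.trans (rangeProj_cfcAbs x), ?_⟩
  change v * star v = rangeProj x
  rw [← rangeProj_eq_self (isStarProjection_mul_star_self_s11 hidem)]
  refine rangeProj_eq_of_forall fun y => ?_
  have hyv : y * (v * star v) = 0 ↔ y * v = 0 := by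
    refine ⟨fun h => ?_, fun h => by rw [← mul_assoc, h, zero_mul]⟩
    rw [← mul_eq_self_of_star_mul_self rfl hidem, ← mul_assoc v, ← mul_assoc, h, zero_mul]
  rw [hyv, ← hva, ← mul_assoc, ← mul_rangeProj_eq_zero_iff (x := CFC.abs x), mul_assoc, hv]

end PolarDecomposition

theorem mul_add_one_sub_mul {A : Type*} [NonAssocRing A] (z p : A) : z * p + (1 - z) * p = p := by
  rw [← add_mul, add_sub_cancel, one_mul]

section CentralProjections

variable {M : VonNeumannAlgebra H} {z w p q x : H →L[ℂ] H}

namespace IsCentralProj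

theorem isProjIn (hz : IsCentralProj M z) : IsProjIn M z := hz.1

theorem commute (hz : IsCentralProj M z) (hx : x ∈ M) : Commute z x := hz.2 x hx

theorem one_sub (hz : IsCentralProj M z) : IsCentralProj M (1 - z) :=
  ⟨hz.isProjIn.one_sub, fun _ hx => (Commute.one_left _).sub_left (hz.commute hx)⟩

theorem mul (hz : IsCentralProj M z) (hw : IsCentralProj M w) : IsCentralProj M (z * w) :=
  ⟨hz.isProjIn.mul hw.isProjIn (hz.commute hw.isProjIn.mem),
    fun _ hx => (hz.commute hx).mul_left (hw.commute hx)⟩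

theorem mul_isProjIn (hz : IsCentralProj M z) (hp : IsProjIn M p) : IsProjIn M (z * p) :=
  hz.isProjIn.mul hp (hz.commute hp.mem)

theorem mul_projLE_left (hz : IsCentralProj M z) (hp : IsProjIn M p) : ProjLE (z * p) z :=
  ((hz.mul_isProjIn hp).projLE_iff hz.isProjIn).2 (by rw [← mul_assoc, hz.isProjIn.mul_self])

theorem mul_projLE_right (hz : IsCentralProj M z) (hp : IsProjIn M p) : ProjLE (z * p) p := by
  refine ((hz.mul_isProjIn hp).projLE_iff hp).2 ?_
  rw [← mul_assoc, ← hz.2 p hp.mem, mul_assoc, hp.mul_self]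

theorem mul_mono (hz : IsCentralProj M z) (hp : IsProjIn M p) (hq : IsProjIn M q)
    (h : ProjLE p q) : ProjLE (z * p) (z * q) := by
  refine ((hz.mul_isProjIn hp).projLE_iff (hz.mul_isProjIn hq)).2 ?_
  rw [mul_assoc, ← mul_assoc q, ← hz.2 q hq.mem, mul_assoc, h.2, ← mul_assoc, hz.isProjIn.mul_self]

theorem mul_mul_mul (hz : IsCentralProj M z) (hp : p ∈ M) : z * p * (z * q) = z * (p * q) := by
  rw [mul_assoc, ← mul_assoc p, ← hz.2 p hp, mul_assoc, ← mul_assoc, hz.isProjIn.mul_self]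

theorem of_hasStrongSum {ι : Type*} {z : ι → H →L[ℂ] H} {Z : H →L[ℂ] H}
    (hZ : HasStrongSum z Z) (hz : ∀ i, IsCentralProj M (z i))
    (horth : Pairwise fun i j => z i * z j = 0) : IsCentralProj M Z := by
  refine ⟨hZ.isProjIn (fun i => (hz i).isProjIn) horth, fun x hx => ?_⟩
  refine (hZ.mul_right x).unique ?_
  simpa only [(hz _).2 x hx] using hZ.mul_left x

end IsCentralProj

end CentralProjections

section Equivalence

variable {M : VonNeumannAlgebra H} {p q r e f e' f' z v : H →L[ℂ] H}

theorem IsProjIn.conj (hr : IsProjIn M r) (hv : v ∈ M) (hvp : star v * v = p)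
    (hrp : ProjLE r p) : IsProjIn M (v * r * star v) := by
  refine ⟨mul_mem (mul_mem hv hr.mem) (star_mem hv), ?_, ?_⟩
  · rw [IsSelfAdjoint, star_mul, star_mul, star_star, hr.star_eq, mul_assoc]
  · calc v * r * star v * (v * r * star v) = v * (r * (star v * v) * r) * star v := by
          simp only [mul_assoc]
      _ = v * r * star v := by rw [hvp, hrp.1, hr.mul_self]

namespace MvNEquiv

theorem refl (hp : IsProjIn M p) : MvNEquiv M p p :=
  have h : star p * p = p ∧ p * star p = p := by rw [hp.star_eq, hp.mul_self]; exact ⟨rfl, rfl⟩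
  ⟨p, hp.mem, h⟩

theorem symm : MvNEquiv M p q → MvNEquiv M q p := by
  rintro ⟨v, hv, hp, hq⟩
  exact ⟨star v, star_mem hv, by rw [← star_eq_adjoint, star_star]; exact ⟨hq, hp⟩⟩

theorem conj (hv : v ∈ M) (hvp : star v * v = p) (hr : IsProjIn M r) (hrp : ProjLE r p) :
    MvNEquiv M r (v * r * star v) := by
  refine ⟨v * r, mul_mem hv hr.mem, ?_, ?_⟩
  · change star (v * r) * (v * r) = r
    rw [star_mul, mul_assoc, ← mul_assoc (star v), hvp, hr.star_eq, hrp.2, hr.mul_self]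
  · change v * r * star (v * r) = v * r * star v
    rw [star_mul, hr.star_eq, ← mul_assoc, mul_assoc v r r, hr.mul_self]

theorem trans (hp : IsProjIn M p) (hq : IsProjIn M q) (hpq : MvNEquiv M p q)
    (hqr : MvNEquiv M q r) : MvNEquiv M p r := by
  obtain ⟨v, hv, rfl, hvq⟩ := hpq
  obtain ⟨w, hw, hwq, rfl⟩ := hqr
  have hv' : q * v = v := by
    rw [← hvq, mul_assoc]
    exact mul_eq_self_of_star_mul_self rfl hp.mul_self
  have hw' : w * q = w := mul_eq_self_of_star_mul_self hwq hq.mul_self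
  refine ⟨w * v, mul_mem hw hv, ?_⟩
  simp only [← star_eq_adjoint, star_mul] at *
  constructor
  · rw [mul_assoc, ← mul_assoc (star w), hwq, hv']
  · rw [mul_assoc, ← mul_assoc v, hvq, ← mul_assoc, hw']

theorem central_mul (hz : IsCentralProj M z) (h : MvNEquiv M p q) :
    MvNEquiv M (z * p) (z * q) := by
  obtain ⟨v, hv, hp, hq⟩ := h
  rw [← star_eq_adjoint] at hp hq
  have hvz' := hz.2 _ (star_mem hv)
  refine ⟨z * v, mul_mem hz.isProjIn.mem hv, ?_, ?_⟩
  · change star (z * v) * (z * v) = z * p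
    rw [star_mul, hz.isProjIn.star_eq, ← hvz', hz.mul_mul_mul (star_mem hv), hp]
  · change z * v * star (z * v) = z * q
    rw [star_mul, hz.isProjIn.star_eq, ← hvz', hz.mul_mul_mul hv, hq]

theorem eq_zero (h : MvNEquiv M p q) (hq : q = 0) : p = 0 := by
  obtain ⟨v, -, rfl, hvq⟩ := h
  have hv : v = 0 := (CStarRing.mul_star_self_eq_zero_iff v).1 (hvq.trans hq)
  rw [hv, mul_zero]

theorem ne_zero (h : MvNEquiv M p q) (hp : p ≠ 0) : q ≠ 0 := mt h.eq_zero hp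

theorem exists_projLE (hp : IsProjIn M p) (hq : IsProjIn M q) (h : MvNEquiv M p q)
    (hr : IsProjIn M r) (hrp : ProjLE r p) :
    ∃ s, IsProjIn M s ∧ ProjLE s q ∧ MvNEquiv M r s ∧ MvNEquiv M (p - r) (q - s) := by
  obtain ⟨v, hv, hvp, hvq⟩ := h
  have hvr : v * p = v := mul_eq_self_of_star_mul_self hvp hp.mul_self
  have hrs : MvNEquiv M r (v * r * star v) := conj hv hvp hr hrp
  have hs : IsProjIn M (v * r * star v) := hr.conj hv hvp hrp
  refine ⟨v * r * star v, hs, (hs.projLE_iff hq).2 ?_, hrs, ?_⟩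
  · rw [← hvq, ← star_eq_adjoint, ← mul_assoc, ← mul_assoc, mul_assoc v, star_eq_adjoint, hvp, hvr]
  · convert conj hv hvp (hp.sub hr hrp) (hp.projLE_self.sub hrp) using 1
    rw [mul_sub, sub_mul, hvr, ← hvq, star_eq_adjoint]

end MvNEquiv

theorem subEquiv_iff (hp : IsProjIn M p) (hq : IsProjIn M q) :
    SubEquiv M p q ↔ ∃ v ∈ M, star v * v = p ∧ q * v = v := by
  constructor
  · rintro ⟨r, -, ⟨v, hv, rfl, rfl⟩, hr⟩
    refine ⟨v, hv, rfl, ?_⟩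
    have hvv : v * (star v * v) = v := mul_eq_self_of_star_mul_self rfl hp.mul_self
    rw [← star_eq_adjoint] at hr
    rw [← hvv, ← mul_assoc v, ← mul_assoc, hr.2]
  · rintro ⟨v, hv, rfl, hqv⟩
    have hr : IsProjIn M (v * star v) := isProjIn_iff.2
      ⟨mul_mem hv (star_mem hv), isStarProjection_mul_star_self_s11 hp.mul_self⟩
    exact ⟨v * star v, hr, ⟨v, hv, rfl, rfl⟩, (hr.projLE_iff hq).2 (by rw [← mul_assoc, hqv])⟩

theorem ProjLE.subEquiv (hp : IsProjIn M p) (h : ProjLE p q) : SubEquiv M p q :=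
  ⟨p, hp, .refl hp, h⟩

theorem MvNEquiv.subEquiv (hq : IsProjIn M q) (h : MvNEquiv M p q) : SubEquiv M p q :=
  ⟨q, hq, h, hq.projLE_self⟩

namespace SubEquiv

theorem trans (hp : IsProjIn M p) (hq : IsProjIn M q) (hr : IsProjIn M r)
    (hpq : SubEquiv M p q) (hqr : SubEquiv M q r) : SubEquiv M p r := by
  obtain ⟨v, hv, hvp, hqv⟩ := (subEquiv_iff hp hq).1 hpq
  obtain ⟨w, hw, hwq, hrw⟩ := (subEquiv_iff hq hr).1 hqr
  refine (subEquiv_iff hp hr).2 ⟨w * v, mul_mem hw hv, ?_, by rw [← mul_assoc, hrw]⟩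
  rw [star_mul, mul_assoc, ← mul_assoc (star w), hwq, hqv, hvp]

theorem central_mul (hz : IsCentralProj M z) (hq : IsProjIn M q) (h : SubEquiv M p q) :
    SubEquiv M (z * p) (z * q) :=
  have ⟨r, hr, hpr, hrq⟩ := h
  ⟨z * r, hz.mul_isProjIn hr, hpr.central_mul hz, hz.mul_mono hr hq hrq⟩

end SubEquiv

end Equivalence

section SumsOfEquivalences

variable {M : VonNeumannAlgebra H} {ι : Type*} {p q z : ι → H →L[ℂ] H}
  {P Q e f e' f' c : H →L[ℂ] H}

theorem MvNEquiv.of_hasStrongSum (hp : ∀ i, IsProjIn M (p i)) (hq : ∀ i, IsProjIn M (q i))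
    (hpo : Pairwise fun i j => p i * p j = 0) (hqo : Pairwise fun i j => q i * q j = 0)
    (h : ∀ i, MvNEquiv M (p i) (q i)) (hP : HasStrongSum p P) (hQ : HasStrongSum q Q) :
    MvNEquiv M P Q := by
  choose v hv hvp hvq using h
  simp only [← star_eq_adjoint] at hvp hvq
  have hvp' (i) : v i * p i = v i := mul_eq_self_of_star_mul_self (hvp i) (hp i).mul_self
  have hvq' (i) : q i * v i = v i := by rw [← hvq, mul_assoc, hvp, hvp']
  have hidem (i) : IsIdempotentElem (star (v i) * v i) := hvp i ▸ (hp i).mul_self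
  have hidem' (i) : IsIdempotentElem (star (star (v i)) * star (v i)) := by
    rw [star_star, hvq]
    exact (hq i).mul_self
  have hrange : Pairwise fun i j => star (v i) * v j = 0 := fun i j hij =>
    star_mul_eq_zero_of_mul_eq_zero (hq i).2.1 (hvq' i) (hvq' j) (hqo hij)
  have hsource : Pairwise fun i j => v i * star (v j) = 0 := fun i j hij => by
    have hstar (i) : p i * star (v i) = star (v i) := by
      simpa [(hp i).star_eq] using congrArg star (hvp' i)
    simpa using star_mul_eq_zero_of_mul_eq_zero (hp i).2.1 (hstar i) (hstar j) (hpo hij)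
  obtain ⟨V, hV⟩ := exists_hasStrongSum hidem hrange hsource
  obtain ⟨W, hW⟩ := exists_hasStrongSum hidem' (by simpa only [star_star] using hsource)
    (by simpa only [star_star] using hrange)
  obtain rfl := hV.star_eq hW
  refine ⟨V, hV.mem hv, ?_, ?_⟩
  · refine (hV.mul_left (star V)).unique ?_
    convert hP using 2 with i
    rw [(hW.mul_right (v i)).eq_of_forall_ne i fun j hj => hrange hj, hvp]
  · refine (hW.mul_left V).unique ?_
    convert hQ using 2 with i
    rw [(hV.mul_right (star (v i))).eq_of_forall_ne i fun j hj => hsource hj, hvq]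

theorem SubEquiv.of_hasStrongSum (hp : ∀ i, IsProjIn M (p i)) (hq : ∀ i, IsProjIn M (q i))
    (hpo : Pairwise fun i j => p i * p j = 0) (hqo : Pairwise fun i j => q i * q j = 0)
    (h : ∀ i, SubEquiv M (p i) (q i)) (hP : HasStrongSum p P) (hQ : HasStrongSum q Q) :
    SubEquiv M P Q := by
  choose r hr hpr hrq using h
  have hro : Pairwise fun i j => r i * r j = 0 := fun i j hij =>
    (hrq i).mul_eq_zero (hrq j) (hqo hij)
  obtain ⟨R, hR⟩ := exists_hasStrongSum_of_isProjIn hr hro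
  exact ⟨R, hR.isProjIn hr hro, .of_hasStrongSum hp hr hpo hro hpr hP hR,
    hR.projLE_of_forall fun i => (hrq i).trans (hQ.projLE hq hqo i)⟩

theorem SubEquiv.of_forall_central_mul {p q : H →L[ℂ] H} (hz : ∀ i, IsCentralProj M (z i))
    (horth : Pairwise fun i j => z i * z j = 0) (hp : IsProjIn M p) (hq : IsProjIn M q)
    (h : ∀ i, SubEquiv M (z i * p) (z i * q)) (hc : HasStrongSum z c) :
    SubEquiv M (c * p) (c * q) :=
  have hcut {e : H →L[ℂ] H} (he : IsProjIn M e) :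
      Pairwise fun i j => z i * e * (z j * e) = 0 := fun i j hij =>
    ((hz i).mul_projLE_left he).mul_eq_zero ((hz j).mul_projLE_left he) (horth hij)
  .of_hasStrongSum (fun i => (hz i).mul_isProjIn hp) (fun i => (hz i).mul_isProjIn hq)
    (hcut hp) (hcut hq) h (hc.mul_right p) (hc.mul_right q)

theorem MvNEquiv.add (he : IsProjIn M e) (he' : IsProjIn M e') (hf : IsProjIn M f)
    (hf' : IsProjIn M f') (hee' : e * e' = 0) (hff' : f * f' = 0) (h : MvNEquiv M e f)
    (h' : MvNEquiv M e' f') : MvNEquiv M (e + e') (f + f') := by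
  have hsum (a b : H →L[ℂ] H) : HasStrongSum (fun i => cond i a b) (a + b) := fun ξ => by
    simpa using hasSum_fintype fun i : Bool => (cond i a b) ξ
  refine .of_hasStrongSum (p := fun i => cond i e e') (q := fun i => cond i f f')
    ?_ ?_ ?_ ?_ ?_ (hsum e e') (hsum f f')
  · exact Bool.forall_bool.2 ⟨he', he⟩
  · exact Bool.forall_bool.2 ⟨hf', hf⟩
  · rintro (_ | _) (_ | _) hij <;>
      first | exact absurd rfl hij | exact hee' | exact (he.mul_eq_zero_comm he').1 hee'
  · rintro (_ | _) (_ | _) hij <;>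
      first | exact absurd rfl hij | exact hff' | exact (hf.mul_eq_zero_comm hf').1 hff'
  · exact Bool.forall_bool.2 ⟨h', h⟩

theorem SubEquiv.add (he : IsProjIn M e) (he' : IsProjIn M e') (hf : IsProjIn M f)
    (hf' : IsProjIn M f') (hee' : e * e' = 0) (hff' : f * f' = 0) (h : SubEquiv M e f)
    (h' : SubEquiv M e' f') : SubEquiv M (e + e') (f + f') := by
  obtain ⟨r, hr, her, hrf⟩ := h
  obtain ⟨r', hr', her', hrf'⟩ := h'
  have hrr' := hrf.mul_eq_zero hrf' hff'
  refine ⟨r + r', hr.add hr' hrr', .add he he' hr hr' hee' hrr' her her',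
    (hrf.trans (hf.projLE_add hf' hff')).add (hrf'.trans ?_)⟩
  rw [add_comm]
  exact hf'.projLE_add hf ((hf.mul_eq_zero_comm hf').1 hff')

theorem SubEquiv.of_central {z p q : H →L[ℂ] H} (hz : IsCentralProj M z) (hp : IsProjIn M p)
    (hq : IsProjIn M q) (h : SubEquiv M (z * p) (z * q))
    (h' : SubEquiv M ((1 - z) * p) ((1 - z) * q)) : SubEquiv M p q := by
  have horth {e : H →L[ℂ] H} (he : IsProjIn M e) : z * e * ((1 - z) * e) = 0 :=
    (hz.mul_projLE_left he).mul_eq_zero (hz.one_sub.mul_projLE_left he)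
      (by rw [mul_sub, mul_one, hz.isProjIn.mul_self, sub_self])
  rw [← mul_add_one_sub_mul z p, ← mul_add_one_sub_mul z q]
  exact .add (hz.mul_isProjIn hp) (hz.one_sub.mul_isProjIn hp) (hz.mul_isProjIn hq)
    (hz.one_sub.mul_isProjIn hq) (horth hp) (horth hq) h h'

end SumsOfEquivalences

section SchroederBernstein

variable {M : VonNeumannAlgebra H} {p q r d : H →L[ℂ] H}

theorem exists_orthogonal_copies (hp : IsProjIn M p) (hpr : MvNEquiv M p r) (hrp : ProjLE r p)
    (hd : IsProjIn M d) (hdp : ProjLE d p) (hdr : d * r = 0) :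
    ∃ f : ℕ → H →L[ℂ] H, f 0 = d ∧ (∀ n, IsProjIn M (f n)) ∧ (∀ n, ProjLE (f n) p) ∧
      (∀ n, MvNEquiv M (f n) (f (n + 1))) ∧ Pairwise fun m n => f m * f n = 0 := by
  obtain ⟨v, hv, hvp, hvr⟩ := hpr
  rw [← star_eq_adjoint] at hvp hvr
  have hrv : r * v = v := by
    rw [← hvr, mul_assoc, hvp, mul_eq_self_of_star_mul_self hvp hp.mul_self]
  have hpv : p * v = v := by rw [← hrv, ← mul_assoc, hrp.2]
  have hdv : d * v = 0 := by rw [← hrv, ← mul_assoc, hdr, zero_mul]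
  let f (n : ℕ) : H →L[ℂ] H := (fun a => v * a * star v)^[n] d
  have hsucc (n : ℕ) : f (n + 1) = v * f n * star v := Function.iterate_succ_apply' _ n d
  have hf (n : ℕ) : IsProjIn M (f n) ∧ ProjLE (f n) p := by
    induction n with
    | zero => exact ⟨hd, hdp⟩
    | succ n ih =>
      have hn := ih.1.conj hv hvp ih.2
      rw [hsucc]
      exact ⟨hn, (hn.projLE_iff hp).2 (by rw [← mul_assoc, ← mul_assoc, hpv])⟩
  have horth (m k : ℕ) : f m * f (m + k + 1) = 0 := by
    induction m with
    | zero => rw [hsucc, ← mul_assoc, ← mul_assoc, show f 0 = d from rfl, hdv, zero_mul, zero_mul]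
    | succ m ih =>
      rw [show m + 1 + k + 1 = m + k + 1 + 1 by omega, hsucc, hsucc (m + k + 1)]
      calc v * f m * star v * (v * f (m + k + 1) * star v)
          = v * (f m * (star v * v) * f (m + k + 1)) * star v := by simp only [mul_assoc]
        _ = 0 := by rw [hvp, (hf m).2.1, ih, mul_zero, zero_mul]
  refine ⟨f, rfl, fun n => (hf n).1, fun n => (hf n).2,
    fun n => hsucc n ▸ .conj hv hvp (hf n).1 (hf n).2, fun m n hmn => ?_⟩
  obtain hmn | hmn := hmn.lt_or_gt <;> obtain ⟨k, rfl⟩ := Nat.exists_eq_add_of_lt hmn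
  · exact horth m k
  · exact ((hf _).1.mul_eq_zero_comm (hf _).1).1 (horth n k)

theorem MvNEquiv.of_projLE_of_projLE (hp : IsProjIn M p) (hq : IsProjIn M q)
    (hpr : MvNEquiv M p r) (hrq : ProjLE r q) (hqp : ProjLE q p) : MvNEquiv M p q := by
  have hdr : (p - q) * r = 0 := by rw [sub_mul, hrq.2, (hrq.trans hqp).2, sub_self]
  obtain ⟨f, hf0, hf, hfp, hff, hfo⟩ := exists_orthogonal_copies hp hpr (hrq.trans hqp)
    (hp.sub hq hqp) (hp.projLE_self.sub hqp) hdr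
  obtain ⟨e, he⟩ := exists_hasStrongSum_of_isProjIn hf hfo
  have hfo' : Pairwise fun m n => f (m + 1) * f (n + 1) = 0 :=
    fun m n hmn => hfo (by simpa using hmn)
  obtain ⟨e', he'⟩ := exists_hasStrongSum_of_isProjIn (fun n => hf (n + 1)) hfo'
  have hee' : e = p - q + e' := he.unique fun ξ => by
    simpa only [hf0, _root_.add_apply] using HasSum.zero_add (f := fun n => f n ξ) (he' ξ)
  have hE := he.isProjIn hf hfo
  have hE' := he'.isProjIn (fun n => hf (n + 1)) hfo'
  have hep : ProjLE e p := he.projLE_of_forall hfp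
  have he'e : ProjLE e' e := he'.projLE_of_forall fun n => he.projLE hf hfo (n + 1)
  have horth : (p - e) * e = 0 := hep.sub_mul_self hE.mul_self
  have horth' : (p - e) * e' = 0 := by rw [← he'e.2, ← mul_assoc, horth, zero_mul]
  have hsum := MvNEquiv.add (hp.sub hE hep) hE (hp.sub hE hep) hE' horth horth'
    (.refl (hp.sub hE hep)) (.of_hasStrongSum hf (fun n => hf (n + 1)) hfo hfo' hff he he')
  rwa [sub_add_cancel, show p - e + e' = q by rw [hee']; abel] at hsum

theorem SubEquiv.antisymm (hp : IsProjIn M p) (hq : IsProjIn M q) (hpq : SubEquiv M p q)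
    (hqp : SubEquiv M q p) : MvNEquiv M p q := by
  obtain ⟨r, hr, hpr, hrq⟩ := hpq
  obtain ⟨s, hs, hqs, hsp⟩ := hqp
  obtain ⟨t, -, hts, hrt, -⟩ := hqs.exists_projLE hq hs hr hrq
  have hps : MvNEquiv M p s := .of_projLE_of_projLE hp hs (hpr.trans hp hr hrt) hts hsp
  exact hps.trans hp hs hqs.symm

end SchroederBernstein

section Exhaustion

variable {M : VonNeumannAlgebra H} {p q e x : H →L[ℂ] H}

theorem exists_maximal_pairwise_family {α : Type*} {P : α → Prop} {R : α → α → Prop}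
    (hR : ∀ a b, P a → P b → R a b → R b a) :
    ∃ S : Set α, (∀ a ∈ S, P a) ∧ S.Pairwise R ∧ ∀ a, P a → (∀ b ∈ S, R b a) → a ∈ S := by
  obtain ⟨S, hS⟩ := zorn_subset {S : Set α | (∀ a ∈ S, P a) ∧ S.Pairwise R} fun c hc hchain =>
    ⟨⋃₀ c, ⟨fun a ⟨s, hs, ha⟩ => (hc hs).1 a ha,
      (Set.pairwise_sUnion hchain.directedOn).2 fun s hs => (hc hs).2⟩,
      fun s hs => Set.subset_sUnion_of_mem hs⟩
  refine ⟨S, hS.prop.1, hS.prop.2, fun a ha hb => ?_⟩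
  have hins : insert a S ∈ {S : Set α | (∀ a ∈ S, P a) ∧ S.Pairwise R} :=
    ⟨Set.forall_mem_insert.2 ⟨ha, hS.prop.1⟩, hS.prop.2.insert fun b hbS _ =>
      ⟨hR b a (hS.prop.1 b hbS) ha (hb b hbS), hb b hbS⟩⟩
  exact hS.le_of_ge hins (Set.subset_insert a S) (Set.mem_insert a S)

theorem ProjLE.eq_zero_of_projLE_sub {P : H →L[ℂ] H} (hP : IsProjIn M P) (hPe : ProjLE P e)
    (hpP : ProjLE p P) (hp : ProjLE p (e - P)) : p = 0 := by
  rw [← hp.1, ← hpP.1, mul_assoc, hPe.self_mul_sub hP.mul_self, mul_zero]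

theorem exists_maximal_orthogonal_family (he : IsProjIn M e) (Q : (H →L[ℂ] H) → Prop) :
    ∃ (I : Type u) (p : I → H →L[ℂ] H) (P : H →L[ℂ] H),
      (∀ i, IsProjIn M (p i) ∧ p i ≠ 0 ∧ ProjLE (p i) e ∧ Q (p i)) ∧
      (Pairwise fun i j => p i * p j = 0) ∧ HasStrongSum p P ∧
      ∀ q, IsProjIn M q → ProjLE q (e - P) → Q q → q = 0 := by
  obtain ⟨S, hS, hSo, hSmax⟩ := exists_maximal_pairwise_family
    (P := fun p => IsProjIn M p ∧ p ≠ 0 ∧ ProjLE p e ∧ Q p) (R := fun p q => p * q = 0)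
    fun p q hp hq => (hp.1.mul_eq_zero_comm hq.1).1
  have horth : Pairwise fun i j : S => (i : H →L[ℂ] H) * j = 0 := fun i j hij =>
    hSo i.2 j.2 (Subtype.coe_injective.ne hij)
  have hproj (i : S) : IsProjIn M (i : H →L[ℂ] H) := (hS i i.2).1
  obtain ⟨P, hP⟩ := exists_hasStrongSum_of_isProjIn hproj horth
  have hPproj := hP.isProjIn hproj horth
  have hPe : ProjLE P e := hP.projLE_of_forall fun i => (hS i i.2).2.2.1
  refine ⟨S, Subtype.val, P, fun i => hS i i.2, horth, hP, fun q hq hqeP hQ => ?_⟩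
  by_contra hq0
  have hqe : ProjLE q e := hqeP.trans (he.projLE_self.sub hPe)
  have hqS : q ∈ S := hSmax q ⟨hq, hq0, hqe, hQ⟩ fun b hb =>
    (hP.projLE hproj horth ⟨b, hb⟩).mul_eq_zero hqeP (hPe.self_mul_sub hPproj.mul_self)
  exact hq0 (ProjLE.eq_zero_of_projLE_sub hPproj hPe (hP.projLE hproj horth ⟨q, hqS⟩) hqeP)

end Exhaustion

section Comparison

variable {M : VonNeumannAlgebra H} {p q e x : H →L[ℂ] H}

theorem exists_mvNEquiv_of_mul_mul_ne_zero (hp : IsProjIn M p) (hq : IsProjIn M q) (hx : x ∈ M)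
    (h : q * (x * p) ≠ 0) :
    ∃ e f, IsProjIn M e ∧ IsProjIn M f ∧ e ≠ 0 ∧ ProjLE e p ∧ ProjLE f q ∧ MvNEquiv M e f := by
  have hy : q * (x * p) ∈ M := mul_mem hq.mem (mul_mem hx hp.mem)
  refine ⟨rangeProj (star (q * (x * p))), rangeProj (q * (x * p)),
    isProjIn_rangeProj (star_mem hy), isProjIn_rangeProj hy, ?_,
    rangeProj_projLE hp.isStarProjection_s11 ?_, rangeProj_projLE hq.isStarProjection_s11 ?_,
    mvNEquiv_rangeProj_star hy⟩
  · rwa [Ne, rangeProj_eq_zero_iff, star_eq_zero]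
  · rw [← mul_assoc, star_mul, hp.star_eq, ← mul_assoc, hp.mul_self]
  · rw [← mul_assoc, hq.mul_self]

theorem exists_maximal_mvNEquiv (hp : IsProjIn M p) (hq : IsProjIn M q) :
    ∃ P Q, IsProjIn M P ∧ IsProjIn M Q ∧ ProjLE P p ∧ ProjLE Q q ∧ MvNEquiv M P Q ∧
      ∀ x ∈ M, (q - Q) * (x * (p - P)) = 0 := by
  obtain ⟨S, hS, hSo, hSmax⟩ := exists_maximal_pairwise_family
    (P := fun a : (H →L[ℂ] H) × (H →L[ℂ] H) => IsProjIn M a.1 ∧ IsProjIn M a.2 ∧ a.1 ≠ 0 ∧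
      ProjLE a.1 p ∧ ProjLE a.2 q ∧ MvNEquiv M a.1 a.2)
    (R := fun a b => a.1 * b.1 = 0 ∧ a.2 * b.2 = 0)
    fun a b ha hb h => ⟨(ha.1.mul_eq_zero_comm hb.1).1 h.1, (ha.2.1.mul_eq_zero_comm hb.2.1).1 h.2⟩
  have horth (i j : S) (hij : i ≠ j) := hSo i.2 j.2 (Subtype.coe_injective.ne hij)
  have hproj₁ (i : S) := (hS i i.2).1
  have hproj₂ (i : S) := (hS i i.2).2.1
  have horth₁ : Pairwise fun i j : S => i.1.1 * j.1.1 = 0 := fun i j hij => (horth i j hij).1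
  have horth₂ : Pairwise fun i j : S => i.1.2 * j.1.2 = 0 := fun i j hij => (horth i j hij).2
  obtain ⟨P, hP⟩ := exists_hasStrongSum_of_isProjIn hproj₁ horth₁
  obtain ⟨Q, hQ⟩ := exists_hasStrongSum_of_isProjIn hproj₂ horth₂
  have hPproj := hP.isProjIn hproj₁ horth₁
  have hQproj := hQ.isProjIn hproj₂ horth₂
  have hPp : ProjLE P p := hP.projLE_of_forall fun i => (hS i i.2).2.2.2.1
  have hQq : ProjLE Q q := hQ.projLE_of_forall fun i => (hS i i.2).2.2.2.2.1
  refine ⟨P, Q, hPproj, hQproj, hPp, hQq, .of_hasStrongSum hproj₁ hproj₂ horth₁ horth₂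
    (fun i => (hS i i.2).2.2.2.2.2) hP hQ, fun x hx => ?_⟩
  by_contra hne
  obtain ⟨e, f, he, hf, he0, hep, hfq, hef⟩ :=
    exists_mvNEquiv_of_mul_mul_ne_zero (hp.sub hPproj hPp) (hq.sub hQproj hQq) hx hne
  have hmem : (e, f) ∈ S := hSmax (e, f) ⟨he, hf, he0, hep.trans (hp.projLE_self.sub hPp),
    hfq.trans (hq.projLE_self.sub hQq), hef⟩ fun b hb =>
      ⟨(hP.projLE hproj₁ horth₁ ⟨b, hb⟩).mul_eq_zero hep (hPp.self_mul_sub hPproj.mul_self),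
        (hQ.projLE hproj₂ horth₂ ⟨b, hb⟩).mul_eq_zero hfq (hQq.self_mul_sub hQproj.mul_self)⟩
  exact he0 (ProjLE.eq_zero_of_projLE_sub hPproj hPp (hP.projLE hproj₁ horth₁ ⟨(e, f), hmem⟩) hep)

theorem exists_isCentralProj_subEquiv (hp : IsProjIn M p) (hq : IsProjIn M q) :
    ∃ z, IsCentralProj M z ∧ SubEquiv M (z * p) (z * q) ∧
      SubEquiv M ((1 - z) * q) ((1 - z) * p) := by
  obtain ⟨P, Q, hP, hQ, hPp, hQq, hPQ, hzero⟩ := exists_maximal_mvNEquiv hp hq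
  have hc := isCentralProj_centralSupport (hp.sub hP hPp).mem
  have hcp := centralSupport_mul_self M (p - P)
  have hcq := mul_centralSupport_eq_zero hzero
  set c := centralSupport M (p - P)
  have hzp : (1 - c) * p = (1 - c) * P := by
    rw [← sub_eq_zero, ← mul_sub, sub_mul, one_mul, hcp, sub_self]
  have hzq : c * q = c * Q := by
    rw [← sub_eq_zero, ← mul_sub, hc.2 _ (sub_mem hq.mem hQ.mem), hcq]
  refine ⟨1 - c, hc.one_sub, hzp ▸ ?_, ?_⟩
  · exact ⟨_, hc.one_sub.mul_isProjIn hQ, hPQ.central_mul hc.one_sub, hc.one_sub.mul_mono hQ hq hQq⟩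
  · rw [sub_sub_cancel, hzq]
    exact ⟨_, hc.mul_isProjIn hP, hPQ.symm.central_mul hc, hc.mul_mono hP hp hPp⟩

end Comparison

section Finite

variable {M : VonNeumannAlgebra H} {p q e f g h z : H →L[ℂ] H}

theorem FiniteProj.mvNEquiv_central_mul_sub (hfin : FiniteProj M q) (hq : IsProjIn M q)
    (he : IsProjIn M e) (hf : IsProjIn M f) (heq : ProjLE e q) (hfq : ProjLE f q)
    (hef : MvNEquiv M e f) (hz : IsCentralProj M z)
    (h : SubEquiv M (z * (q - e)) (z * (q - f))) :
    MvNEquiv M (z * (q - e)) (z * (q - f)) := by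
  obtain ⟨s, hs, hes, hsf⟩ := h
  have hqe := hq.sub he heq
  have hqf := hq.sub hf hfq
  have hsz : ProjLE s z := hsf.trans (hz.mul_projLE_left hqf)
  have hezs : z * e * (z * (q - e)) = 0 := by
    rw [hz.mul_mul_mul he.mem, heq.self_mul_sub he.mul_self, mul_zero]
  have hfzs : z * f * s = 0 := (hz.mul_projLE_right hf).mul_eq_zero
    (hsf.trans (hz.mul_projLE_right hqf)) (hfq.self_mul_sub hf.mul_self)
  have hfs : ProjLE (z * f + s) z := (hz.mul_projLE_left hf).add hsz
  have hqz : z * e + z * (q - e) = z * q := by rw [← mul_add, add_sub_cancel]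
  have hcut : MvNEquiv M (z * q) (z * f + s) := hqz ▸ .add (hz.mul_isProjIn he)
    (hz.mul_isProjIn hqe) (hz.mul_isProjIn hf) hs hezs hfzs (hef.central_mul hz) hes
  have hfsP := (hz.mul_isProjIn hf).add hs hfzs
  have hrest := hz.one_sub.mul_isProjIn hq
  have horth {r : H →L[ℂ] H} (hr : ProjLE r z) : r * ((1 - z) * q) = 0 :=
    hr.mul_eq_zero (hz.one_sub.mul_projLE_left hq)
      (by rw [mul_sub, mul_one, hz.1.mul_self, sub_self])
  have hwhole : MvNEquiv M q (z * f + s + (1 - z) * q) := by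
    simpa only [mul_add_one_sub_mul] using
      hcut.add (hz.mul_isProjIn hq) hrest hfsP hrest (horth (hz.mul_projLE_left hq)) (horth hfs)
        (.refl hrest)
  have hle : ProjLE (z * f + s + (1 - z) * q) q :=
    (((hz.mul_projLE_right hf).trans hfq).add
      ((hsf.trans (hz.mul_projLE_right hqf)).trans (hq.projLE_self.sub hfq))).add
      (hz.one_sub.mul_projLE_right hq)
  have hs_eq : s = z * (q - f) := by
    have hfill := hfin _ (hfsP.add hrest (horth hfs)) hle hwhole
    calc s = z * f + s + (1 - z) * q - z * f - (1 - z) * q := by abel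
      _ = z * (q - f) := by rw [hfill]; noncomm_ring
  rwa [hs_eq] at hes

theorem FiniteProj.mvNEquiv_sub (hfin : FiniteProj M q) (hq : IsProjIn M q) (he : IsProjIn M e)
    (hf : IsProjIn M f) (heq : ProjLE e q) (hfq : ProjLE f q) (hef : MvNEquiv M e f) :
    MvNEquiv M (q - e) (q - f) := by
  have hqe := hq.sub he heq
  have hqf := hq.sub hf hfq
  obtain ⟨z, hz, h, h'⟩ := exists_isCentralProj_subEquiv hqe hqf
  have h₁ := hfin.mvNEquiv_central_mul_sub hq he hf heq hfq hef hz h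
  have h₂ := hfin.mvNEquiv_central_mul_sub hq hf he hfq heq hef.symm hz.one_sub h'
  exact SubEquiv.antisymm hqe hqf
    (.of_central hz hqe hqf h (h₂.symm.subEquiv (hz.one_sub.mul_isProjIn hqf)))
    (.of_central hz hqf hqe (h₁.symm.subEquiv (hz.mul_isProjIn hqe)) h')

theorem SubEquiv.sub_of_finiteProj (hfin : FiniteProj M q) (hq : IsProjIn M q) (hp : IsProjIn M p)
    (hg : IsProjIn M g) (hh : IsProjIn M h) (hgp : ProjLE g p) (hhq : ProjLE h q)
    (hgh : MvNEquiv M g h) (hpq : SubEquiv M p q) : SubEquiv M (p - g) (q - h) := by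
  obtain ⟨k, hk, hpk, hkq⟩ := hpq
  obtain ⟨s, hs, hsk, hgs, hsub⟩ := hpk.exists_projLE hp hk hg hgp
  have hsq := hsk.trans hkq
  have hle : ProjLE (k - s) (q - s) := by
    constructor <;> simp only [sub_mul, mul_sub, hkq.1, hkq.2, hsk.1, hsk.2, hsq.1, hsq.2,
      hs.mul_self] <;> abel
  have hcancel := hfin.mvNEquiv_sub hq hs hh hsq hhq (hgs.symm.trans hs hg hgh)
  exact (hsub.subEquiv (hk.sub hs hsk)).trans (hp.sub hg hgp) (hk.sub hs hsk) (hq.sub hh hhq)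
    ((hle.subEquiv (hk.sub hs hsk)).trans (hk.sub hs hsk) (hq.sub hs hsq) (hq.sub hh hhq)
      (hcancel.subEquiv (hq.sub hh hhq)))

end Finite

section Monotone

variable {M : VonNeumannAlgebra H} {p q : H →L[ℂ] H} {g : ℕ → H →L[ℂ] H}

theorem ProjLE.monotone_nat (hg : ∀ n, IsProjIn M (g n)) (hmono : ∀ n, ProjLE (g n) (g (n + 1)))
    {m n : ℕ} (hmn : m ≤ n) : ProjLE (g m) (g n) := by
  induction n, hmn using Nat.le_induction with
  | base => exact (hg m).projLE_self
  | succ n _ ih => exact ih.trans (hmono n)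

theorem pairwise_sub_mul_sub_eq_zero (hg : ∀ n, IsProjIn M (g n))
    (hmono : ∀ n, ProjLE (g n) (g (n + 1))) :
    Pairwise fun m n => (g (m + 1) - g m) * (g (n + 1) - g n) = 0 := by
  have hlt {m n : ℕ} (hmn : m < n) : (g (m + 1) - g m) * (g (n + 1) - g n) = 0 :=
    ((hg _).projLE_self.sub (hmono m) |>.trans (.monotone_nat hg hmono hmn)).mul_eq_zero
      ((hg _).sub (hg n) (hmono n)).projLE_self ((hmono n).self_mul_sub (hg n).mul_self)
  have hd (n : ℕ) := (hg _).sub (hg n) (hmono n)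
  intro m n hmn
  rcases hmn.lt_or_gt with h | h
  · exact hlt h
  · exact ((hd n).mul_eq_zero_comm (hd m)).1 (hlt h)

theorem hasStrongSum_sub_of_forall_mul_eq_zero (hp : IsProjIn M p) (hg : ∀ n, IsProjIn M (g n))
    (hg0 : g 0 = 0) (hmono : ∀ n, ProjLE (g n) (g (n + 1))) (hgp : ∀ n, ProjLE (g n) p)
    (hsup : ∀ y, (∀ n, y * g n = 0) → y * p = 0) :
    HasStrongSum (fun n => g (n + 1) - g n) p := by
  have hd (n : ℕ) := (hg _).sub (hg n) (hmono n)
  have hdo := pairwise_sub_mul_sub_eq_zero hg hmono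
  obtain ⟨P, hP⟩ := exists_hasStrongSum_of_isProjIn hd hdo
  have hgP (n : ℕ) : ProjLE (g n) P := by
    induction n with
    | zero => exact hg0 ▸ .zero P
    | succ n ih => simpa using ih.add (hP.projLE hd hdo n)
  have hpP : ProjLE p P := by
    rw [hp.projLE_iff (hP.isProjIn hd hdo), eq_comm, ← sub_eq_zero, ← one_sub_mul]
    exact hsup _ fun n => by rw [one_sub_mul, (hgP n).2, sub_self]
  rwa [hpP.antisymm (hP.projLE_of_forall fun n => (hgp _).sub (hgp n))]

theorem FiniteProj.subEquiv_of_monotone (hfin : FiniteProj M q) (hq : IsProjIn M q)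
    (hp : IsProjIn M p) (hg : ∀ n, IsProjIn M (g n)) (hg0 : g 0 = 0)
    (hmono : ∀ n, ProjLE (g n) (g (n + 1))) (hgp : ∀ n, ProjLE (g n) p)
    (hsup : ∀ y, (∀ n, y * g n = 0) → y * p = 0) (hgq : ∀ n, SubEquiv M (g n) q) :
    SubEquiv M p q := by
  have hstep (n : ℕ) (h : {h // IsProjIn M h ∧ ProjLE h q ∧ MvNEquiv M (g n) h}) :
      ∃ h' : {h // IsProjIn M h ∧ ProjLE h q ∧ MvNEquiv M (g (n + 1)) h},
        ProjLE h.1 h'.1 ∧ MvNEquiv M (g (n + 1) - g n) (h'.1 - h.1) := by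
    obtain ⟨h, hh, hhq, hgh⟩ := h
    obtain ⟨t, ht, hgt, htq⟩ :=
      (hgq (n + 1)).sub_of_finiteProj hfin hq (hg _) (hg n) hh (hmono n) hhq hgh
    have hht : h * t = 0 := hh.projLE_self.mul_eq_zero htq (hhq.self_mul_sub hh.mul_self)
    have hgd : g n * (g (n + 1) - g n) = 0 := (hmono n).self_mul_sub (hg n).mul_self
    refine ⟨⟨h + t, hh.add ht hht, hhq.add (htq.trans (hq.projLE_self.sub hhq)), ?_⟩,
      hh.projLE_add ht hht, by simpa using hgt⟩
    simpa using hgh.add (hg n) ((hg _).sub (hg n) (hmono n)) hh ht hgd hht hgt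
  choose next hnext using hstep
  let h (n : ℕ) : {h // IsProjIn M h ∧ ProjLE h q ∧ MvNEquiv M (g n) h} :=
    Nat.rec ⟨0, .zero M, .zero q, by rw [hg0]; exact .refl (.zero M)⟩ next n
  have hh (n : ℕ) := (h n).2.1
  have hhmono (n : ℕ) : ProjLE (h n).1 (h (n + 1)).1 := (hnext n (h n)).1
  have hgd (n : ℕ) := (hg _).sub (hg n) (hmono n)
  have hhd (n : ℕ) := (hh (n + 1)).sub (hh n) (hhmono n)
  have hho := pairwise_sub_mul_sub_eq_zero hh hhmono
  obtain ⟨Q, hQ⟩ := exists_hasStrongSum_of_isProjIn hhd hho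
  exact ⟨Q, hQ.isProjIn hhd hho, .of_hasStrongSum hgd hhd (pairwise_sub_mul_sub_eq_zero hg hmono)
    hho (fun n => (hnext n (h n)).2)
    (hasStrongSum_sub_of_forall_mul_eq_zero hp hg hg0 hmono hgp hsup) hQ,
    hQ.projLE_of_forall fun n => (h (n + 1)).2.2.1.sub (h n).2.2.1⟩

end Monotone

section SigmaFinite

variable {M : VonNeumannAlgebra H} {e p q x : H →L[ℂ] H}

/-- The cyclic projection of `ξ`: the orthogonal projection onto the closed subspace generated by
`ξ` under the commutant. -/
def cyclicProj (M : VonNeumannAlgebra H) (ξ : H) : H →L[ℂ] H :=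
  spanProj {η | ∃ u ∈ M.commutant, u ξ = η}

theorem isProjIn_cyclicProj (M : VonNeumannAlgebra H) (ξ : H) : IsProjIn M (cyclicProj M ξ) :=
  isProjIn_spanProj fun u hu _ ⟨w, hw, hwξ⟩ => ⟨u * w, mul_mem hu hw, hwξ ▸ rfl⟩

theorem cyclicProj_apply_self (M : VonNeumannAlgebra H) (ξ : H) : cyclicProj M ξ ξ = ξ :=
  spanProj_apply_of_mem ⟨1, one_mem _, rfl⟩

theorem mul_cyclicProj_eq_zero {ξ : H} (hx : x ∈ M) (hxξ : x ξ = 0) : x * cyclicProj M ξ = 0 :=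
  mul_spanProj_eq_zero fun _ ⟨u, hu, huξ⟩ => by
    rw [← huξ, ← apply_comm_of_mem_commutant hx hu, hxξ, map_zero]

/-- Some countable set of vectors is separating for `M` on the range of `e`: an element of `M`
vanishing on this set annihilates `e`. For projections this characterizes σ-finiteness, see
`sigmaFiniteProj_iff`. -/
def HasCountableSeparatingSet (M : VonNeumannAlgebra H) (e : H →L[ℂ] H) : Prop :=
  ∃ C : Set H, C.Countable ∧ ∀ x ∈ M, (∀ ξ ∈ C, x ξ = 0) → x * e = 0

theorem HasCountableSeparatingSet.of_hasStrongSum {ι : Type*} [Countable ι] {p : ι → H →L[ℂ] H}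
    {P : H →L[ℂ] H} (hp : ∀ i, HasCountableSeparatingSet M (p i)) (hP : HasStrongSum p P) :
    HasCountableSeparatingSet M P := by
  choose C hC hsep using hp
  exact ⟨⋃ i, C i, Set.countable_iUnion hC, fun x hx hxC => (hP.mul_left x).eq_zero fun i =>
    hsep i x hx fun ξ hξ => hxC ξ (Set.mem_iUnion_of_mem i hξ)⟩

theorem HasCountableSeparatingSet.of_subEquiv (hq : HasCountableSeparatingSet M q)
    (hpq : SubEquiv M p q) : HasCountableSeparatingSet M p := by
  obtain ⟨r, hr, ⟨v, hv, hvp, hvr⟩, hrq⟩ := hpq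
  rw [← star_eq_adjoint] at hvp hvr
  obtain ⟨C, hC, hsep⟩ := hq
  refine ⟨(fun ξ => star v ξ) '' C, hC.image _, fun x hx hxC => ?_⟩
  have hxv : x * star v * q = 0 :=
    hsep (x * star v) (mul_mem hx (star_mem hv)) fun ξ hξ => hxC _ ⟨ξ, hξ, rfl⟩
  have hvq : star v * q = star v := by
    have hvr' : star v * r = star v := mul_eq_self_of_star_mul_self (by rwa [star_star]) hr.mul_self
    rw [← hvr', mul_assoc, hrq.1]
  rw [mul_assoc, hvq] at hxv
  rw [← hvp, ← mul_assoc, hxv, zero_mul]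

theorem HasCountableSeparatingSet.sigmaFiniteProj (he : HasCountableSeparatingSet M e) :
    SigmaFiniteProj M e := by
  intro S hS horth
  obtain ⟨C, hC, hsep⟩ := he
  obtain ⟨P, hP⟩ := exists_hasStrongSum_of_isProjIn (fun q : S => (hS q q.2).1)
    fun a b hab => horth a.2 b.2 (Subtype.coe_injective.ne hab)
  have hcover : (Set.univ : Set S) ⊆ ⋃ ξ ∈ C, Function.support fun q : S => (q : H →L[ℂ] H) ξ := by
    intro q _
    by_contra hq
    simp only [Set.mem_iUnion, Function.mem_support, not_exists, not_not] at hq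
    obtain ⟨hproj, hq0, hqe⟩ := hS q q.2
    exact hq0 (hqe.1.symm.trans (hsep q hproj.mem hq))
  exact Set.countable_coe_iff.1 <| Set.countable_univ_iff.1 <| .mono hcover <|
    hC.biUnion fun ξ _ => (hP ξ).summable.countable_support

theorem exists_hasCountableSeparatingSet (he : IsProjIn M e) (he0 : e ≠ 0) :
    ∃ q, IsProjIn M q ∧ q ≠ 0 ∧ ProjLE q e ∧ HasCountableSeparatingSet M q := by
  obtain ⟨η, hη⟩ : ∃ η, e η ≠ 0 := by
    by_contra! h
    exact he0 (ContinuousLinearMap.ext h)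
  have hcyc := isProjIn_cyclicProj M (e η)
  refine ⟨cyclicProj M (e η), hcyc, fun h => hη ?_, ?_, {e η}, Set.countable_singleton _,
    fun x hx h => mul_cyclicProj_eq_zero hx (h _ rfl)⟩
  · rw [← cyclicProj_apply_self M (e η), h, _root_.zero_apply]
  · have h := mul_cyclicProj_eq_zero (ξ := e η) he.one_sub.mem (by
      rw [← mul_apply_eq_comp, one_sub_mul, he.mul_self, sub_self, _root_.zero_apply])
    rw [one_sub_mul, sub_eq_zero] at h
    exact (hcyc.projLE_iff he).2 h.symm

theorem SigmaFiniteProj.countable {ι : Type*} (hs : SigmaFiniteProj M e) {q : ι → H →L[ℂ] H}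
    (hq : ∀ i, IsProjIn M (q i)) (hq0 : ∀ i, q i ≠ 0) (hqe : ∀ i, ProjLE (q i) e)
    (horth : Pairwise fun i j => q i * q j = 0) : Countable ι := by
  have hinj : Function.Injective q := fun i j hij => by
    by_contra hne
    exact hq0 i (by simpa [← hij, (hq i).mul_self] using horth hne)
  have hrange : (Set.range q).Countable := hs _ (Set.forall_mem_range.2 fun i =>
    ⟨hq i, hq0 i, hqe i⟩) (Pairwise.range_pairwise (r := fun a b => a * b = 0) horth)
  exact Set.countable_univ_iff.1 (Set.countable_of_injective_of_countable_image hinj.injOn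
    (Set.image_univ ▸ hrange))

theorem sigmaFiniteProj_iff (he : IsProjIn M e) :
    SigmaFiniteProj M e ↔ HasCountableSeparatingSet M e := by
  refine ⟨fun h => ?_, HasCountableSeparatingSet.sigmaFiniteProj⟩
  obtain ⟨I, p, P, hp, horth, hP, hmax⟩ :=
    exists_maximal_orthogonal_family he (HasCountableSeparatingSet M)
  have hproj (i : I) := (hp i).1
  have hPe : ProjLE P e := hP.projLE_of_forall fun i => (hp i).2.2.1
  have heP : e - P = 0 := by
    by_contra h0
    obtain ⟨q, hq, hq0, hqe, hsep⟩ :=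
      exists_hasCountableSeparatingSet (he.sub (hP.isProjIn hproj horth) hPe) h0
    exact hq0 (hmax q hq hqe hsep)
  have hsep : HasCountableSeparatingSet M P := by
    have : Countable I := h.countable hproj (fun i => (hp i).2.1) (fun i => (hp i).2.2.1) horth
    exact .of_hasStrongSum (fun i => (hp i).2.2.2) hP
  rwa [sub_eq_zero.1 heP]

namespace SigmaFiniteProj

theorem of_subEquiv (hq : SigmaFiniteProj M q) (hpP : IsProjIn M p) (hqP : IsProjIn M q)
    (h : SubEquiv M p q) : SigmaFiniteProj M p :=
  (sigmaFiniteProj_iff hpP).2 (((sigmaFiniteProj_iff hqP).1 hq).of_subEquiv h)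

theorem of_hasStrongSum {ι : Type*} [Countable ι] {p : ι → H →L[ℂ] H} {P : H →L[ℂ] H}
    (hs : ∀ i, SigmaFiniteProj M (p i)) (hp : ∀ i, IsProjIn M (p i))
    (horth : Pairwise fun i j => p i * p j = 0) (hP : HasStrongSum p P) : SigmaFiniteProj M P :=
  (sigmaFiniteProj_iff (hP.isProjIn hp horth)).2 <|
    .of_hasStrongSum (fun i => (sigmaFiniteProj_iff (hp i)).1 (hs i)) hP

theorem add (hps : SigmaFiniteProj M p) (hqs : SigmaFiniteProj M q) (hp : IsProjIn M p)
    (hq : IsProjIn M q) (hpq : p * q = 0) : SigmaFiniteProj M (p + q) := by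
  obtain ⟨C, hC, hCp⟩ := (sigmaFiniteProj_iff hp).1 hps
  obtain ⟨D, hD, hDq⟩ := (sigmaFiniteProj_iff hq).1 hqs
  refine (sigmaFiniteProj_iff (hp.add hq hpq)).2 ⟨C ∪ D, hC.union hD, fun x hx h => ?_⟩
  rw [mul_add, hCp x hx fun ξ hξ => h ξ (.inl hξ), hDq x hx fun ξ hξ => h ξ (.inr hξ), add_zero]

end SigmaFiniteProj

end SigmaFinite

section InfiniteCase

variable {M : VonNeumannAlgebra H} {p q d e : H →L[ℂ] H}

theorem exists_mul_mul_ne_zero_of_projLE_centralSupport (he0 : e ≠ 0)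
    (hed : ProjLE e (centralSupport M d)) : ∃ x ∈ M, e * (x * d) ≠ 0 := by
  by_contra! h
  exact he0 (hed.1.symm.trans (mul_centralSupport_eq_zero h))

theorem exists_hasStrongSum_subEquiv (he : IsProjIn M e) (hd : IsProjIn M d)
    (hed : ProjLE e (centralSupport M d)) :
    ∃ (I : Type u) (p : I → H →L[ℂ] H), (∀ i, IsProjIn M (p i) ∧ p i ≠ 0 ∧ ProjLE (p i) e ∧
      SubEquiv M (p i) d) ∧ (Pairwise fun i j => p i * p j = 0) ∧ HasStrongSum p e := by
  obtain ⟨I, p, P, hp, horth, hP, hmax⟩ := exists_maximal_orthogonal_family he (SubEquiv M · d)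
  have hPe : ProjLE P e := hP.projLE_of_forall fun i => (hp i).2.2.1
  have hrem := he.sub (hP.isProjIn (fun i => (hp i).1) horth) hPe
  suffices heP : e - P = 0 from ⟨I, p, hp, horth, sub_eq_zero.1 heP ▸ hP⟩
  by_contra h0
  obtain ⟨x, hx, hxne⟩ := exists_mul_mul_ne_zero_of_projLE_centralSupport h0
    ((he.projLE_self.sub hPe).trans hed)
  obtain ⟨f, g, hf, hg, hf0, hfd, hgr, hfg⟩ := exists_mvNEquiv_of_mul_mul_ne_zero hd hrem hx hxne
  exact hfg.ne_zero hf0 (hmax g hg hgr ⟨f, hf, hfg.symm, hfd⟩)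

theorem exists_orthogonal_copies_of_not_finiteProj (hq : IsProjIn M q) (hinf : ¬ FiniteProj M q) :
    ∃ d, IsProjIn M d ∧ d ≠ 0 ∧ ProjLE d q ∧ ∃ f : ℕ → H →L[ℂ] H, (∀ n, IsProjIn M (f n)) ∧
      (∀ n, ProjLE (f n) q) ∧ (∀ n, MvNEquiv M d (f n)) ∧ Pairwise fun m n => f m * f n = 0 := by
  unfold FiniteProj at hinf
  push Not at hinf
  obtain ⟨r, hr, hrq, hqr, hne⟩ := hinf
  have hd := hq.sub hr hrq
  obtain ⟨f, hf0, hf, hfq, hff, hfo⟩ := exists_orthogonal_copies hq hqr hrq hd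
    (hq.projLE_self.sub hrq) (hrq.sub_mul_self hr.mul_self)
  refine ⟨q - r, hd, sub_ne_zero.2 hne.symm, hq.projLE_self.sub hrq, f, hf, hfq, fun n => ?_, hfo⟩
  induction n with
  | zero => rw [hf0]; exact .refl hd
  | succ n ih => exact ih.trans hd (hf n) (hff n)

theorem exists_centralSupport_mul_subEquiv_of_not_finiteProj (hp : IsProjIn M p)
    (hq : IsProjIn M q) (hps : SigmaFiniteProj M p) (hinf : ¬ FiniteProj M q) :
    ∃ d ∈ M, d ≠ 0 ∧ ProjLE d q ∧ SubEquiv M (centralSupport M d * p) q := by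
  obtain ⟨d, hd, hd0, hdq, f, hf, hfq, hdf, hfo⟩ :=
    exists_orthogonal_copies_of_not_finiteProj hq hinf
  refine ⟨d, hd.mem, hd0, hdq, ?_⟩
  have hz := isCentralProj_centralSupport hd.mem
  have he := hz.mul_isProjIn hp
  have hep := hz.mul_projLE_right hp
  obtain ⟨I, e, hek, heo, hesum⟩ := exists_hasStrongSum_subEquiv he hd (hz.mul_projLE_left hp)
  have : Countable I := hps.countable (fun i => (hek i).1) (fun i => (hek i).2.1)
    (fun i => (hek i).2.2.1.trans hep) heo
  obtain ⟨φ, hφ⟩ := Countable.exists_injective_nat I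
  have hφo : Pairwise fun i j => f (φ i) * f (φ j) = 0 := fun i j hij => hfo (hφ.ne hij)
  obtain ⟨Q, hQ⟩ := exists_hasStrongSum_of_isProjIn (fun i => hf (φ i)) hφo
  have hQP := hQ.isProjIn (fun i => hf (φ i)) hφo
  have heQ : SubEquiv M (centralSupport M d * p) Q :=
    .of_hasStrongSum (fun i => (hek i).1) (fun i => hf (φ i)) heo hφo
      (fun i => (hek i).2.2.2.trans (hek i).1 hd (hf _) ((hdf _).subEquiv (hf _))) hesum hQ
  exact heQ.trans he hQP hq ((hQ.projLE_of_forall fun i => hfq (φ i)).subEquiv hQP)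

end InfiniteCase

section FiniteCase

variable {M : VonNeumannAlgebra H} {r y : ℕ → H →L[ℂ] H} {p q : H →L[ℂ] H}

/-- The product `r m * r (m + 1) * ⋯ * r (m + N - 1)` of `N` consecutive terms of `r`. -/
def intervalProd (r : ℕ → H →L[ℂ] H) (m N : ℕ) : H →L[ℂ] H :=
  ((List.range' m N).map r).prod

omit [CompleteSpace H] in
theorem intervalProd_add (r : ℕ → H →L[ℂ] H) (m N K : ℕ) :
    intervalProd r m (N + K) = intervalProd r m N * intervalProd r (m + N) K := by
  simp only [intervalProd, ← List.range'_append_1, List.map_append, List.prod_append]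

omit [CompleteSpace H] in
theorem intervalProd_one (r : ℕ → H →L[ℂ] H) (m : ℕ) : intervalProd r m 1 = r m := by
  simp [intervalProd]

theorem intervalProd_mem (hr : ∀ n, r n ∈ M) (m N : ℕ) : intervalProd r m N ∈ M :=
  list_prod_mem (List.forall_mem_map.2 fun n _ => hr n)

omit [CompleteSpace H] in
theorem norm_intervalProd_apply_le (hr : ∀ n ξ, ‖r n ξ‖ ≤ ‖ξ‖) (m N : ℕ) (ξ : H) :
    ‖intervalProd r m N ξ‖ ≤ ‖ξ‖ := by
  induction N generalizing ξ with
  | zero => simp [intervalProd]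
  | succ N ih =>
    rw [intervalProd_add, intervalProd_one, mul_apply_eq_comp]
    exact (ih _).trans (hr _ _)

omit [CompleteSpace H] in
theorem norm_intervalProd_apply_sub_le (hr : ∀ n ξ, ‖r n ξ‖ ≤ ‖ξ‖) (m N : ℕ) (ξ : H) :
    ‖intervalProd r m N ξ - ξ‖ ≤ ∑ k ∈ Finset.range N, ‖r (k + m) ξ - ξ‖ := by
  induction N with
  | zero => simp [intervalProd]
  | succ N ih =>
    have hsplit : intervalProd r m (N + 1) ξ - ξ =
        (intervalProd r m N ξ - ξ) + intervalProd r m N (r (N + m) ξ - ξ) := by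
      rw [intervalProd_add, intervalProd_one, mul_apply_eq_comp, map_sub, add_comm m]
      abel
    rw [hsplit, Finset.sum_range_succ]
    exact norm_add_le_of_le ih (norm_intervalProd_apply_le hr m N _)

/-- The vectors `ξ` with `intervalProd r m N ξ → ξ` as `m → ∞`, uniformly in `N`. Uniformity is
encoded by the filter `⊤` in the second factor. -/
def tailFixed (r : ℕ → H →L[ℂ] H) : Submodule ℂ H where
  carrier := {ξ | Tendsto (fun k : ℕ × ℕ => intervalProd r k.1 k.2 ξ) (atTop ×ˢ ⊤) (𝓝 ξ)}
  zero_mem' := by simpa only [Set.mem_ofPred_eq, map_zero] using tendsto_const_nhds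
  add_mem' hξ hη := by simpa only [Set.mem_ofPred_eq, map_add] using hξ.add hη
  smul_mem' c ξ hξ := by simpa only [Set.mem_ofPred_eq, map_smul] using hξ.const_smul c

omit [CompleteSpace H] in
theorem mem_tailFixed_iff {ξ : H} : ξ ∈ tailFixed r ↔
    ∀ ε > 0, ∃ m₀, ∀ m N, m₀ ≤ m → ‖intervalProd r m N ξ - ξ‖ < ε := by
  have hbasis := (atTop_basis (α := ℕ)).prod (hasBasis_top (α := ℕ))
  refine (hbasis.tendsto_iff Metric.nhds_basis_ball).trans ?_
  simp [dist_eq_norm]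

omit [CompleteSpace H] in
theorem isClosed_tailFixed (hr : ∀ n ξ, ‖r n ξ‖ ≤ ‖ξ‖) : IsClosed (tailFixed r : Set H) := by
  have hlip (k : ℕ × ℕ) : LipschitzWith 1 (intervalProd r k.1 k.2) :=
    AddMonoidHomClass.lipschitz_of_bound_nnnorm _ 1 fun ξ =>
      (norm_intervalProd_apply_le hr k.1 k.2 ξ).trans_eq (one_mul ‖ξ‖).symm
  exact (LipschitzWith.uniformEquicontinuous _ 1 hlip).equicontinuous.isClosed_setOfPred_tendsto
    continuous_id

theorem apply_mem_tailFixed (hr : ∀ n, r n ∈ M) {u : H →L[ℂ] H} (hu : u ∈ M.commutant) {ξ : H}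
    (hξ : ξ ∈ tailFixed r) : u ξ ∈ tailFixed r :=
  ((u.continuous.tendsto ξ).comp hξ).congr fun k =>
    apply_comm_of_mem_commutant (intervalProd_mem hr k.1 k.2) hu ξ

omit [CompleteSpace H] in
theorem mem_tailFixed_of_summable (hr : ∀ n ξ, ‖r n ξ‖ ≤ ‖ξ‖) {ξ : H}
    (h : Summable fun n => ‖r n ξ - ξ‖) : ξ ∈ tailFixed r := by
  have htail (k : ℕ × ℕ) : ‖intervalProd r k.1 k.2 ξ - ξ‖ ≤ ∑' n, ‖r (n + k.1) ξ - ξ‖ :=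
    (norm_intervalProd_apply_sub_le hr k.1 k.2 ξ).trans <|
      ((summable_nat_add_iff k.1).2 h).sum_le_tsum _ fun _ _ => norm_nonneg _
  exact tendsto_iff_norm_sub_tendsto_zero.2 <| squeeze_zero (fun _ => norm_nonneg _) htail <|
    (tendsto_sum_nat_add fun n => ‖r n ξ - ξ‖).comp tendsto_fst

theorem apply_mem_tailFixed_of_separating (hr : ∀ n, IsProjIn M (r n)) {c : ℕ → H}
    (hc : ∀ k, c k ∈ tailFixed r) (hsep : ∀ x ∈ M, (∀ k, x (c k) = 0) → x * p = 0) (η : H) :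
    p η ∈ tailFixed r := by
  have hG : IsProjIn M (spanProj (tailFixed r : Set H)) :=
    isProjIn_spanProj fun u hu ξ => apply_mem_tailFixed (fun n => (hr n).mem) hu
  have hpη : p η - spanProj (tailFixed r : Set H) (p η) = 0 :=
    DFunLike.congr_fun (hsep _ hG.one_sub.mem fun k =>
      sub_eq_zero.2 (spanProj_apply_of_mem (hc k)).symm) η
  rw [sub_eq_zero.1 hpη]
  exact apply_mem_of_mem_topologicalClosure_span (y := 1)
    (isClosed_tailFixed fun n ξ => (hr n).norm_apply_le ξ) (fun _ => id)
    (Submodule.starProjection_apply_mem _ _)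

theorem exists_tendsto_intervalProd (hr : ∀ n ξ, ‖r n ξ‖ ≤ ‖ξ‖) (hp : ∀ η, p η ∈ tailFixed r)
    (m : ℕ) :
    ∃ y : H →L[ℂ] H, ∀ η, Tendsto (fun N => intervalProd r m N (p η)) atTop (𝓝 (y η)) := by
  have hcauchy (η : H) : CauchySeq fun N => intervalProd r m N (p η) := by
    refine Metric.cauchySeq_iff'.2 fun ε hε => ?_
    obtain ⟨N₀, hN₀⟩ := mem_tailFixed_iff.1 (hp η) ε hε
    refine ⟨N₀, fun N hN => ?_⟩
    obtain ⟨K, rfl⟩ := Nat.exists_eq_add_of_le hN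
    rw [dist_eq_norm, intervalProd_add, mul_apply_eq_comp, ← map_sub]
    exact (norm_intervalProd_apply_le hr m N₀ _).trans_lt (hN₀ _ K (Nat.le_add_left _ _))
  choose f hf using fun η => cauchySeq_tendsto_of_complete (hcauchy η)
  exact ⟨continuousLinearMapOfTendsto (fun N => intervalProd r m N * p) (tendsto_pi_nhds.2 hf), hf⟩

theorem exists_factorization_of_mem_tailFixed (hr : ∀ n, IsProjIn M (r n)) (hpM : IsProjIn M p)
    (hp : ∀ η, p η ∈ tailFixed r) :
    ∃ y : ℕ → H →L[ℂ] H, (∀ m, y m ∈ M) ∧ (∀ m, r m * y (m + 1) = y m) ∧ (∀ m, y m * p = y m) ∧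
      ∀ η, (∀ m, y m η = 0) → p η = 0 := by
  have hcontr (n : ℕ) (ξ : H) : ‖r n ξ‖ ≤ ‖ξ‖ := (hr n).norm_apply_le ξ
  choose y hy using exists_tendsto_intervalProd hcontr hp
  refine ⟨y, fun m => ?_, fun m => ?_, fun m => ?_, fun η hη => ?_⟩
  · refine mem_of_forall_apply_comm fun u hu ξ => tendsto_nhds_unique
      ((u.continuous.tendsto _).comp (hy m ξ)) ((hy m (u ξ)).congr fun N => ?_)
    rw [Function.comp_apply, ← apply_comm_of_mem_commutant hpM.mem hu,
      apply_comm_of_mem_commutant (intervalProd_mem (fun n => (hr n).mem) m N) hu]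
  · ext η
    refine tendsto_nhds_unique ((((r m).continuous.tendsto _).comp (hy (m + 1) η)).congr
      fun N => ?_) ((tendsto_add_atTop_iff_nat 1).2 (hy m η))
    rw [add_comm N, intervalProd_add, intervalProd_one]
    rfl
  · ext η
    refine tendsto_nhds_unique (hy m (p η)) ((hy m η).congr fun N => ?_)
    rw [← mul_apply_eq_comp p p, hpM.mul_self]
  · by_contra hne
    obtain ⟨m, hm⟩ := mem_tailFixed_iff.1 (hp η) (‖p η‖ / 2) (half_pos (norm_pos_iff.2 hne))
    have hle := le_of_tendsto ((hy m η).sub_const (p η)).norm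
      (Eventually.of_forall fun N => (hm m N le_rfl).le)
    rw [hη, zero_sub, norm_neg] at hle
    exact (half_lt_self (norm_pos_iff.2 hne)).not_ge hle

theorem FiniteProj.subEquiv_of_factorization (hfin : FiniteProj M q) (hq : IsProjIn M q)
    (hp : IsProjIn M p) (hr : ∀ n, IsProjIn M (r n)) (hrq : ∀ n, SubEquiv M (r n) q)
    (hy : ∀ m, y m ∈ M) (hry : ∀ m, r m * y (m + 1) = y m) (hyp : ∀ m, y m * p = y m)
    (hy0 : ∀ η, (∀ m, y m η = 0) → p η = 0) : SubEquiv M p q := by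
  let g (n : ℕ) : H →L[ℂ] H := n.casesOn 0 fun m => rangeProj (star (y m))
  have hstar (m : ℕ) : star (y m) ∈ M := star_mem (hy m)
  refine hfin.subEquiv_of_monotone (g := g) hq hp (fun n => ?_) rfl (fun n => ?_) (fun n => ?_)
    (fun x hx => ?_) fun n => ?_
  · cases n with
    | zero => exact .zero M
    | succ m => exact isProjIn_rangeProj (hstar m)
  · cases n with
    | zero => exact .zero _
    | succ m =>
      refine rangeProj_projLE (isStarProjection_rangeProj _) ?_
      rw [← hry m, star_mul, ← mul_assoc, rangeProj_mul_self]
  · cases n with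
    | zero => exact .zero _
    | succ m =>
      refine rangeProj_projLE hp.isStarProjection_s11 ?_
      rw [← star_inj, star_mul, star_star, hp.star_eq, hyp]
  · have hyx (m : ℕ) : y m * star x = 0 := by
      rw [← star_inj, star_mul, star_star, star_zero, ← mul_rangeProj_eq_zero_iff]
      exact hx (m + 1)
    have hpx : p * star x = 0 := ContinuousLinearMap.ext fun η =>
      hy0 _ fun m => DFunLike.congr_fun (hyx m) η
    rw [← star_inj, star_mul, hp.star_eq, hpx, star_zero]
  · cases n with
    | zero => exact (ProjLE.zero q).subEquiv (.zero M)
    | succ m =>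
      have hle : ProjLE (rangeProj (y m)) (r m) := rangeProj_projLE (hr m).isStarProjection_s11 <| by
        rw [← hry m, ← mul_assoc, (hr m).mul_self]
      have hrange := isProjIn_rangeProj (hy m)
      have hgr : SubEquiv M (rangeProj (star (y m))) (r m) :=
        ⟨_, hrange, mvNEquiv_rangeProj_star (hy m), hle⟩
      exact hgr.trans (isProjIn_rangeProj (hstar m)) (hr m) hq (hrq m)

end FiniteCase

section Closure

variable {M : VonNeumannAlgebra H} {p q z : H →L[ℂ] H}

theorem continuous_projSet_apply (M : VonNeumannAlgebra H) (ξ : H) :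
    Continuous fun r : ProjSet M => r.1 ξ :=
  (continuous_apply ξ).comp continuous_induced_dom

/-- Multiplication by a central projection, as a map from the projections of `M` to themselves. -/
def IsCentralProj.mulProj (hz : IsCentralProj M z) (r : ProjSet M) : ProjSet M :=
  ⟨z * r.1, hz.mul_isProjIn r.2⟩

theorem IsCentralProj.continuous_mulProj (hz : IsCentralProj M z) : Continuous hz.mulProj :=
  continuous_induced_rng.2 <| continuous_pi fun ξ =>
    z.continuous.comp (continuous_projSet_apply M ξ)

theorem exists_seq_summable_of_mem_closure {S : Set (ProjSet M)} {p : ProjSet M}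
    (hp : p ∈ closure S) (c : ℕ → H) :
    ∃ r : ℕ → ProjSet M, (∀ n, r n ∈ S) ∧
      ∀ k, Summable fun n => ‖(r n).1 (c k) - p.1 (c k)‖ := by
  have happrox (n : ℕ) : ∃ r ∈ S, ∀ k ≤ n, ‖r.1 (c k) - p.1 (c k)‖ < (1 / 2) ^ n := by
    have hnhds : ∀ᶠ r in 𝓝 p, ∀ k ≤ n, ‖r.1 (c k) - p.1 (c k)‖ < (1 / 2) ^ n := by
      refine (Set.finite_le_nat n).eventually_all.2 fun k _ => ?_
      simpa only [dist_eq_norm] using Metric.tendsto_nhds.1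
        (continuous_projSet_apply M (c k)).continuousAt _ (by positivity)
    obtain ⟨r, hr, hrS⟩ := ((mem_closure_iff_frequently.1 hp).and_eventually hnhds).exists
    exact ⟨r, hr, hrS⟩
  choose r hrS hr using happrox
  refine ⟨r, hrS, fun k => summable_geometric_two.of_norm_bounded_eventually_nat ?_⟩
  filter_upwards [eventually_ge_atTop k] with n hn
  rw [norm_norm]
  exact (hr n k hn).le

theorem FiniteProj.subEquiv_of_mem_closure (hfin : FiniteProj M q) (hq : IsProjIn M q)
    {p : ProjSet M} (hs : SigmaFiniteProj M p.1)
    (hp : p ∈ closure {r : ProjSet M | SubEquiv M r.1 q}) : SubEquiv M p.1 q := by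
  obtain ⟨C, hC, hsep⟩ := (sigmaFiniteProj_iff p.2).1 hs
  obtain ⟨c, hc⟩ := (hC.insert 0).exists_eq_range (Set.insert_nonempty _ _)
  obtain ⟨r, hrq, hr⟩ := exists_seq_summable_of_mem_closure hp fun k => p.1 (c k)
  have hidem (η : H) : p.1 (p.1 η) = p.1 η := DFunLike.congr_fun p.2.mul_self η
  have hfix (k : ℕ) : p.1 (c k) ∈ tailFixed fun n => (r n).1 :=
    mem_tailFixed_of_summable (fun n ξ => (r n).2.norm_apply_le ξ)
      (by simpa only [hidem] using hr k)
  have hsepc (x : H →L[ℂ] H) (hx : x ∈ M) (hxc : ∀ k, x (p.1 (c k)) = 0) : x * p.1 = 0 := by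
    have hxp : x * p.1 * p.1 = 0 := hsep (x * p.1) (mul_mem hx p.2.mem) fun ξ hξ => by
      obtain ⟨k, rfl⟩ : ξ ∈ Set.range c := hc ▸ Set.mem_insert_of_mem 0 hξ
      exact hxc k
    rwa [mul_assoc, p.2.mul_self] at hxp
  obtain ⟨y, hy, hry, hyp, hy0⟩ := exists_factorization_of_mem_tailFixed (fun n => (r n).2) p.2
    (apply_mem_tailFixed_of_separating (fun n => (r n).2) hfix hsepc)
  exact hfin.subEquiv_of_factorization hq p.2 (fun n => (r n).2) hrq hy hry hyp hy0

theorem exists_maximal_isCentralProj_subEquiv (hp : IsProjIn M p) (hq : IsProjIn M q) :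
    ∃ w, IsCentralProj M w ∧ SubEquiv M (w * p) (w * q) ∧
      ∀ z, IsCentralProj M z → ProjLE z (1 - w) → SubEquiv M (z * p) (z * q) → z = 0 := by
  obtain ⟨I, z, w, hz, horth, hw, hmax⟩ := exists_maximal_orthogonal_family (IsProjIn.one M)
    fun z : H →L[ℂ] H => IsCentralProj M z ∧ SubEquiv M (z * p) (z * q)
  exact ⟨w, .of_hasStrongSum hw (fun i => (hz i).2.2.2.1) horth,
    .of_forall_central_mul (fun i => (hz i).2.2.2.1) horth hp hq (fun i => (hz i).2.2.2.2) hw,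
    fun z hz hzw hzpq => hmax z hz.isProjIn hzw ⟨hz, hzpq⟩⟩

theorem subEquiv_of_mem_closure (hq : IsProjIn M q) {p : ProjSet M} (hs : SigmaFiniteProj M p.1)
    (hp : p ∈ closure {r : ProjSet M | SubEquiv M r.1 q}) : SubEquiv M p.1 q := by
  obtain ⟨w, hw, hwpq, hmax⟩ := exists_maximal_isCentralProj_subEquiv p.2 hq
  have hp' := hw.one_sub.mul_isProjIn p.2
  have hq' := hw.one_sub.mul_isProjIn hq
  have hs' : SigmaFiniteProj M ((1 - w) * p.1) :=
    hs.of_subEquiv hp' p.2 ((hw.one_sub.mul_projLE_right p.2).subEquiv hp')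
  refine .of_central hw p.2 hq hwpq ?_
  by_cases hfin : FiniteProj M ((1 - w) * q)
  · exact hfin.subEquiv_of_mem_closure hq' (p := hw.one_sub.mulProj p) hs'
      (map_mem_closure hw.one_sub.continuous_mulProj hp fun r hr => hr.central_mul hw.one_sub hq)
  · exfalso
    obtain ⟨d, hd, hd0, hdq, hdp⟩ :=
      exists_centralSupport_mul_subEquiv_of_not_finiteProj hp' hq' hs' hfin
    obtain ⟨hz, hzd, hzmin⟩ := isCentralSupport_centralSupport hd
    have hzw : centralSupport M d * (1 - w) = centralSupport M d :=
      hzmin _ hw.one_sub (hdq.trans (hw.one_sub.mul_projLE_left hq)).2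
    have hzpq := hdp.central_mul hz hq'
    simp only [← mul_assoc, hz.isProjIn.mul_self, hzw] at hzpq
    have hz0 := hmax _ hz ⟨hzw, by rw [← hz.2 _ hw.one_sub.isProjIn.mem, hzw]⟩ hzpq
    exact hd0 (by rw [← hzd, hz0, zero_mul])

theorem isClosed_setOf_central_mul_subEquiv (hz : IsCentralProj M z) (hs : SigmaFiniteProj M z)
    (hq : IsProjIn M q) : IsClosed {r : ProjSet M | SubEquiv M (z * r.1) (z * q)} := by
  refine closure_subset_iff_isClosed.1 fun r hr => ?_
  have hzr := hz.mul_isProjIn r.2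
  exact subEquiv_of_mem_closure (hz.mul_isProjIn hq) (p := hz.mulProj r)
    (hs.of_subEquiv hzr hz.isProjIn ((hz.mul_projLE_left r.2).subEquiv hzr))
    (map_mem_closure hz.continuous_mulProj hr fun _ => id)

end Closure

section Quotient

variable {M : VonNeumannAlgebra H} {p q : ProjSet M} {z : H →L[ℂ] H}

theorem pquotMk_eq_pquotMk_iff : pquotMk M p = pquotMk M q ↔ MvNEquiv M p.1 q.1 := by
  have hequiv : Equivalence fun p q : ProjSet M => MvNEquiv M p.1 q.1 :=
    ⟨fun p => .refl p.2, MvNEquiv.symm, fun {p q _} h h' => h.trans p.2 q.2 h'⟩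
  exact ⟨fun h => hequiv.eqvGen_iff.1 (Quot.eqvGen_exact h),
    fun h => Quot.sound h⟩

theorem mem_of_pquotMk_specializes {A : Set (ProjSet M)} (hA : IsClosed A)
    (hsat : ∀ r s : ProjSet M, MvNEquiv M r.1 s.1 → r ∈ A → s ∈ A)
    (h : pquotMk M q ⤳ pquotMk M p) (hq : q ∈ A) : p ∈ A := by
  have hpre : pquotMk M ⁻¹' (pquotMk M '' A) = A :=
    (Set.subset_preimage_image _ _).antisymm' fun s ⟨r, hr, hrs⟩ =>
      hsat r s (pquotMk_eq_pquotMk_iff.1 hrs) hr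
  have hclosed : IsClosed (pquotMk M '' A) :=
    isQuotientMap_quot_mk.isClosed_preimage.1 (hpre.symm ▸ hA)
  exact hpre.subset (h.mem_closed hclosed ⟨q, hq, rfl⟩)

theorem central_mul_subEquiv_of_pquotMk_specializes (hz : IsCentralProj M z)
    (hs : SigmaFiniteProj M z) (h : pquotMk M q ⤳ pquotMk M p) :
    SubEquiv M (z * p.1) (z * q.1) :=
  mem_of_pquotMk_specializes (isClosed_setOf_central_mul_subEquiv hz hs q.2)
    (fun r s hrs hr => (hrs.symm.subEquiv r.2 |>.central_mul hz r.2).trans (hz.mul_isProjIn s.2)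
      (hz.mul_isProjIn r.2) (hz.mul_isProjIn q.2) hr)
    h ((hz.mul_isProjIn q.2).projLE_self.subEquiv (hz.mul_isProjIn q.2))

theorem t0Space_pquot_of_hasStrongSum {I : Type*} {z : I → H →L[ℂ] H}
    (hz : ∀ i, IsCentralProj M (z i)) (hs : ∀ i, SigmaFiniteProj M (z i))
    (horth : Pairwise fun i j => z i * z j = 0) (hsum : HasStrongSum z 1) :
    T0Space (PQuot M) := by
  have hle {p q : ProjSet M} (h : pquotMk M q ⤳ pquotMk M p) : SubEquiv M p.1 q.1 := by
    simpa only [one_mul] using SubEquiv.of_forall_central_mul hz horth p.2 q.2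
      (fun i => central_mul_subEquiv_of_pquotMk_specializes (hz i) (hs i) h) hsum
  refine ⟨Quot.ind fun p => Quot.ind fun q h => ?_⟩
  exact pquotMk_eq_pquotMk_iff.2 (SubEquiv.antisymm p.2 q.2 (hle h.specializes')
    (hle h.specializes))

end Quotient

section Homogeneous

variable {M : VonNeumannAlgebra H}

theorem tendsto_projSet_of_eventually_mul_eq {ι α : Type*} {l : Filter α}
    {e : ι → H →L[ℂ] H} {p : H →L[ℂ] H} (hp : HasStrongSum e p) {r : α → ProjSet M} {s : ProjSet M}
    (hr : ∀ a, ProjLE (r a).1 p) (hs : ProjLE s.1 p)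
    (h : ∀ i, ∀ᶠ a in l, (r a).1 * e i = s.1 * e i) : Tendsto r l (𝓝 s) := by
  rw [nhds_induced, tendsto_comap_iff, tendsto_pi_nhds]
  intro ξ
  have hequi : Equicontinuous fun a η => (r a).1 η :=
    (LipschitzWith.uniformEquicontinuous _ 1 fun a => LipschitzWith.of_dist_le_mul fun η ζ => by
      simpa only [dist_eq_norm, map_sub, NNReal.coe_one, one_mul]
        using (r a).2.norm_apply_le (η - ζ)).equicontinuous
  have hclosed : IsClosed {η | Tendsto (fun a => (r a).1 η) l (𝓝 (s.1 η))} :=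
    hequi.isClosed_setOfPred_tendsto s.1.continuous
  have hsum (F : Finset ι) : Tendsto (fun a => (r a).1 (∑ i ∈ F, e i ξ)) l
      (𝓝 (s.1 (∑ i ∈ F, e i ξ))) := by
    simp only [map_sum]
    exact tendsto_finsetSum F fun i _ => tendsto_const_nhds.congr' <|
      (h i).mono fun a ha => (DFunLike.congr_fun ha ξ).symm
  have hpξ : Tendsto (fun a => (r a).1 (p ξ)) l (𝓝 (s.1 (p ξ))) := by
    have hlim := hp ξ
    rw [HasSum, SummationFilter.unconditional_filter] at hlim
    exact hclosed.mem_of_tendsto hlim (.of_forall hsum)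
  have hrp (a : α) : (r a).1 (p ξ) = (r a).1 ξ := DFunLike.congr_fun (hr a).1 ξ
  have hsp : s.1 (p ξ) = s.1 ξ := DFunLike.congr_fun hs.1 ξ
  rw [hsp] at hpξ
  exact hpξ.congr hrp

theorem pquotMk_specializes_of_tendsto {α : Type*} {l : Filter α} [l.NeBot] {r : α → ProjSet M}
    {p q : ProjSet M} (hr : Tendsto r l (𝓝 p)) (h : ∀ a, MvNEquiv M (r a).1 q.1) :
    pquotMk M q ⤳ pquotMk M p := by
  have hmk : Continuous (pquotMk M) := continuous_quot_mk
  have hlim : Tendsto (fun _ : α => pquotMk M q) l (𝓝 (pquotMk M p)) :=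
    ((hmk.tendsto p).comp hr).congr fun a => pquotMk_eq_pquotMk_iff.2 (h a)
  rwa [Tendsto, Filter.map_const, ← specializes_iff_pure] at hlim

theorem nonempty_equiv_inter_union_sdiff {ι : Type*} {A B F : Set ι} (hA : A.Infinite)
    (hF : F.Finite) : Nonempty (↑(B ∩ F ∪ A \ F) ≃ A) := by
  have haleph : Cardinal.aleph0 ≤ Cardinal.mk ↑(A \ F) :=
    Cardinal.infinite_iff.1 (hA.sdiff hF).to_subtype
  have hfin (C : Set ι) : Cardinal.mk ↑(C ∩ F) ≤ Cardinal.mk ↑(A \ F) :=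
    (Cardinal.mk_lt_aleph0_iff.2 (hF.inter_of_right C).to_subtype).le.trans haleph
  have hcard (C : Set ι) : Cardinal.mk ↑(C ∩ F ∪ A \ F) = Cardinal.mk ↑(A \ F) := by
    rw [Cardinal.mk_union_of_disjoint (Set.disjoint_sdiff_right.mono_left Set.inter_subset_right),
      Cardinal.add_eq_right haleph (hfin C)]
  refine Cardinal.eq.1 ((hcard B).trans ?_)
  rw [← hcard A, Set.inter_union_sdiff]

theorem exists_isCentralProj_mul_sigmaFiniteProj {J : Type*} {f c : J → H →L[ℂ] H} {e : H →L[ℂ] H}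
    (hs : ∀ j, SigmaFiniteProj M (f j)) (hc : ∀ j, IsCentralSupport M (f j) (c j))
    (hcc : Pairwise fun j k => c j * c k = 0) (hsum : HasStrongSum f e) (he0 : e ≠ 0) :
    ∃ z, IsCentralProj M z ∧ z * e ≠ 0 ∧ SigmaFiniteProj M (z * e) := by
  obtain ⟨j, hj⟩ := hsum.exists_ne_zero he0
  have hcut : c j * e = f j := by
    rw [(hsum.mul_left (c j)).eq_of_forall_ne j fun k hk => ?_, (hc j).2.1]
    rw [← (hc k).2.1, ← mul_assoc, hcc hk.symm, zero_mul]
  exact ⟨c j, (hc j).1, hcut ▸ hj, hcut ▸ hs j⟩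

variable {ι : Type*} {e : ι → H →L[ℂ] H} (he : ∀ i, IsProjIn M (e i))
  (horth : Pairwise fun i j => e i * e j = 0) {A B : Set ι} {i : ι}

include he horth in
theorem exists_projSet_hasStrongSum (A : Set ι) :
    ∃ P : ProjSet M, HasStrongSum (fun i : A => e i) P.1 := by
  have horthA : Pairwise fun i j : A => e i * e j = 0 :=
    fun _ _ hij => horth (Subtype.coe_injective.ne hij)
  obtain ⟨P, hP⟩ := exists_hasStrongSum_of_isProjIn (fun i : A => he i) horthA
  exact ⟨⟨P, hP.isProjIn (fun i => he i) horthA⟩, hP⟩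

/-- The strong sum `∑ i ∈ A, e i` of a subfamily of an orthogonal family of projections. -/
def subfamilySum (A : Set ι) : ProjSet M :=
  (exists_projSet_hasStrongSum he horth A).choose

theorem hasStrongSum_subfamilySum (A : Set ι) :
    HasStrongSum (fun i : A => e i) (subfamilySum he horth A).1 :=
  (exists_projSet_hasStrongSum he horth A).choose_spec

theorem projLE_subfamilySum (hi : i ∈ A) : ProjLE (e i) (subfamilySum he horth A).1 :=
  (hasStrongSum_subfamilySum he horth A).projLE (fun i => he i)
    (fun _ _ hij => horth (Subtype.coe_injective.ne hij)) ⟨i, hi⟩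

theorem subfamilySum_mul_of_notMem (hi : i ∉ A) : (subfamilySum he horth A).1 * e i = 0 :=
  ((hasStrongSum_subfamilySum he horth A).mul_right (e i)).eq_zero fun j =>
    horth fun hji => hi (hji ▸ j.2)

theorem subfamilySum_projLE (A : Set ι) :
    ProjLE (subfamilySum he horth A).1 (subfamilySum he horth Set.univ).1 :=
  (hasStrongSum_subfamilySum he horth A).projLE_of_forall fun i =>
    projLE_subfamilySum he horth (Set.mem_univ i.1)

theorem subfamilySum_mul_congr (h : i ∈ A ↔ i ∈ B) :
    (subfamilySum he horth A).1 * e i = (subfamilySum he horth B).1 * e i := by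
  by_cases hi : i ∈ A
  · rw [(projLE_subfamilySum he horth hi).2, (projLE_subfamilySum he horth (h.1 hi)).2]
  · rw [subfamilySum_mul_of_notMem he horth hi,
      subfamilySum_mul_of_notMem he horth (h.not.1 hi)]

variable (hequiv : ∀ i j, MvNEquiv M (e i) (e j))

include hequiv in
theorem mvNEquiv_subfamilySum (φ : A ≃ B) :
    MvNEquiv M (subfamilySum he horth A).1 (subfamilySum he horth B).1 := by
  refine .of_hasStrongSum (fun i : A => he i) (fun i : A => he (φ i))
    (fun _ _ hij => horth (Subtype.coe_injective.ne hij))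
    (fun _ _ hij => horth (Subtype.coe_injective.ne (φ.injective.ne hij)))
    (fun i => hequiv i (φ i)) (hasStrongSum_subfamilySum he horth A) fun ξ => ?_
  exact φ.hasSum_iff.2 (hasStrongSum_subfamilySum he horth B ξ)

include hequiv in
theorem pquotMk_subfamilySum_specializes (hA : A.Infinite) (B : Set ι) :
    pquotMk M (subfamilySum he horth A) ⤳ pquotMk M (subfamilySum he horth B) := by
  -- The sets `B ∩ F ∪ A \ F` are equipotent to `A` and converge to `B` as the finite set `F` grows.
  refine pquotMk_specializes_of_tendsto (l := atTop)
    (r := fun F : Finset ι => subfamilySum he horth (B ∩ F ∪ A \ F)) ?_ fun F => ?_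
  · refine tendsto_projSet_of_eventually_mul_eq (hasStrongSum_subfamilySum he horth Set.univ)
      (fun F => subfamilySum_projLE he horth _) (subfamilySum_projLE he horth _) fun i => ?_
    filter_upwards [eventually_ge_atTop {i.1}] with F hF
    have hiF : i.1 ∈ F := Finset.singleton_subset_iff.1 hF
    exact subfamilySum_mul_congr he horth (by simp [hiF])
  · obtain ⟨φ⟩ := nonempty_equiv_inter_union_sdiff hA F.finite_toSet (B := B)
    exact mvNEquiv_subfamilySum he horth hequiv φ

include hequiv in
theorem mvNEquiv_subfamilySum_of_t0Space [T0Space (PQuot M)] (hA : A.Infinite)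
    (hB : B.Infinite) : MvNEquiv M (subfamilySum he horth A).1 (subfamilySum he horth B).1 :=
  pquotMk_eq_pquotMk_iff.1 <| Inseparable.eq <|
    (pquotMk_subfamilySum_specializes he horth hequiv hA B).antisymm
      (pquotMk_subfamilySum_specializes he horth hequiv hB A)

include he horth hequiv in
theorem countable_of_t0Space [T0Space (PQuot M)] (he0 : ∀ i, e i ≠ 0)
    (hs : ∀ i, SigmaFiniteProj M (e i)) : Countable ι := by
  by_contra hι
  have : Infinite ι := not_finite_iff_infinite.1 fun _ => hι inferInstance
  let N : Set ι := Set.range (Infinite.natEmbedding ι)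
  have : Countable N := (Set.countable_range _).to_subtype
  have hN : SigmaFiniteProj M (subfamilySum he horth N).1 :=
    .of_hasStrongSum (fun i : N => hs i) (fun i => he i)
      (fun _ _ hij => horth (Subtype.coe_injective.ne hij)) (hasStrongSum_subfamilySum he horth N)
  have huniv : SigmaFiniteProj M (subfamilySum he horth Set.univ).1 :=
    hN.of_subEquiv (subfamilySum he horth _).2 (subfamilySum he horth _).2 <|
      (mvNEquiv_subfamilySum_of_t0Space he horth hequiv Set.infinite_univ
        (Set.infinite_range_of_injective (Infinite.natEmbedding ι).injective)).subEquiv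
        (subfamilySum he horth _).2
  exact hι (huniv.countable he he0 (fun i => projLE_subfamilySum he horth (Set.mem_univ i)) horth)

theorem IsHomogeneousProj.countable_of_t0Space [T0Space (PQuot M)] {p : H →L[ℂ] H}
    (hp : IsHomogeneousProj M ι p) : Countable ι := by
  obtain ⟨-, hp0, e, he, horth, hequiv, hsum, hpieces⟩ := hp
  obtain ⟨i, hi⟩ := HasStrongSum.exists_ne_zero hsum hp0
  obtain ⟨J, f, c, hf, hc, hcc, hfe⟩ := hpieces i
  obtain ⟨z, hz, hz0, hzs⟩ :=
    exists_isCentralProj_mul_sigmaFiniteProj (fun j => (hf j).2) hc hcc hfe hi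
  have hze (j : ι) : IsProjIn M (z * e j) := hz.mul_isProjIn (he j)
  have hzequiv (j k : ι) : MvNEquiv M (z * e j) (z * e k) := (hequiv j k).central_mul hz
  refine _root_.countable_of_t0Space (e := fun j => z * e j) hze (fun j k hjk => ?_) hzequiv
    (fun j => (hzequiv i j).ne_zero hz0)
    fun j => hzs.of_subEquiv (hze j) (hze i) ((hzequiv j i).subEquiv (hze i))
  exact (hz.mul_projLE_right (he j)).mul_eq_zero (hz.mul_projLE_right (he k)) (horth hjk)

end Homogeneous

section Decomposition

variable {M : VonNeumannAlgebra H} {e f : H →L[ℂ] H}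

theorem isHomogeneousProj_of_sigmaFiniteProj {ι : Type*} {p : ι → H →L[ℂ] H} {P : H →L[ℂ] H}
    (hp : ∀ i, IsProjIn M (p i)) (hs : ∀ i, SigmaFiniteProj M (p i))
    (horth : Pairwise fun i j => p i * p j = 0) (hequiv : ∀ i j, MvNEquiv M (p i) (p j))
    (hP : HasStrongSum p P) (hP0 : P ≠ 0) : IsHomogeneousProj M ι P :=
  ⟨hP.isProjIn hp horth, hP0, p, hp, horth, hequiv, hP, fun i =>
    ⟨PUnit, fun _ => p i, fun _ => centralSupport M (p i), fun _ => ⟨hp i, hs i⟩,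
      fun _ => isCentralSupport_centralSupport (hp i).mem, Subsingleton.pairwise,
      fun ξ => by simp⟩⟩

theorem exists_maximal_copies (he : IsProjIn M e) (hf : IsProjIn M f) (hf0 : f ≠ 0) :
    ∃ (I : Type u) (p : I → H →L[ℂ] H) (P z : H →L[ℂ] H),
      (∀ i, IsProjIn M (p i) ∧ MvNEquiv M (p i) f) ∧ (Pairwise fun i j => p i * p j = 0) ∧
      HasStrongSum p P ∧ ProjLE P e ∧ IsCentralProj M z ∧ z * f ≠ 0 ∧
      SubEquiv M (z * (e - P)) (z * f) := by
  obtain ⟨I, p, P, hp, horth, hP, hmax⟩ :=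
    exists_maximal_orthogonal_family he fun q => MvNEquiv M q f
  have hPe : ProjLE P e := hP.projLE_of_forall fun i => (hp i).2.2.1
  have hrem : IsProjIn M (e - P) := he.sub (hP.isProjIn (fun i => (hp i).1) horth) hPe
  obtain ⟨z, hz, hzrem, hzf⟩ := exists_isCentralProj_subEquiv hrem hf
  refine ⟨I, p, P, z, fun i => ⟨(hp i).1, (hp i).2.2.2⟩, horth, hP, hPe, hz, fun hzf0 => ?_, hzrem⟩
  rw [sub_mul, one_mul, hzf0, sub_zero] at hzf
  obtain ⟨q, hq, hfq, hqrem⟩ := hzf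
  exact hfq.ne_zero hf0 <|
    hmax q hq (hqrem.trans (hz.one_sub.mul_projLE_right hrem)) hfq.symm

theorem exists_isCentralProj_sigmaFiniteProj_mul
    (hM : ∀ (ι : Type u) (p : H →L[ℂ] H), IsHomogeneousProj M ι p → Countable ι)
    (he : IsProjIn M e) (hf : IsProjIn M f) (hf0 : f ≠ 0) (hs : SigmaFiniteProj M f) :
    ∃ z, IsCentralProj M z ∧ z * f ≠ 0 ∧ SigmaFiniteProj M (z * e) := by
  obtain ⟨I, p, P, z, hp, horth, hP, hPe, hz, hzf0, hzrem⟩ := exists_maximal_copies he hf hf0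
  have hPproj : IsProjIn M P := hP.isProjIn (fun i => (hp i).1) horth
  have hzf : IsProjIn M (z * f) := hz.mul_isProjIn hf
  have hzfs : SigmaFiniteProj M (z * f) :=
    hs.of_subEquiv hzf hf ((hz.mul_projLE_right hf).subEquiv hzf)
  have hzp (i : I) : IsProjIn M (z * p i) := hz.mul_isProjIn (hp i).1
  have hzpf (i : I) : MvNEquiv M (z * p i) (z * f) := (hp i).2.central_mul hz
  have hzps (i : I) : SigmaFiniteProj M (z * p i) :=
    hzfs.of_subEquiv (hzp i) hzf ((hzpf i).subEquiv hzf)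
  have hzorth : Pairwise fun i j => z * p i * (z * p j) = 0 := fun i j hij =>
    (hz.mul_projLE_right (hp i).1).mul_eq_zero (hz.mul_projLE_right (hp j).1) (horth hij)
  have hcountable : Countable I := by
    by_contra hI
    obtain ⟨i⟩ : Nonempty I := not_isEmpty_iff.1 fun _ => hI inferInstance
    refine hI (hM I (z * P) (isHomogeneousProj_of_sigmaFiniteProj hzp hzps hzorth
      (fun i j => (hzpf i).trans (hzp i) hzf (hzpf j).symm) (hP.mul_left z) fun hzP => ?_))
    refine (hzpf i).symm.ne_zero hzf0 ?_
    rw [← ((hP.mul_left z).projLE hzp hzorth i).1, hzP, mul_zero]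
  have hrem : IsProjIn M (z * (e - P)) := hz.mul_isProjIn (he.sub hPproj hPe)
  have hsum := (SigmaFiniteProj.of_hasStrongSum hzps hzp hzorth (hP.mul_left z)).add
    (hzfs.of_subEquiv hrem hzf hzrem) (hz.mul_isProjIn hPproj) hrem (by
      rw [hz.mul_mul_mul hPproj.mem, hPe.self_mul_sub hPproj.mul_self, mul_zero])
  rw [← mul_add, add_sub_cancel] at hsum
  exact ⟨z, hz, hzf0, hsum⟩

theorem exists_isCentralProj_sigmaFiniteProj_hasStrongSum_one
    (hM : ∀ (ι : Type u) (p : H →L[ℂ] H), IsHomogeneousProj M ι p → Countable ι) :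
    ∃ (I : Type u) (z : I → H →L[ℂ] H), (∀ i, IsCentralProj M (z i) ∧ SigmaFiniteProj M (z i)) ∧
      (Pairwise fun i j => z i * z j = 0) ∧ HasStrongSum z 1 := by
  obtain ⟨I, z, w, hz, horth, hw, hmax⟩ := exists_maximal_orthogonal_family (IsProjIn.one M)
    fun z : H →L[ℂ] H => IsCentralProj M z ∧ SigmaFiniteProj M z
  have hwc : IsCentralProj M w := .of_hasStrongSum hw (fun i => (hz i).2.2.2.1) horth
  have hw1 : 1 - w = 0 := by
    by_contra h0
    obtain ⟨f, hf, hf0, hfw, hfsep⟩ := exists_hasCountableSeparatingSet hwc.one_sub.isProjIn h0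
    obtain ⟨c, hc, hcf, hcs⟩ := exists_isCentralProj_sigmaFiniteProj_mul hM
      hwc.one_sub.isProjIn hf hf0 ((sigmaFiniteProj_iff hf).2 hfsep)
    have hcw := hc.mul hwc.one_sub
    have hzero := hmax _ hcw.isProjIn (hc.mul_projLE_right hwc.one_sub.isProjIn)
      ⟨hcw, hcs⟩
    exact hcf (by rw [← hfw.2, ← mul_assoc, hzero, zero_mul])
  exact ⟨I, z, fun i => (hz i).2.2.2, horth, (sub_eq_zero.1 hw1) ▸ hw⟩

end Decomposition

/-- The quotient operator topology on `P(M)/∼` is `T₀` iff `M` contains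
no `κ`-homogeneous projection for an uncountable cardinal `κ`, equivalently iff `M` is a
(possibly uncountable) direct sum of σ-finite von Neumann algebras. -/
theorem pquot_t0_iff (M : VonNeumannAlgebra H) :
    (T0Space (PQuot M) ↔
      ¬ ∃ (ι : Type u) (p : H →L[ℂ] H), ¬ Countable ι ∧ IsHomogeneousProj M ι p) ∧
    (T0Space (PQuot M) ↔
      ∃ (I : Type u) (z : I → H →L[ℂ] H),
        (∀ i, IsCentralProj M (z i) ∧ SigmaFiniteProj M (z i)) ∧
        (Pairwise fun i j => z i * z j = 0) ∧
        ∀ ξ : H, HasSum (fun i => z i ξ) ξ) := by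
  have hcountable (hT : T0Space (PQuot M)) (ι : Type u) (p : H →L[ℂ] H)
      (hp : IsHomogeneousProj M ι p) : Countable ι := hp.countable_of_t0Space
  have ht0 {I : Type u} {z : I → H →L[ℂ] H}
      (hz : ∀ i, IsCentralProj M (z i) ∧ SigmaFiniteProj M (z i))
      (horth : Pairwise fun i j => z i * z j = 0) (hsum : HasStrongSum z 1) : T0Space (PQuot M) :=
    t0Space_pquot_of_hasStrongSum (fun i => (hz i).1) (fun i => (hz i).2) horth hsum
  refine ⟨⟨fun hT ⟨ι, p, hι, hp⟩ => hι (hcountable hT ι p hp), fun hno => ?_⟩,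
    fun hT => exists_isCentralProj_sigmaFiniteProj_hasStrongSum_one (hcountable hT),
    fun ⟨I, z, hz, horth, hsum⟩ => ht0 hz horth hsum⟩
  obtain ⟨I, z, hz, horth, hsum⟩ := exists_isCentralProj_sigmaFiniteProj_hasStrongSum_one
    fun ι p hp => not_not.1 fun hι => hno ⟨ι, p, hι, hp⟩
  exact ht0 hz horth hsum
end
end

section
/- The Kadison–Pedersen relation ≈ on M₊ is an equivalence relation which is homogeneous (h ≈ k implies λh ≈ λk for λ > 0) and completely additive: if h_α ≈ k_α for all α and Σh_α, Σk_α exist in M₊, then Σh_α ≈ Σk_α. -/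
open ContinuousLinearMap Filter Topology

universe u

noncomputable section

variable {H : Type u} [NormedAddCommGroup H] [InnerProductSpace ℂ H] [CompleteSpace H]

/-!
Write `h = Σ xᵢ* xᵢ`, `k = Σ xᵢ xᵢ*` and `k = Σ yⱼ* yⱼ`, `l = Σ yⱼ yⱼ*`, and put `a = √k`.
Since `‖yⱼ ξ‖ ≤ ‖a ξ‖` and `‖xᵢ* ξ‖ ≤ ‖a ξ‖`, Douglas' factorization gives `yⱼ = vⱼ a` and
`xᵢ = a wᵢ*` with `vⱼ, wᵢ ∈ M`. The operators `zᵢⱼ = vⱼ xᵢ = yⱼ wᵢ*` then witness `h ≈ l`: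
summing `zᵢⱼ* zᵢⱼ` over `j` gives `wᵢ k wᵢ* = xᵢ* xᵢ`, and summing `zᵢⱼ zᵢⱼ*` over `i` gives
`vⱼ k vⱼ* = yⱼ yⱼ*`. Both this double sum and complete additivity rest on regrouping strongly
convergent sums of positive operators, which reduces to nonnegative real series because, by the
Cauchy–Schwarz inequality, such a sum converges strongly as soon as its quadratic forms do.
-/

section PositiveSums

variable {𝕜 E : Type*} [RCLike 𝕜] [NormedAddCommGroup E] [InnerProductSpace 𝕜 E]

theorem norm_inner_apply_mul_self_le_of_isPositive {T : E →L[𝕜] E} (hT : T.IsPositive) (x y : E) :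
    ‖inner 𝕜 (T x) y‖ * ‖inner 𝕜 (T x) y‖ ≤ T.reApplyInnerSelf x * T.reApplyInnerSelf y := by
  let core : PreInnerProductSpace.Core 𝕜 E :=
    { inner := fun x y => inner 𝕜 (T x) y
      conj_inner_symm := fun x y => by
        rw [inner_conj_symm, hT.inner_left_eq_inner_right]
      re_inner_nonneg := hT.re_inner_nonneg_left
      add_left := fun x y z => by rw [map_add, inner_add_left]
      smul_left := fun x y r => by rw [map_smul, inner_smul_left] }
  have hsymm : ‖inner 𝕜 (T y) x‖ = ‖inner 𝕜 (T x) y‖ := by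
    rw [hT.inner_left_eq_inner_right, norm_inner_symm]
  have hcs := @InnerProductSpace.Core.inner_mul_inner_self_le 𝕜 E _ _ _ core x y
  change ‖inner 𝕜 (T x) y‖ * ‖inner 𝕜 (T y) x‖ ≤ _ at hcs
  rwa [hsymm] at hcs

theorem norm_apply_sq_le_of_nonneg_of_le {T S : E →L[𝕜] E} (hT : 0 ≤ T) (hTS : T ≤ S) (x : E) :
    ‖T x‖ ^ 2 ≤ ‖S‖ * T.reApplyInnerSelf x := by
  have hpos : T.IsPositive := (nonneg_iff_isPositive T).1 hT
  have hcs : ‖T x‖ ^ 2 * ‖T x‖ ^ 2 ≤ T.reApplyInnerSelf x * T.reApplyInnerSelf (T x) := by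
    have := norm_inner_apply_mul_self_le_of_isPositive hpos x (T x)
    rwa [inner_self_eq_norm_sq_to_K, norm_pow, RCLike.norm_ofReal, abs_norm] at this
  have hbound : T.reApplyInnerSelf (T x) ≤ ‖S‖ * ‖T x‖ ^ 2 :=
    calc T.reApplyInnerSelf (T x)
        ≤ S.reApplyInnerSelf (T x) := by
          have := ((le_def T S).1 hTS).re_inner_nonneg_left (T x)
          rwa [sub_apply, inner_sub_left, map_sub, sub_nonneg] at this
      _ ≤ ‖S (T x)‖ * ‖T x‖ := re_inner_le_norm _ _
      _ ≤ ‖S‖ * ‖T x‖ * ‖T x‖ := by gcongr; exact S.le_opNorm _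
      _ = ‖S‖ * ‖T x‖ ^ 2 := by ring
  rcases (sq_nonneg ‖T x‖).eq_or_lt with hzero | hlt
  · rw [← hzero]
    exact mul_nonneg (norm_nonneg S) (hpos.re_inner_nonneg_left x)
  · refine le_of_mul_le_mul_right (hcs.trans ?_) hlt
    calc T.reApplyInnerSelf x * T.reApplyInnerSelf (T x)
        ≤ T.reApplyInnerSelf x * (‖S‖ * ‖T x‖ ^ 2) :=
          mul_le_mul_of_nonneg_left hbound (hpos.re_inner_nonneg_left x)
      _ = ‖S‖ * T.reApplyInnerSelf x * ‖T x‖ ^ 2 := by ring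

variable {ι : Type*} {f : ι → E →L[𝕜] E} {s : E →L[𝕜] E}

theorem isSymmetric_of_hasSum_apply (hf : ∀ i, (f i).IsSymmetric)
    (h : ∀ x, HasSum (fun i => f i x) (s x)) : s.IsSymmetric := by
  intro x y
  have hxy : HasSum (fun i => inner 𝕜 (f i x) y) (inner 𝕜 (s x) y) := by
    simpa only [innerSLFlip_apply_apply] using (h x).mapL (innerSLFlip 𝕜 y)
  have hyx : HasSum (fun i => inner 𝕜 x (f i y)) (inner 𝕜 x (s y)) := (h y).mapL (innerSL 𝕜 x)
  have hfxy (i : ι) : inner 𝕜 (f i x) y = inner 𝕜 x (f i y) := hf i x y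
  simp only [hfxy] at hxy
  exact hxy.unique hyx

theorem hasSum_reApplyInnerSelf {x : E} (h : HasSum (fun i => f i x) (s x)) :
    HasSum (fun i => (f i).reApplyInnerSelf x) (s.reApplyInnerSelf x) :=
  (h.mapL (innerSLFlip 𝕜 x)).mapL RCLike.reCLM

theorem isPositive_of_hasSum_apply (hf : ∀ i, (f i).IsPositive)
    (h : ∀ x, HasSum (fun i => f i x) (s x)) : s.IsPositive :=
  ⟨isSymmetric_of_hasSum_apply (fun i => (hf i).isSymmetric) h, fun x =>
    (hasSum_reApplyInnerSelf (h x)).nonneg fun i => (hf i).re_inner_nonneg_left x⟩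

theorem hasSum_apply_of_hasSum_reApplyInnerSelf (hf : ∀ i, (f i).IsPositive) (hs : s.IsSymmetric)
    (h : ∀ x, HasSum (fun i => (f i).reApplyInnerSelf x) (s.reApplyInnerSelf x)) (x : E) :
    HasSum (fun i => f i x) (s x) := by
  let R : Finset ι → E →L[𝕜] E := fun F => s - ∑ i ∈ F, f i
  have hsum (F : Finset ι) : (∑ i ∈ F, f i).IsPositive := isPositive_sum F fun i _ => hf i
  have hR_apply (F : Finset ι) (y : E) :
      (R F).reApplyInnerSelf y = s.reApplyInnerSelf y - ∑ i ∈ F, (f i).reApplyInnerSelf y := by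
    simp [R, reApplyInnerSelf_apply, inner_sub_left, sum_inner]
  have hR_nonneg (F : Finset ι) : 0 ≤ R F := by
    refine (nonneg_iff_isPositive _).2 ⟨hs.sub (hsum F).isSymmetric, fun y => ?_⟩
    rw [hR_apply, sub_nonneg]
    exact sum_le_hasSum F (fun i _ => (hf i).re_inner_nonneg_left y) (h y)
  have hR_le (F : Finset ι) : R F ≤ s :=
    (le_def _ _).2 (by simpa only [R, sub_sub_cancel] using hsum F)
  have hlim : Tendsto (fun F => ‖s‖ * (R F).reApplyInnerSelf x) atTop (𝓝 0) := by
    have hx : Tendsto (fun F => ∑ i ∈ F, (f i).reApplyInnerSelf x) atTop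
        (𝓝 (s.reApplyInnerSelf x)) := h x
    simpa only [hR_apply, sub_self, mul_zero] using
      (hx.const_sub (s.reApplyInnerSelf x)).const_mul ‖s‖
  have hnorm : Tendsto (fun F => ‖R F x‖ ^ 2) atTop (𝓝 0) :=
    squeeze_zero (fun _ => sq_nonneg _)
      (fun F => norm_apply_sq_le_of_nonneg_of_le (hR_nonneg F) (hR_le F) x) hlim
  have hR_tendsto : Tendsto (fun F => R F x) atTop (𝓝 0) :=
    tendsto_zero_iff_norm_tendsto_zero.2 (by simpa using hnorm.sqrt)
  simpa [HasSum, R] using hR_tendsto.const_sub (s x)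

theorem hasSum_sigma_apply_of_isPositive {κ : ι → Type*} {g : (Σ i, κ i) → E →L[𝕜] E}
    (hg : ∀ p, (g p).IsPositive) (hgf : ∀ i x, HasSum (fun j => g ⟨i, j⟩ x) (f i x))
    (hfs : ∀ x, HasSum (fun i => f i x) (s x)) (x : E) : HasSum (fun p => g p x) (s x) := by
  have hf (i : ι) : (f i).IsPositive := isPositive_of_hasSum_apply (fun j => hg ⟨i, j⟩) (hgf i)
  refine hasSum_apply_of_hasSum_reApplyInnerSelf hg
    (isPositive_of_hasSum_apply hf hfs).isSymmetric (fun y => ?_) x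
  have hinner (i : ι) := hasSum_reApplyInnerSelf (hgf i y)
  have houter := hasSum_reApplyInnerSelf (hfs y)
  refine houter.sigma_of_hasSum hinner ?_
  refine (summable_sigma_of_nonneg fun p => (hg p).re_inner_nonneg_left y).2
    ⟨fun i => (hinner i).summable, ?_⟩
  exact houter.summable.congr fun i => (hinner i).tsum_eq.symm

end PositiveSums

section GramSums

variable {𝕜 E E' F G : Type*} [RCLike 𝕜]
  [NormedAddCommGroup E] [InnerProductSpace 𝕜 E] [CompleteSpace E]
  [NormedAddCommGroup E'] [InnerProductSpace 𝕜 E'] [CompleteSpace E']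
  [NormedAddCommGroup F] [InnerProductSpace 𝕜 F] [CompleteSpace F]
  [NormedAddCommGroup G] [InnerProductSpace 𝕜 G] [CompleteSpace G]
  {ι : Type*} {x : ι → E →L[𝕜] F} {h : E →L[𝕜] E}

/-- The sum `Σ xᵢ* xᵢ` converges to `h` in the strong operator topology. Both sums in the
Kadison–Pedersen relation have this form, the second one for the family of adjoints. -/
def HasGramSum (x : ι → E →L[𝕜] F) (h : E →L[𝕜] E) : Prop :=
  ∀ ξ, HasSum (fun i => (adjoint (x i) ∘L x i) ξ) (h ξ)

namespace HasGramSum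

theorem isPositive (hx : HasGramSum x h) : h.IsPositive :=
  isPositive_of_hasSum_apply (fun i => isPositive_adjoint_comp_self (x i)) hx

theorem comp_right {a : E →L[𝕜] G} (hx : HasGramSum x (adjoint a ∘L a)) (b : E' →L[𝕜] E) :
    HasGramSum (fun i => x i ∘L b) (adjoint (a ∘L b) ∘L (a ∘L b)) := fun ξ => by
  simpa only [adjoint_comp] using! (hx (b ξ)).mapL (adjoint b)

theorem smul (hx : HasGramSum x h) (c : 𝕜) :
    HasGramSum (fun i => c • x i) ((starRingEnd 𝕜 c * c) • h) := fun ξ => by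
  simpa [map_smulₛₗ, smul_smul, mul_comm] using (hx ξ).const_smul (starRingEnd 𝕜 c * c)

theorem comp_equiv {κ : Type*} (hx : HasGramSum x h) (e : κ ≃ ι) :
    HasGramSum (fun j => x (e j)) h := fun ξ =>
  (e.hasSum_iff (f := fun i => (adjoint (x i) ∘L x i) ξ)).2 (hx ξ)

theorem sigma {κ : ι → Type*} {y : ∀ i, κ i → E →L[𝕜] F} {g : ι → E →L[𝕜] E}
    (hy : ∀ i, HasGramSum (y i) (g i)) (hg : ∀ ξ, HasSum (fun i => g i ξ) (h ξ)) :
    HasGramSum (fun p : Σ i, κ i => y p.1 p.2) h :=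
  hasSum_sigma_apply_of_isPositive
    (g := fun p : Σ i, κ i => adjoint (y p.1 p.2) ∘L y p.1 p.2)
    (fun p => isPositive_adjoint_comp_self (y p.1 p.2)) hy hg

theorem prod {κ : Type*} {y : κ → E →L[𝕜] F} {a : E →L[𝕜] G} {b : ι → E' →L[𝕜] E}
    {h : E' →L[𝕜] E'} (hy : HasGramSum y (adjoint a ∘L a))
    (hab : HasGramSum (fun i => a ∘L b i) h) :
    HasGramSum (fun p : ι × κ => y p.2 ∘L b p.1) h :=
  (sigma (fun i => hy.comp_right (b i)) hab).comp_equiv (Equiv.sigmaEquivProd ι κ).symm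

theorem norm_apply_le {a : E →L[𝕜] G} (hx : HasGramSum x (adjoint a ∘L a)) (i : ι) (ξ : E) :
    ‖x i ξ‖ ≤ ‖a ξ‖ := by
  have hsq := hasSum_reApplyInnerSelf (hx ξ)
  simp only [reApplyInnerSelf_apply, ← apply_norm_sq_eq_inner_adjoint_left] at hsq
  exact (sq_le_sq₀ (norm_nonneg _) (norm_nonneg _)).1 (le_hasSum hsq i fun _ _ => sq_nonneg _)

end HasGramSum

end GramSums

section DouglasFactorization

variable {𝕜 : Type*} [RCLike 𝕜]

theorem exists_comp_eq_of_norm_apply_le {E F G : Type*}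
    [NormedAddCommGroup E] [NormedSpace 𝕜 E]
    [NormedAddCommGroup F] [InnerProductSpace 𝕜 F] [CompleteSpace F]
    [NormedAddCommGroup G] [NormedSpace 𝕜 G] [CompleteSpace G]
    {a : E →L[𝕜] F} {y : E →L[𝕜] G} {C : ℝ} (h : ∀ ξ, ‖y ξ‖ ≤ C * ‖a ξ‖) :
    ∃ v : F →L[𝕜] G, v ∘L a = y ∧ ∀ η ∈ a.rangeᗮ, v η = 0 := by
  let K : Submodule 𝕜 F := a.range.topologicalClosure
  let e : E →ₗ[𝕜] K := (a : E →ₗ[𝕜] F).codRestrict K fun ξ =>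
    Submodule.le_topologicalClosure _ ⟨ξ, rfl⟩
  have he : DenseRange e := by
    intro z
    rw [closure_subtype, ← Set.range_comp]
    exact z.2
  let v₀ : K →L[𝕜] G := (y : E →ₗ[𝕜] G).extendOfNorm e
  refine ⟨v₀ ∘L K.orthogonalProjectionOnto, ?_, fun η hη => ?_⟩
  · ext ξ
    have hproj : K.orthogonalProjectionOnto (a ξ) = e ξ :=
      Submodule.orthogonalProjectionOnto_mem_subspace_eq_self (e ξ)
    rw [comp_apply, comp_apply, hproj]
    exact LinearMap.extendOfNorm_eq he ⟨C, h⟩ ξ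
  · rw [← Submodule.orthogonal_closure] at hη
    rw [comp_apply, Submodule.orthogonalProjectionOnto_apply_of_mem_orthogonal hη, map_zero]

variable {E : Type*} [NormedAddCommGroup E] [InnerProductSpace 𝕜 E] [CompleteSpace E]

theorem commute_of_commute_mul_of_eq_zero_on_orthogonal {a v t : E →L[𝕜] E}
    (hv : ∀ η ∈ a.rangeᗮ, v η = 0) (ha : Commute t a) (ha' : Commute t (adjoint a))
    (hva : Commute t (v * a)) : Commute t v := by
  have hrange : a.range.topologicalClosure ≤ (t * v - v * t).ker := by
    refine Submodule.topologicalClosure_minimal _ ?_ (isClosed_ker _)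
    rintro _ ⟨ξ, rfl⟩
    have hmul : (t * v - v * t) * a = 0 := by
      rw [sub_mul, mul_assoc, hva.eq, mul_assoc, mul_assoc, ha.eq, sub_self]
    exact congr($hmul ξ)
  have horth : a.range.topologicalClosureᗮ ≤ (t * v - v * t).ker := by
    intro η hη
    rw [Submodule.orthogonal_closure] at hη
    have htη : t η ∈ a.rangeᗮ := by
      have hcomm : adjoint a (t η) = t (adjoint a η) := congr($ha'.eq.symm η)
      rw [orthogonal_range, LinearMap.mem_ker, coe_coe] at hη ⊢
      rw [hcomm, hη, map_zero]
    simp [hv η hη, hv (t η) htη]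
  have htop : (⊤ : Submodule 𝕜 E) ≤ (t * v - v * t).ker := by
    rw [← Submodule.sup_orthogonal_of_hasOrthogonalProjection (K := a.range.topologicalClosure)]
    exact sup_le hrange horth
  ext η
  exact sub_eq_zero.1 (htop (Submodule.mem_top (x := η)))

end DouglasFactorization

section VonNeumannAlgebra

variable {M : VonNeumannAlgebra H}

theorem mem_iff_forall_commutant_commute {x : H →L[ℂ] H} :
    x ∈ M ↔ ∀ t ∈ M.commutant, Commute t x := by
  conv_lhs => rw [← M.commutant_commutant, VonNeumannAlgebra.mem_commutant_iff]
  rfl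

theorem adjoint_mem {x : H →L[ℂ] H} (hx : x ∈ M) : adjoint x ∈ M :=
  star_mem hx

theorem sqrt_mem {k : H →L[ℂ] H} (hk : k ∈ M) : CFC.sqrt k ∈ M :=
  mem_iff_forall_commutant_commute.2 fun t ht =>
    ((mem_iff_forall_commutant_commute.1 hk t ht).symm.cfcₙ_nnreal _).symm

theorem mem_of_hasSum_apply {ι : Type*} {f : ι → H →L[ℂ] H} {s : H →L[ℂ] H} (hf : ∀ i, f i ∈ M)
    (h : ∀ ξ, HasSum (fun i => f i ξ) (s ξ)) : s ∈ M := by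
  refine mem_iff_forall_commutant_commute.2 fun t ht => ContinuousLinearMap.ext fun ξ => ?_
  have hcomm (i : ι) : t (f i ξ) = f i (t ξ) :=
    congr($((mem_iff_forall_commutant_commute.1 (hf i) t ht).eq) ξ)
  have hts := (h ξ).mapL t
  simp only [hcomm] at hts
  exact hts.unique (h (t ξ))

theorem HasGramSum.mem {ι : Type*} {x : ι → H →L[ℂ] H} {h : H →L[ℂ] H} (hx : HasGramSum x h)
    (hM : ∀ i, x i ∈ M) : h ∈ M :=
  mem_of_hasSum_apply (fun i => mul_mem (adjoint_mem (hM i)) (hM i)) hx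

theorem exists_mem_mul_eq_of_norm_apply_le {a y : H →L[ℂ] H} {C : ℝ} (ha : a ∈ M) (hy : y ∈ M)
    (h : ∀ ξ, ‖y ξ‖ ≤ C * ‖a ξ‖) : ∃ v ∈ M, v * a = y := by
  obtain ⟨v, hva, hv⟩ := exists_comp_eq_of_norm_apply_le h
  rw [← mul_def] at hva
  refine ⟨v, mem_iff_forall_commutant_commute.2 fun t ht => ?_, hva⟩
  have hcomm {b : H →L[ℂ] H} (hb : b ∈ M) : Commute t b :=
    mem_iff_forall_commutant_commute.1 hb t ht
  exact commute_of_commute_mul_of_eq_zero_on_orthogonal hv (hcomm ha) (hcomm (adjoint_mem ha))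
    (hva ▸ hcomm hy)

theorem HasGramSum.exists_mem_mul_eq {ι : Type*} {x : ι → H →L[ℂ] H} {a : H →L[ℂ] H}
    (hx : HasGramSum x (adjoint a * a)) (hM : ∀ i, x i ∈ M) (ha : a ∈ M) :
    ∃ v : ι → H →L[ℂ] H, (∀ i, v i ∈ M) ∧ ∀ i, v i * a = x i := by
  choose v hv hva using fun i => exists_mem_mul_eq_of_norm_apply_le (C := 1) ha (hM i) fun ξ => by
    simpa only [one_mul] using hx.norm_apply_le i ξ
  exact ⟨v, hv, hva⟩

end VonNeumannAlgebra

section KadisonPedersen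

variable {M : VonNeumannAlgebra H} {h k l : H →L[ℂ] H}

theorem kpEquiv_iff_exists_hasGramSum :
    KPEquiv M h k ↔ ∃ (ι : Type u) (x : ι → H →L[ℂ] H), (∀ i, x i ∈ M) ∧
      HasGramSum x h ∧ HasGramSum (fun i => adjoint (x i)) k := by
  simp only [KPEquiv, HasGramSum, adjoint_adjoint, mul_def]

namespace KPEquiv

protected theorem refl (hM : h ∈ M) (hp : h.IsPositive) : KPEquiv M h h := by
  have hsa : adjoint (CFC.sqrt h) = CFC.sqrt h := (CFC.sqrt_nonneg h).isSelfAdjoint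
  have hsq : CFC.sqrt h * CFC.sqrt h = h :=
    CFC.sqrt_mul_sqrt_self h ((nonneg_iff_isPositive h).2 hp)
  have hsum (ξ : H) : HasSum (fun _ : PUnit.{u + 1} => h ξ) (h ξ) := hasSum_unique _
  refine ⟨PUnit, fun _ => CFC.sqrt h, fun _ => sqrt_mem hM, ?_, ?_⟩ <;>
    simpa only [hsa, hsq] using hsum

protected theorem symm (hhk : KPEquiv M h k) : KPEquiv M k h := by
  obtain ⟨ι, x, hM, hh, hk⟩ := hhk
  exact ⟨ι, fun i => adjoint (x i), fun i => adjoint_mem (hM i), by simpa only [adjoint_adjoint],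
    by simpa only [adjoint_adjoint]⟩

protected theorem trans (hhk : KPEquiv M h k) (hkl : KPEquiv M k l) : KPEquiv M h l := by
  obtain ⟨ι, x, hxM, hxh, hxk⟩ := kpEquiv_iff_exists_hasGramSum.1 hhk
  obtain ⟨κ, y, hyM, hyk, hyl⟩ := kpEquiv_iff_exists_hasGramSum.1 hkl
  set a := CFC.sqrt k
  have haM : a ∈ M := sqrt_mem (hyk.mem hyM)
  have hsa : adjoint a = a := (CFC.sqrt_nonneg k).isSelfAdjoint
  have hk : k = adjoint a * a := by
    rw [hsa, CFC.sqrt_mul_sqrt_self k ((nonneg_iff_isPositive k).2 hyk.isPositive)]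
  rw [hk] at hxk hyk
  obtain ⟨v, -, hv⟩ := hyk.exists_mem_mul_eq hyM haM
  obtain ⟨w, hwM, hw⟩ := hxk.exists_mem_mul_eq (fun i => adjoint_mem (hxM i)) haM
  have adjoint_mul (b c : H →L[ℂ] H) : adjoint (b * c) = adjoint c * adjoint b := adjoint_comp b c
  have hav (j : κ) : a * adjoint (v j) = adjoint (y j) := by rw [← hv, adjoint_mul, hsa]
  have haw (i : ι) : a * adjoint (w i) = x i := by
    rw [← adjoint_adjoint (x i), ← hw, adjoint_mul, hsa]
  have hadj (p : ι × κ) :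
      adjoint (y p.2 * adjoint (w p.1)) = adjoint (x p.1) * adjoint (v p.2) := by
    rw [adjoint_mul, adjoint_adjoint, ← hav, ← mul_assoc, hw]
  refine kpEquiv_iff_exists_hasGramSum.2 ⟨ι × κ, fun p => y p.2 * adjoint (w p.1),
    fun p => mul_mem (hyM p.2) (adjoint_mem (hwM p.1)), ?_, ?_⟩
  · refine hyk.prod (b := fun i => adjoint (w i)) ?_
    simpa only [← mul_def, haw] using hxh
  · simp only [hadj]
    refine (hxk.prod (b := fun j => adjoint (v j)) ?_).comp_equiv (Equiv.prodComm ι κ)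
    simpa only [← mul_def, hav] using hyl

protected theorem smul {c : ℝ} (hc : 0 ≤ c) (hhk : KPEquiv M h k) :
    KPEquiv M ((c : ℂ) • h) ((c : ℂ) • k) := by
  obtain ⟨ι, x, hM, hh, hk⟩ := kpEquiv_iff_exists_hasGramSum.1 hhk
  have hconj : starRingEnd ℂ (√c : ℝ) = (√c : ℝ) := Complex.conj_ofReal _
  have hmul : starRingEnd ℂ (√c : ℝ) * (√c : ℝ) = (c : ℂ) := by
    rw [hconj, ← Complex.ofReal_mul, Real.mul_self_sqrt hc]
  refine kpEquiv_iff_exists_hasGramSum.2 ⟨ι, fun i => ((√c : ℝ) : ℂ) • x i, fun i =>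
    M.toStarSubalgebra.smul_mem (hM i) _, ?_, ?_⟩
  · simpa only [hmul] using hh.smul (√c : ℝ)
  · have hk' := hk.smul (√c : ℝ)
    rw [hmul] at hk'
    simpa only [map_smulₛₗ, hconj] using hk'

theorem of_hasSum {ι : Type u} {hf kf : ι → H →L[ℂ] H} (hE : ∀ i, KPEquiv M (hf i) (kf i))
    (hh : ∀ ξ, HasSum (fun i => hf i ξ) (h ξ)) (hk : ∀ ξ, HasSum (fun i => kf i ξ) (k ξ)) :
    KPEquiv M h k := by
  simp only [kpEquiv_iff_exists_hasGramSum] at hE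
  choose κ x hM hxh hxk using hE
  exact kpEquiv_iff_exists_hasGramSum.2 ⟨Σ i, κ i, fun p => x p.1 p.2, fun p => hM p.1 p.2,
    .sigma hxh hh, .sigma (y := fun i j => adjoint (x i j)) hxk hk⟩

end KPEquiv

end KadisonPedersen

/-- The Kadison–Pedersen relation `≈` on `M₊` is an equivalence relation,
is homogeneous (`h ≈ k` implies `λh ≈ λk` for `λ > 0`), and is completely additive. -/
theorem kpEquiv_equivalence (M : VonNeumannAlgebra H) :
    (∀ h, h ∈ M → h.IsPositive → KPEquiv M h h) ∧
    (∀ h k, h ∈ M → k ∈ M → h.IsPositive → k.IsPositive →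
      KPEquiv M h k → KPEquiv M k h) ∧
    (∀ h k l, h ∈ M → k ∈ M → l ∈ M → h.IsPositive → k.IsPositive → l.IsPositive →
      KPEquiv M h k → KPEquiv M k l → KPEquiv M h l) ∧
    (∀ h k (c : ℝ), 0 < c → h ∈ M → k ∈ M → h.IsPositive → k.IsPositive →
      KPEquiv M h k → KPEquiv M ((c : ℂ) • h) ((c : ℂ) • k)) ∧
    (∀ (ι : Type u) (hf kf : ι → H →L[ℂ] H) (hh kk : H →L[ℂ] H),
      (∀ i, hf i ∈ M ∧ (hf i).IsPositive ∧ kf i ∈ M ∧ (kf i).IsPositive) →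
      (∀ i, KPEquiv M (hf i) (kf i)) → hh ∈ M → kk ∈ M →
      (∀ ξ : H, HasSum (fun i => hf i ξ) (hh ξ)) →
      (∀ ξ : H, HasSum (fun i => kf i ξ) (kk ξ)) →
      KPEquiv M hh kk) := by
  exact ⟨fun _ hM hp => .refl hM hp,
    fun _ _ _ _ _ _ hhk => hhk.symm,
    fun _ _ _ _ _ _ _ _ _ hhk hkl => hhk.trans hkl,
    fun _ _ _ hc _ _ _ _ hhk => hhk.smul hc.le,
    fun _ _ _ _ _ _ hE _ _ hh hk => .of_hasSum hE hh hk⟩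
end
end
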